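/- arXiv:math/0702156 — 2 statements merged into one kernel-verified Lean document; each statement's English description precedes it below -/
import Mathlib

section
/- Let p ≥ 7 be an odd integer and let n ≥ 0 be an integer. Then there exists a function u : ℝ → ℝ that is real-analytic on a neighborhood of the interval [0,1], satisfies the self-similar profile equation (1−ρ²)u''(ρ) + (2/ρ − (2+2α)ρ)u'(ρ) − α(α+1)u(ρ) + u(ρ)^p = 0 for all ρ ∈ (0,1), satisfies u'(0) = 0, and is such that the set { ρ ∈ (0,1) : u(ρ) = b∞ ρ^{−α} } has exactly n+1 elements. -/
open Set Real Filter

/-- The exponent `α = 2/(p-1)`. -/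
noncomputable def alphaP (p : ℕ) : ℝ := 2 / ((p : ℝ) - 1)

/-- `b₀ = (2(p+1)/(p-1)²)^(1/(p-1))`, the constant solution. -/
noncomputable def bZero (p : ℕ) : ℝ :=
  (2 * ((p : ℝ) + 1) / ((p : ℝ) - 1) ^ 2) ^ ((1 : ℝ) / ((p : ℝ) - 1))

/-- `b∞ = (2(p-3)/(p-1)²)^(1/(p-1))`. -/
noncomputable def bInfty (p : ℕ) : ℝ :=
  (2 * ((p : ℝ) - 3) / ((p : ℝ) - 1) ^ 2) ^ ((1 : ℝ) / ((p : ℝ) - 1))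

/-- The singular static solution `u∞(ρ) = b∞ ρ^(-α)`. -/
noncomputable def uInfty (p : ℕ) (ρ : ℝ) : ℝ := bInfty p * ρ ^ (-(alphaP p))

/-- The self-similar profile equation
`(1-ρ²)u'' + (2/ρ - (2+2α)ρ)u' - α(α+1)u + u^p = 0` at the point `ρ`. -/
def ProfileEq (p : ℕ) (u : ℝ → ℝ) (ρ : ℝ) : Prop :=
  (1 - ρ ^ 2) * deriv (deriv u) ρ + (2 / ρ - (2 + 2 * alphaP p) * ρ) * deriv u ρ
    - alphaP p * (alphaP p + 1) * u ρ + u ρ ^ p = 0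

/-!
Shooting from the centre, with the Prüfer angle as counter. Write `p = 2m + 1`, so `α = 1/m`, and
introduce `s` by `1 - ρ² = (1 - s) ^ m`. For each centre value `c` the profile equation has a
unique solution regular at `ρ = 0`; an energy bound keeps it in `[-c, c]`, and it and its flux
`X = (1 - ρ²) ^ α du/d(ρ²)` are continuous up to `s = 1` and depend continuously on `c`. The
solution is regular at `ρ = 1` exactly when `X = 0` there.

In the Emden variables `w = ρ ^ α u`, `t = log ρ`, the singular solution is the constant `b∞`, and
the angle `θ` of the nonvanishing vector `(w - b∞, (1 - s) ρ w')` crosses each zero of `w - b∞` in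
the same direction. Hence `θ` at `ρ = 1` controls the number of intersections, and `X = 0` there
means that `θ` takes one of a discrete set of values. For `c = b₀` the solution is constant and `w`
is monotone. For large `c`, an energy that strictly decreases because `p > 5` keeps `w` away from
`0` from a radius of order `c ^ (-1/α)` up to `ρ = 1`; there `w - b∞` solves an oscillator equation
whose damping is too weak to prevent a zero in every `t`-interval of a fixed length. So the number
of intersections is unbounded in `c`, and by the intermediate value theorem `θ` takes the value
corresponding to exactly `n + 1` intersections.

Analyticity at the singular points follows from the analytic implicit function theorem, applied to
the equation rewritten with bounded averaging operators.
-/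

open MeasureTheory Topology Polynomial
open scoped ContDiff unitInterval

namespace SelfSimilar

/-! ### Analyticity at a regular singular point -/

section Analyticity

theorem exists_analyticAt_eq_of_implicit {E : Type*} [NormedAddCommGroup E] [NormedSpace ℝ E]
    [CompleteSpace E] {Φ : ℝ × E → E} {s : Set ℝ} (hs : 0 ∈ s) {Y : ℝ → E}
    (hΦ : ContDiffAt ℝ ω Φ (0, Y 0)) {D : E ≃L[ℝ] E}
    (hD : HasFDerivAt (fun y => Φ (0, y)) (D : E →L[ℝ] E) (Y 0))
    (hY : ContinuousWithinAt Y s 0) (hΦY : ∀ x ∈ s, Φ (x, Y x) = 0) :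
    ∃ Z : ℝ → E, AnalyticAt ℝ Z 0 ∧ Y =ᶠ[𝓝[s] 0] Z := by
  have hω : (ω : WithTop ℕ∞) ≠ 0 := by simp
  have hpartial : HasFDerivAt (fun y => Φ (0, y)) (fderiv ℝ Φ (0, Y 0) ∘L .inr ℝ ℝ E) (Y 0) :=
    (hΦ.differentiableAt hω).hasFDerivAt.comp (Y 0) (ContinuousLinearMap.inr ℝ ℝ E).hasFDerivAt
  have hinv : (fderiv ℝ Φ (0, Y 0) ∘L .inr ℝ ℝ E).IsInvertible := ⟨D, hD.unique hpartial⟩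
  refine ⟨hΦ.implicitFunction hω hinv, (hΦ.contDiffAt_implicitFunction hω hinv).analyticAt, ?_⟩
  have hgraph : Tendsto (fun x => (x, Y x)) (𝓝[s] 0) (𝓝 (0, Y 0)) := by
    rw [nhds_prod_eq]
    exact (tendsto_id.mono_right nhdsWithin_le_nhds).prodMk hY
  filter_upwards [hgraph.eventually (hΦ.eventually_apply_eq_iff_implicitFunction hω hinv),
    self_mem_nhdsWithin] with x hx hxs
  exact (hx.1 (by rw [hΦY x hxs, hΦY 0 hs])).symm

theorem contDiff_aeval_comp {E F : Type*} [NormedCommRing E] [NormedAlgebra ℝ E]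
    [NormedAddCommGroup F] [NormedSpace ℝ F] (g : ℝ[X]) {f : F → E} (hf : ContDiff ℝ ω f) :
    ContDiff ℝ ω fun z => aeval (f z) g :=
  (analyticOnNhd_id.aeval_polynomial g : AnalyticOnNhd ℝ (aeval · g) univ).contDiff.comp hf

-- At `x = 0` the linearisation `(dU, dQ) ↦ (dU, S(0) dQ - K (g'(U 0) dU))` is triangular.
theorem exists_analyticAt_eq_of_semilinear {E : Type*} [NormedCommRing E] [NormedAlgebra ℝ E]
    [CompleteSpace E] (J K L : E →L[ℝ] E) (e U₀ C : E) (S g h r : ℝ[X]) (hS : S.eval 0 ≠ 0)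
    {s : Set ℝ} (hs : 0 ∈ s) {U Q : ℝ → E} (hU : Continuous U) (hQ : Continuous Q)
    (hUeq : ∀ x ∈ s, U x = U₀ + x • (e * J (Q x)))
    (hQeq : ∀ x ∈ s, aeval (x • e) S * Q x =
      C + K (aeval (U x) g) + x • (e * L (aeval (U x) h + aeval (x • e) r * Q x))) :
    ∃ Z : ℝ → E, AnalyticAt ℝ Z 0 ∧ U =ᶠ[𝓝[s] 0] Z := by
  let Φ : ℝ × E × E → E × E := fun z =>
    (z.2.1 - (U₀ + z.1 • (e * J z.2.2)),
     aeval (z.1 • e) S * z.2.2 - (C + K (aeval z.2.1 g) +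
      z.1 • (e * L (aeval z.2.1 h + aeval (z.1 • e) r * z.2.2))))
  have hΦ : ContDiff ℝ ω Φ := by
    have hg := contDiff_aeval_comp g (f := fun z : ℝ × E × E => z.2.1) (by fun_prop)
    have hh := contDiff_aeval_comp h (f := fun z : ℝ × E × E => z.2.1) (by fun_prop)
    have hS := contDiff_aeval_comp S (f := fun z : ℝ × E × E => z.1 • e) (by fun_prop)
    have hr := contDiff_aeval_comp r (f := fun z : ℝ × E × E => z.1 • e) (by fun_prop)
    fun_prop
  let K' : E →L[ℝ] E := -(K ∘L fderiv ℝ (fun U : E => aeval U g) (U 0))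
  let D : (E × E) ≃L[ℝ] (E × E) := (ContinuousLinearEquiv.refl ℝ E).skewProd
    (ContinuousLinearEquiv.smulLeft (Units.mk0 (S.eval 0) hS)) K'
  have hD : HasFDerivAt (fun y => Φ (0, y)) (D : E × E →L[ℝ] E × E) (U 0, Q 0) := by
    have hΦ₀ : (fun y => Φ (0, y)) =
        fun y : E × E => (y.1 - U₀, S.eval 0 • y.2 - (C + K (aeval y.1 g))) := by
      ext y <;> simp [Φ, ← coeff_zero_eq_eval_zero, ← coeff_zero_eq_aeval_zero', Algebra.smul_def]
    have hg : HasFDerivAt (fun y : E × E => aeval y.1 g) _ (U 0, Q 0) :=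
      ((contDiff_aeval_comp g contDiff_id).differentiable (by simp) (U 0)).hasFDerivAt.comp
        (f := Prod.fst) (U 0, Q 0) hasFDerivAt_fst
    rw [hΦ₀]
    refine ((hasFDerivAt_fst.sub_const U₀).prodMk ((hasFDerivAt_snd.const_smul (S.eval 0)).sub
      ((K.hasFDerivAt.comp _ hg).const_add C))).congr_fderiv ?_
    ext z <;> simp [D, K', sub_eq_add_neg]
  have hΦY : ∀ x ∈ s, Φ (x, U x, Q x) = 0 := fun x hx =>
    Prod.ext (sub_eq_zero.2 (hUeq x hx)) (sub_eq_zero.2 (hQeq x hx))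
  obtain ⟨Z, hZ, hYZ⟩ := exists_analyticAt_eq_of_implicit (Y := fun x => (U x, Q x)) hs
    hΦ.contDiffAt hD (hU.prodMk hQ).continuousWithinAt hΦY
  exact ⟨fun x => (Z x).1, (ContinuousLinearMap.fst ℝ E E).analyticAt _ |>.comp hZ,
    hYZ.fun_comp Prod.fst⟩

/-- The weighted average `∫₀¹ r^(a-1) f(xr) dr`. Conjugating by it removes the derivative from
`x f' + a f`, which is how the singular points of the profile equation are handled. -/
noncomputable def hardyMean (a : ℝ) (f : ℝ → ℝ) (x : ℝ) : ℝ :=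
  ∫ r in (0 : ℝ)..1, r ^ (a - 1) * f (x * r)

theorem intervalIntegrable_hardyMean {a : ℝ} (ha : 0 < a) {f : ℝ → ℝ} (hf : Continuous f) (x : ℝ) :
    IntervalIntegrable (fun r : ℝ => r ^ (a - 1) * f (x * r)) volume 0 1 :=
  (intervalIntegral.intervalIntegrable_rpow' (by linarith)).mul_continuousOn (by fun_prop)

theorem norm_rpow_mul_le {a r y C : ℝ} (hr : 0 ≤ r) (hy : ‖y‖ ≤ C) :
    ‖r ^ (a - 1) * y‖ ≤ r ^ (a - 1) * C := by
  rw [norm_mul, norm_of_nonneg (rpow_nonneg hr _)]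
  gcongr

theorem continuous_hardyMean {a : ℝ} (ha : 0 < a) {f : ℝ → ℝ} (hf : Continuous f) {C : ℝ}
    (hC : ∀ x, ‖f x‖ ≤ C) : Continuous (hardyMean a f) := by
  refine intervalIntegral.continuous_of_dominated_interval (bound := fun r => r ^ (a - 1) * C)
    (fun x => (intervalIntegrable_hardyMean ha hf x).aestronglyMeasurable_restrict_uIoc)
    (fun x => .of_forall fun r hr => ?_)
    ((intervalIntegral.intervalIntegrable_rpow' (by linarith)).mul_const _)
    (.of_forall fun r _ => by fun_prop)
  rw [uIoc_of_le zero_le_one] at hr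
  exact norm_rpow_mul_le hr.1.le (hC _)

theorem norm_hardyMean_le {a : ℝ} (ha : 0 < a) {f : ℝ → ℝ} {C x : ℝ}
    (hC : ∀ r ∈ Icc (0 : ℝ) 1, ‖f (x * r)‖ ≤ C) : ‖hardyMean a f x‖ ≤ a⁻¹ * C := by
  have hint : ∫ r in (0 : ℝ)..1, r ^ (a - 1) * C = a⁻¹ * C := by
    rw [intervalIntegral.integral_mul_const, integral_rpow (by left; linarith)]
    simp [ha.ne']
  rw [← hint]
  exact intervalIntegral.norm_integral_le_of_norm_le zero_le_one
    (.of_forall fun r hr => norm_rpow_mul_le hr.1.le (hC _ ⟨hr.1.le, hr.2⟩))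
    ((intervalIntegral.intervalIntegrable_rpow' (by linarith)).mul_const _)

theorem norm_IccExtend_le (f : C(I, ℝ)) (x : ℝ) :
    ‖IccExtend (zero_le_one (α := ℝ)) f x‖ ≤ ‖f‖ :=
  f.norm_coe_le_norm _

/-- `hardyMean a` as a bounded operator on `C([0,1])`. -/
noncomputable def hardyCLM (a : ℝ) (ha : 0 < a) : C(I, ℝ) →L[ℝ] C(I, ℝ) :=
  LinearMap.mkContinuous
    { toFun := fun f => ⟨fun t => hardyMean a (IccExtend zero_le_one f) t,
        (continuous_hardyMean ha f.continuous.Icc_extend' (norm_IccExtend_le f)).comp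
          continuous_subtype_val⟩
      map_add' := fun f g => by
        ext t
        simp only [hardyMean, ContinuousMap.coe_mk, ContinuousMap.add_apply]
        rw [← intervalIntegral.integral_add
          (intervalIntegrable_hardyMean ha f.continuous.Icc_extend' t)
          (intervalIntegrable_hardyMean ha g.continuous.Icc_extend' t)]
        simp [IccExtend, mul_add]
      map_smul' := fun k f => by
        ext t
        simp [hardyMean, IccExtend, mul_left_comm _ k] }
    a⁻¹ fun f => (ContinuousMap.norm_le _ (by positivity)).2 fun t =>
      norm_hardyMean_le ha fun _ _ => norm_IccExtend_le f _

/-- The curve `x ↦ (t ↦ f(xt))` of rescalings of `f`, in `C([0,1])`. -/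
def dilations (f : C(ℝ, ℝ)) : C(ℝ, C(I, ℝ)) :=
  (f.comp ⟨fun z : ℝ × I => z.1 * z.2, by fun_prop⟩).curry

theorem hardyCLM_apply_of_eq {a : ℝ} (ha : 0 < a) {F : C(I, ℝ)} {f : ℝ → ℝ} {x : ℝ}
    (hF : ∀ t : I, F t = f (x * t)) (t : I) : hardyCLM a ha F t = hardyMean a f (x * t) := by
  refine intervalIntegral.integral_congr fun r hr => ?_
  rw [uIcc_of_le zero_le_one] at hr
  have hmem : (t : ℝ) * r ∈ Icc (0 : ℝ) 1 :=
    ⟨mul_nonneg t.2.1 hr.1, mul_le_one₀ t.2.2 hr.1 hr.2⟩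
  simp only [IccExtend_of_mem _ _ hmem, hF, mul_assoc]

theorem exists_analyticAt_eq_of_hardyMean_equation {a b c : ℝ} (ha : 0 < a) (hb : 0 < b)
    (S g h r : ℝ[X]) (hS : S.eval 0 ≠ 0) {s : Set ℝ} (hs : StarConvex ℝ 0 s) (hs0 : 0 ∈ s)
    {u q : ℝ → ℝ} (hu : Continuous u) (hq : Continuous q)
    (hueq : ∀ x ∈ s, u x = u 0 + x * hardyMean 1 q x)
    (hqeq : ∀ x ∈ s, S.eval x * q x = c + hardyMean a (fun y => g.eval (u y)) x +
      x * hardyMean b (fun y => h.eval (u y) + r.eval y * q y) x) :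
    ∃ f : ℝ → ℝ, AnalyticAt ℝ f 0 ∧ u =ᶠ[𝓝[s] 0] f := by
  have hmem : ∀ x ∈ s, ∀ t : I, x * t ∈ s := fun x hx t => by
    simpa [mul_comm] using hs.smul_mem hx t.2.1 t.2.2
  let e : C(I, ℝ) := ⟨fun t => t, continuous_subtype_val⟩
  obtain ⟨Z, hZ, hUZ⟩ := exists_analyticAt_eq_of_semilinear (hardyCLM 1 one_pos) (hardyCLM a ha)
    (hardyCLM b hb) e (.const I (u 0)) (.const I c) S g h r hS hs0
    (dilations ⟨u, hu⟩).continuous (dilations ⟨q, hq⟩).continuous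
    (fun x hx => by
      ext t
      have hH := hardyCLM_apply_of_eq one_pos (F := dilations ⟨q, hq⟩ x) (fun _ => rfl) t
      simp only [ContinuousMap.add_apply, ContinuousMap.mul_apply, ContinuousMap.smul_apply, hH]
      simpa [dilations, e, mul_assoc] using hueq _ (hmem x hx t))
    (fun x hx => by
      ext t
      have hHg := hardyCLM_apply_of_eq ha (F := aeval (dilations ⟨u, hu⟩ x) g) (x := x)
        (f := fun y => g.eval (u y)) (by simp [dilations, aeval_continuousMap_apply]) t
      have hHr := hardyCLM_apply_of_eq hb (x := x)
        (F := aeval (dilations ⟨u, hu⟩ x) h + aeval (x • e) r * dilations ⟨q, hq⟩ x)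
        (f := fun y => h.eval (u y) + r.eval y * q y)
        (by simp [dilations, aeval_continuousMap_apply, e]) t
      simp only [ContinuousMap.add_apply, ContinuousMap.mul_apply, ContinuousMap.smul_apply, hHg,
        hHr, aeval_continuousMap_apply]
      simpa [dilations, e, mul_assoc] using hqeq _ (hmem x hx t))
  let ev : C(I, ℝ) →L[ℝ] ℝ := ContinuousMap.evalCLM ℝ (1 : I)
  refine ⟨fun x => ev (Z x), (ev.analyticAt _).comp hZ, ?_⟩
  filter_upwards [hUZ] with x hx
  simp [← hx, ev, dilations]

theorem eq_add_mul_hardyMean_one {u q : ℝ → ℝ} {x : ℝ} (hu : Continuous u) (hq : Continuous q)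
    (hderiv : ∀ r ∈ Ioo (0 : ℝ) 1, HasDerivAt u (q (x * r)) (x * r)) :
    u x = u 0 + x * hardyMean 1 q x := by
  have hftc : ∫ r in (0 : ℝ)..1, x * q (x * r) = u (x * 1) - u (x * 0) := by
    refine intervalIntegral.integral_eq_sub_of_hasDerivAt_of_le zero_le_one
      (f := fun r => u (x * r)) (by fun_prop) (fun r hr => ?_)
      (Continuous.intervalIntegrable (by fun_prop) _ _)
    simpa [Function.comp_def, mul_comm] using
      (hderiv r hr).comp r ((hasDerivAt_id r).const_mul x)
  simp only [intervalIntegral.integral_const_mul, mul_one, mul_zero] at hftc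
  simp [hardyMean, hftc]

theorem hardyMean_zero_right {a : ℝ} (ha : 0 < a) (f : ℝ → ℝ) : hardyMean a f 0 = f 0 / a := by
  simp only [hardyMean, zero_mul]
  rw [intervalIntegral.integral_mul_const, integral_rpow (by left; linarith)]
  simp [ha.ne', div_eq_inv_mul]

theorem hardyMean_id_mul {a : ℝ} (ha : 0 < a) (f : ℝ → ℝ) (x : ℝ) :
    hardyMean a (fun y => y * f y) x = x * hardyMean (a + 1) f x := by
  rw [hardyMean, hardyMean, ← intervalIntegral.integral_const_mul]
  refine intervalIntegral.integral_congr fun r hr => ?_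
  rw [uIcc_of_le zero_le_one] at hr
  have hpow : r ^ (a + 1 - 1) = r ^ (a - 1) * r := by
    rw [← rpow_add_one' hr.1 (by simpa using ha.ne')]
    ring_nf
  simp only [hpow]
  ring

theorem hardyMean_add {a : ℝ} (ha : 0 < a) {f g : ℝ → ℝ} (hf : Continuous f) (hg : Continuous g)
    (x : ℝ) : hardyMean a (fun y => f y + g y) x = hardyMean a f x + hardyMean a g x := by
  simp only [hardyMean, mul_add]
  exact intervalIntegral.integral_add (intervalIntegrable_hardyMean ha hf x)
    (intervalIntegrable_hardyMean ha hg x)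

-- The hypothesis says that `(y ^ a * G y)' = y ^ (a - 1) * f y`.
theorem hardyMean_eq_of_hasDerivAt {a x : ℝ} (ha : 0 < a) (hx : 0 < x) {f G : ℝ → ℝ}
    (hf : Continuous f) (hG : Continuous G)
    (hderiv : ∀ y ∈ Ioo 0 x, ∃ d, HasDerivAt G d y ∧ y * d + a * G y = f y) :
    hardyMean a f x = G x := by
  have hftc : hardyMean a f x = 1 ^ a * G (x * 1) - 0 ^ a * G (x * 0) := by
    refine intervalIntegral.integral_eq_sub_of_hasDerivAt_of_le zero_le_one
      (f := fun r => r ^ a * G (x * r)) ?_ (fun r hr => ?_) (intervalIntegrable_hardyMean ha hf x)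
    · have : Continuous fun r : ℝ => r ^ a := continuous_id.rpow_const fun _ => .inr ha.le
      fun_prop
    · obtain ⟨d, hd, hde⟩ := hderiv (x * r) ⟨by nlinarith [hr.1], by nlinarith [hr.2]⟩
      have hpow : r ^ a = r ^ (a - 1) * r := by
        rw [← rpow_add_one hr.1.ne']
        ring_nf
      have hcomp := hd.comp r ((hasDerivAt_id r).const_mul x)
      refine ((hasDerivAt_rpow_const (Or.inl hr.1.ne')).mul hcomp).congr_deriv ?_
      simp only [Function.comp, hpow]
      linear_combination r ^ (a - 1) * hde
  simpa [zero_rpow ha.ne'] using hftc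

theorem exists_analyticAt_eq_of_singular_ode {a ε : ℝ} (ha : 0 < a) (hε : 0 < ε) (S R g : ℝ[X])
    (hS : S.eval 0 ≠ 0) {u q : ℝ → ℝ} (hu : Continuous u) (hq : Continuous q)
    (hu' : ∀ x ∈ Ioo 0 ε, HasDerivAt u (q x) x)
    (hq' : ∀ x ∈ Ioo 0 ε, ∃ d, HasDerivAt q d x ∧
      x * S.eval x * d + (a * S.eval x + x * R.eval x) * q x = g.eval (u x))
    (hq0 : a * S.eval 0 * q 0 = g.eval (u 0)) :
    ∃ f : ℝ → ℝ, AnalyticAt ℝ f 0 ∧ u =ᶠ[𝓝[Ico 0 ε] 0] f := by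
  refine exists_analyticAt_eq_of_hardyMean_equation (c := 0) ha (add_pos ha one_pos) S g 0
    (derivative S - R) hS ((convex_Ico 0 ε).starConvex ⟨le_rfl, hε⟩) ⟨le_rfl, hε⟩ hu hq ?_ ?_
  · intro x hx
    rcases hx.1.eq_or_lt with rfl | hx0
    · simp
    · exact eq_add_mul_hardyMean_one hu hq fun r hr =>
        hu' _ ⟨mul_pos hx0 hr.1, by nlinarith [hr.2, hx.2]⟩
  · intro x hx
    simp only [eval_zero, zero_add, ← hardyMean_id_mul ha]
    rcases hx.1.eq_or_lt with rfl | hx0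
    · rw [hardyMean_zero_right ha, hardyMean_zero_right ha, ← hq0]
      field_simp
      ring
    · rw [← hardyMean_add ha (by fun_prop) (by fun_prop)]
      refine (hardyMean_eq_of_hasDerivAt ha hx0 (by fun_prop)
        (G := fun y => S.eval y * q y) (by fun_prop) fun y hy => ?_).symm
      obtain ⟨d, hd, hode⟩ := hq' y ⟨hy.1, hy.2.trans hx.2⟩
      refine ⟨_, (S.hasDerivAt y).mul hd, ?_⟩
      rw [← hode, eval_sub]
      ring

theorem analyticAt_of_regular_ode {x₀ ε : ℝ} (hε : 0 < ε) (S R g : ℝ[X]) (hS : S.eval x₀ ≠ 0)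
    {u q : ℝ → ℝ} (hu : Continuous u) (hq : Continuous q)
    (hu' : ∀ x ∈ Ioo (x₀ - ε) (x₀ + ε), HasDerivAt u (q x) x)
    (hq' : ∀ x ∈ Ioo (x₀ - ε) (x₀ + ε), ∃ d, HasDerivAt q d x ∧
      S.eval x * d + R.eval x * q x = g.eval (u x)) :
    AnalyticAt ℝ u x₀ := by
  have hmem : ∀ x ∈ Ioo (-ε) ε, ∀ r ∈ Ioo (0 : ℝ) 1, x₀ + x * r ∈ Ioo (x₀ - ε) (x₀ + ε) :=
    fun x hx r hr => by constructor <;> nlinarith [hx.1, hx.2, hr.1, hr.2]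
  let T : ℝ[X] := Polynomial.C x₀ + X
  obtain ⟨f, hf, huf⟩ := exists_analyticAt_eq_of_hardyMean_equation (a := 1)
    (c := S.eval x₀ * q x₀) one_pos one_pos (S.comp T) 0 g ((derivative S - R).comp T)
    (u := fun y => u (x₀ + y)) (q := fun y => q (x₀ + y)) (by simpa [T])
    ((convex_Ioo (-ε) ε).starConvex (by simp [hε])) (by simp [hε]) (by fun_prop) (by fun_prop)
    (fun x hx => eq_add_mul_hardyMean_one (u := fun y => u (x₀ + y)) (by fun_prop) (by fun_prop)
      fun r hr => (hu' _ (hmem x hx r hr)).comp_const_add x₀ (x * r))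
    (fun x hx => by
      refine (eq_add_mul_hardyMean_one (u := fun y => (S.comp T).eval y * q (x₀ + y))
        (q := fun y => g.eval (u (x₀ + y)) + ((derivative S - R).comp T).eval y * q (x₀ + y))
        (by fun_prop) (by fun_prop) fun r hr => ?_).trans (by simp [T, hardyMean])
      obtain ⟨d, hd, hode⟩ := hq' _ (hmem x hx r hr)
      refine (((S.comp T).hasDerivAt (x * r)).mul (hd.comp_const_add x₀ (x * r))).congr_deriv ?_
      simp only [T, derivative_comp, eval_mul, eval_comp, eval_add, eval_C, eval_X,
        derivative_add, derivative_C, derivative_X, eval_zero, eval_one, eval_sub, ← hode]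
      ring)
  rw [nhdsWithin_eq_nhds.2 (Ioo_mem_nhds (by linarith) hε)] at huf
  have hshift : AnalyticAt ℝ (fun y => u (x₀ + y)) (x₀ - x₀) := by
    simpa using hf.congr huf.symm
  simpa [Function.comp_def] using hshift.comp (f := fun x => x - x₀) (by fun_prop)

end Analyticity

/-! ### Crossings and the Prüfer angle -/

section Crossings

variable {θ θ' : ℝ → ℝ} {a b : ℝ}

theorem le_of_upcrossing {l x y : ℝ} (hc : ContinuousOn θ (Icc a b))
    (hd : ∀ x ∈ Ioo a b, HasDerivAt θ (θ' x) x) (hpos : ∀ x ∈ Ioo a b, θ x = l → 0 < θ' x)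
    (hx : x ∈ Ioo a b) (hy : y ∈ Icc a b) (hxy : x ≤ y) (h : l ≤ θ x) : l ≤ θ y := by
  have hmem : ∀ t ∈ Ico x y, t ∈ Ioo a b := fun t ht => ⟨hx.1.trans_le ht.1, ht.2.trans_le hy.2⟩
  refine image_le_of_deriv_right_lt_deriv_boundary' (f := fun _ => l) (f' := fun _ => 0)
    continuousOn_const (fun _ _ => hasDerivWithinAt_const _ _ _) h
    (hc.mono (Icc_subset_Icc hx.1.le hy.2)) (fun t ht => (hd t (hmem t ht)).hasDerivWithinAt)
    (fun t ht hl => hpos t (hmem t ht) hl.symm) ⟨hxy, le_rfl⟩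

theorem lt_of_upcrossing {l x y : ℝ} (hc : ContinuousOn θ (Icc a b))
    (hd : ∀ x ∈ Ioo a b, HasDerivAt θ (θ' x) x) (hpos : ∀ x ∈ Ioo a b, θ x = l → 0 < θ' x)
    (hx : x ∈ Ioo a b) (hy : y ∈ Ioo a b) (hxy : x < y) (h : l ≤ θ x) : l < θ y := by
  refine (le_of_upcrossing hc hd hpos hx (Ioo_subset_Icc_self hy) hxy.le h).lt_of_ne' fun hl => ?_
  have hslope : θ' y ≤ 0 := by
    refine le_of_tendsto (hasDerivAt_iff_tendsto_slope_left_right.1 (hd y hy)).1 ?_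
    filter_upwards [Ioo_mem_nhdsLT hxy] with t ht
    have hlt : l ≤ θ t := le_of_upcrossing hc hd hpos hx
      ⟨(hx.1.trans ht.1).le, (ht.2.trans hy.2).le⟩ ht.1.le h
    rw [slope_def_field]
    exact div_nonpos_of_nonneg_of_nonpos (by linarith) (by linarith [ht.2])
  exact (hpos y hy hl).not_ge hslope

variable (hc : ContinuousOn θ (Icc a b)) (hd : ∀ x ∈ Ioo a b, HasDerivAt θ (θ' x) x)
  (hpos : ∀ x ∈ Ioo a b, sin (θ x) = 0 → 0 < θ' x)

include hc hd hpos in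
theorem injOn_zeros_sin : InjOn θ {x ∈ Ioo a b | sin (θ x) = 0} := by
  have hlt : ∀ x ∈ Ioo a b, ∀ y ∈ Ioo a b, sin (θ x) = 0 → x < y → θ x < θ y :=
    fun x hx y hy h hxy => lt_of_upcrossing hc hd
      (fun t ht hl => hpos t ht (by rw [hl, h])) hx hy hxy le_rfl
  rintro x ⟨hx, hx0⟩ y ⟨hy, hy0⟩ hxy
  rcases lt_trichotomy x y with h | h | h
  · exact absurd hxy (hlt x hx y hy hx0 h).ne
  · exact h
  · exact absurd hxy (hlt y hy x hx hy0 h).ne'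

include hc hd hpos in
theorem neg_pi_lt_of_upcrossing {x : ℝ} (ha : -π < θ a) (hx : x ∈ Ioo a b) : -π < θ x := by
  have hnear : ∀ᶠ t in 𝓝[>] a, -π < θ t := by
    rw [← nhdsWithin_Ioc_eq_nhdsGT (hx.1.trans hx.2)]
    exact ((hc a ⟨le_rfl, (hx.1.trans hx.2).le⟩).mono Ioc_subset_Icc_self).eventually
      (lt_mem_nhds ha)
  obtain ⟨t, ht, hat⟩ := (hnear.and (Ioo_mem_nhdsGT hx.1)).exists
  exact lt_of_upcrossing hc hd (fun y hy hl => hpos y hy (by simp [hl])) ⟨hat.1, hat.2.trans hx.2⟩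
    hx hat.2 ht.le

include hc hd hpos in
theorem exists_nat_mul_pi_of_sin_eq_zero {x : ℝ} (ha : -π < θ a) (hx : x ∈ Ioo a b)
    (hx0 : sin (θ x) = 0) : ∃ k : ℕ, θ x = k * π ∧ k * π ≤ θ b := by
  obtain ⟨k, hk⟩ := sin_eq_zero_iff.1 hx0
  have hk0 : 0 ≤ k := by
    have h := neg_pi_lt_of_upcrossing hc hd hpos ha hx
    rw [← hk] at h
    have : (-1 : ℝ) < k := by nlinarith [pi_pos]
    exact_mod_cast this
  lift k to ℕ using hk0
  refine ⟨k, by simpa using hk.symm, ?_⟩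
  exact le_of_upcrossing hc hd (fun y hy hl => hpos y hy (by rw [hl, sin_nat_mul_pi])) hx
    (right_mem_Icc.2 (hx.1.trans hx.2).le) hx.2.le (by simpa using hk.le)

theorem injective_nat_mul_pi : Function.Injective fun k : ℕ => (k : ℝ) * π := fun i j hij => by
  exact_mod_cast mul_right_cancel₀ pi_ne_zero hij

include hc hd hpos in
theorem encard_zeros_sin_le {N : ℕ} (ha : -π < θ a) (hb : θ b < N * π) :
    {x ∈ Ioo a b | sin (θ x) = 0}.encard ≤ N := by
  have hsub : θ '' {x ∈ Ioo a b | sin (θ x) = 0} ⊆ (fun k : ℕ => (k : ℝ) * π) '' Iio N := by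
    rintro _ ⟨x, ⟨hx, hx0⟩, rfl⟩
    obtain ⟨k, hk, hkb⟩ := exists_nat_mul_pi_of_sin_eq_zero hc hd hpos ha hx hx0
    have : (k : ℝ) < N := lt_of_mul_lt_mul_right (hkb.trans_lt hb) pi_pos.le
    exact ⟨k, by exact_mod_cast this, hk.symm⟩
  rw [← (injOn_zeros_sin hc hd hpos).encard_image]
  refine (encard_le_encard hsub).trans_eq ?_
  rw [injective_nat_mul_pi.encard_image, ← Finset.coe_Iio, encard_coe_eq_coe_finsetCard,
    Nat.card_Iio]

include hc in
theorem le_encard_zeros_sin {N : ℕ} (hab : a ≤ b) (ha : θ a < 0) (hb : N * π < θ b) :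
    (N + 1 : ℕ∞) ≤ {x ∈ Ioo a b | sin (θ x) = 0}.encard := by
  have hsub : (fun k : ℕ => (k : ℝ) * π) '' Iic N ⊆ θ '' {x ∈ Ioo a b | sin (θ x) = 0} := by
    rintro _ ⟨k, hk, rfl⟩
    have hkN : (k : ℝ) ≤ N := by exact_mod_cast hk
    obtain ⟨x, hx, hxk⟩ := intermediate_value_Ioo hab hc
      (show (k : ℝ) * π ∈ Ioo (θ a) (θ b) from ⟨ha.trans_le (by positivity), by nlinarith [pi_pos]⟩)
    exact ⟨x, ⟨hx, by rw [hxk, sin_nat_mul_pi]⟩, hxk⟩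
  calc (N + 1 : ℕ∞) = ((fun k : ℕ => (k : ℝ) * π) '' Iic N).encard := by
        rw [injective_nat_mul_pi.encard_image, ← Finset.coe_Iic, encard_coe_eq_coe_finsetCard,
          Nat.card_Iic, Nat.cast_succ]
    _ ≤ (θ '' {x ∈ Ioo a b | sin (θ x) = 0}).encard := encard_le_encard hsub
    _ ≤ _ := encard_image_le _ _

end Crossings

section Prufer

/-- The derivative of the Prüfer angle of the planar curve `(v, z)` with derivative `(v', z')`. -/
noncomputable def angularSpeed (v z v' z' : ℝ → ℝ) (s : ℝ) : ℝ :=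
  (v' s * z s - v s * z' s) / (v s ^ 2 + z s ^ 2)

/-- The Prüfer angle `ϑ` of the planar curve `(v, z)` with derivative `(v', z')`: the continuous
choice of `ϑ` with `(v, z)` proportional to `(sin ϑ, cos ϑ)` and `-π < ϑ(a) < 0`. It increases
through the multiples of `π`, its values at the zeros of `v`, whenever `0 < z v'` there. -/
noncomputable def pruferAngle (v z v' z' : ℝ → ℝ) (a s : ℝ) : ℝ :=
  -(π / 2) - arctan (z a / v a) + ∫ y in a..s, angularSpeed v z v' z' y

/-- A continuous family of planar curves `(v c, z c)` on `[a, b]` avoiding the origin, with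
derivatives `(v' c, z' c)`, each of which turns in the positive direction when it meets the line
`v = 0`. -/
structure IsPruferFamily {Γ : Type*} [TopologicalSpace Γ] (v z v' z' : Γ → ℝ → ℝ) (a b : ℝ) :
    Prop where
  continuousOn_v : ContinuousOn (fun y : Γ × ℝ => v y.1 y.2) (univ ×ˢ Icc a b)
  continuousOn_z : ContinuousOn (fun y : Γ × ℝ => z y.1 y.2) (univ ×ˢ Icc a b)
  continuousOn_v' : ContinuousOn (fun y : Γ × ℝ => v' y.1 y.2) (univ ×ˢ Icc a b)
  continuousOn_z' : ContinuousOn (fun y : Γ × ℝ => z' y.1 y.2) (univ ×ˢ Icc a b)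
  hasDerivAt_v : ∀ c, ∀ s ∈ Ioo a b, HasDerivAt (v c) (v' c s) s
  hasDerivAt_z : ∀ c, ∀ s ∈ Ioo a b, HasDerivAt (z c) (z' c s) s
  normSq_pos : ∀ c, ∀ s ∈ Icc a b, 0 < v c s ^ 2 + z c s ^ 2
  ne_zero : ∀ c, v c a ≠ 0
  crossing : ∀ c, ∀ s ∈ Ioo a b, v c s = 0 → 0 < v' c s * z c s

namespace IsPruferFamily

variable {Γ : Type*} [TopologicalSpace Γ] {v z v' z' : Γ → ℝ → ℝ} {a b : ℝ}

theorem continuousOn_angularSpeed (h : IsPruferFamily v z v' z' a b) :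
    ContinuousOn (fun y : Γ × ℝ => angularSpeed (v y.1) (z y.1) (v' y.1) (z' y.1) y.2)
      (univ ×ˢ Icc a b) :=
  ((h.continuousOn_v'.mul h.continuousOn_z).sub (h.continuousOn_v.mul h.continuousOn_z')).div
    ((h.continuousOn_v.pow 2).add (h.continuousOn_z.pow 2))
    fun y hy => (h.normSq_pos y.1 y.2 hy.2).ne'

theorem continuousOn_section {F : Γ → ℝ → ℝ}
    (hF : ContinuousOn (fun y : Γ × ℝ => F y.1 y.2) (univ ×ˢ Icc a b)) (c : Γ) :
    ContinuousOn (F c) (Icc a b) :=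
  hF.comp (f := fun s => (c, s)) (by fun_prop) fun _ hs => ⟨mem_univ _, hs⟩

theorem continuous_intervalIntegral {F : Γ → ℝ → ℝ} (hab : a ≤ b)
    (hF : ContinuousOn (fun y : Γ × ℝ => F y.1 y.2) (univ ×ˢ Icc a b)) :
    Continuous fun c => ∫ s in a..b, F c s := by
  have hproj : Continuous fun y : Γ × ℝ => F y.1 (projIcc a b hab y.2) :=
    hF.comp_continuous (f := fun y : Γ × ℝ => (y.1, (projIcc a b hab y.2 : ℝ))) (by fun_prop)
      fun y => ⟨mem_univ _, (projIcc a b hab y.2).2⟩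
  refine (intervalIntegral.continuous_parametric_intervalIntegral_of_continuous' (μ := volume)
    (f := fun c s => F c (projIcc a b hab s)) hproj a b).congr
      fun c => intervalIntegral.integral_congr fun s hs => ?_
  rw [uIcc_of_le hab] at hs
  simp only [projIcc_of_mem hab hs]

theorem continuousOn_pruferAngle (h : IsPruferFamily v z v' z' a b) (hab : a ≤ b) (c : Γ) :
    ContinuousOn (pruferAngle (v c) (z c) (v' c) (z' c) a) (Icc a b) := by
  refine continuousOn_const.add ?_
  rw [← uIcc_of_le hab]
  refine intervalIntegral.continuousOn_primitive_interval ?_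
  rw [uIcc_of_le hab]
  exact (continuousOn_section
    (F := fun c => angularSpeed (v c) (z c) (v' c) (z' c))
    h.continuousOn_angularSpeed c).integrableOn_Icc

theorem hasDerivAt_pruferAngle (h : IsPruferFamily v z v' z' a b) (c : Γ) {s : ℝ}
    (hs : s ∈ Ioo a b) :
    HasDerivAt (pruferAngle (v c) (z c) (v' c) (z' c) a)
      (angularSpeed (v c) (z c) (v' c) (z' c) s) s := by
  have hcont := continuousOn_section
    (F := fun c => angularSpeed (v c) (z c) (v' c) (z' c)) h.continuousOn_angularSpeed c
  refine (intervalIntegral.integral_hasDerivAt_right ?_ ?_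
    (hcont.continuousAt (Icc_mem_nhds hs.1 hs.2))).const_add _
  · exact (hcont.mono (Icc_subset_Icc_right hs.2.le)).intervalIntegrable_of_Icc hs.1.le
  · exact (hcont.mono Ioo_subset_Icc_self).stronglyMeasurableAtFilter isOpen_Ioo s hs

theorem pruferAngle_left_mem (v z v' z' : ℝ → ℝ) (a : ℝ) :
    pruferAngle v z v' z' a a ∈ Ioo (-π) 0 := by
  simp only [pruferAngle, intervalIntegral.integral_same, add_zero]
  constructor
  · linarith [arctan_lt_pi_div_two (z a / v a)]
  · linarith [neg_pi_div_two_lt_arctan (z a / v a)]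

theorem mul_cos_pruferAngle_left (v z v' z' : ℝ → ℝ) (a : ℝ) (hv : v a ≠ 0) :
    v a * cos (pruferAngle v z v' z' a a) = z a * sin (pruferAngle v z v' z' a a) := by
  have hshift : pruferAngle v z v' z' a a = -(arctan (z a / v a) + π / 2) := by
    simp only [pruferAngle, intervalIntegral.integral_same]
    ring
  rw [hshift, cos_neg, sin_neg, cos_add_pi_div_two, sin_add_pi_div_two, sin_arctan, cos_arctan]
  field_simp

theorem eq_left_of_hasDerivAt_zero {f : ℝ → ℝ} {s : ℝ} (hf : ContinuousOn f (Icc a b))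
    (hf' : ∀ y ∈ Ioo a b, HasDerivAt f 0 y) (hs : s ∈ Icc a b) : f s = f a := by
  rcases hs.1.eq_or_lt with rfl | has
  · rfl
  obtain ⟨_, _, hslope⟩ := exists_hasDerivAt_eq_slope f (fun _ => 0) has
    (hf.mono (Icc_subset_Icc_right hs.2)) fun y hy => hf' y ⟨hy.1, hy.2.trans_le hs.2⟩
  rw [eq_comm, div_eq_zero_iff, or_iff_left (sub_pos.2 has).ne', sub_eq_zero] at hslope
  exact hslope

-- The squared sine of the angle between `(v, z)` and `(sin ϑ, cos ϑ)` is constant.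
theorem mul_cos_pruferAngle (h : IsPruferFamily v z v' z' a b) (c : Γ) {s : ℝ}
    (hs : s ∈ Icc a b) :
    v c s * cos (pruferAngle (v c) (z c) (v' c) (z' c) a s) =
      z c s * sin (pruferAngle (v c) (z c) (v' c) (z' c) a s) := by
  have hab : a ≤ b := hs.1.trans hs.2
  set ϑ := pruferAngle (v c) (z c) (v' c) (z' c) a with hϑ
  let defect : ℝ → ℝ := fun y =>
    (v c y * cos (ϑ y) - z c y * sin (ϑ y)) ^ 2 / (v c y ^ 2 + z c y ^ 2)
  have hϑc : ContinuousOn ϑ (Icc a b) := h.continuousOn_pruferAngle hab c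
  have hv := continuousOn_section h.continuousOn_v c
  have hz := continuousOn_section h.continuousOn_z c
  have hcont : ContinuousOn defect (Icc a b) :=
    ContinuousOn.div (by fun_prop) (by fun_prop) fun y hy => (h.normSq_pos c y hy).ne'
  have hderiv : ∀ y ∈ Ioo a b, HasDerivAt defect 0 y := fun y hy => by
    have hϑ' := h.hasDerivAt_pruferAngle c hy
    have hr := h.normSq_pos c y (Ioo_subset_Icc_self hy)
    have hdv := h.hasDerivAt_v c y hy
    have hdz := h.hasDerivAt_z c y hy
    refine ((((hdv.mul hϑ'.cos).sub (hdz.mul hϑ'.sin)).pow 2).div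
      ((hdv.pow 2).add (hdz.pow 2)) hr.ne').congr_deriv ?_
    simp only [Pi.mul_apply, Pi.sub_apply, Pi.add_apply, Pi.pow_apply, angularSpeed]
    field_simp
    ring
  have hconst : defect s = defect a := eq_left_of_hasDerivAt_zero hcont hderiv hs
  have hs0 : defect s = 0 := by
    rw [hconst]
    simp [defect, hϑ, mul_cos_pruferAngle_left _ _ _ _ _ (h.ne_zero c)]
  have hnum := (div_eq_zero_iff.1 hs0).resolve_right (h.normSq_pos c s hs).ne'
  linarith [pow_eq_zero_iff two_ne_zero |>.1 hnum]

theorem eq_zero_iff_sin_pruferAngle (h : IsPruferFamily v z v' z' a b) (c : Γ) {s : ℝ}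
    (hs : s ∈ Icc a b) :
    v c s = 0 ↔ sin (pruferAngle (v c) (z c) (v' c) (z' c) a s) = 0 := by
  have hprop := h.mul_cos_pruferAngle c hs
  have hr := h.normSq_pos c s hs
  have htrig := sin_sq_add_cos_sq (pruferAngle (v c) (z c) (v' c) (z' c) a s)
  constructor <;> intro h0 <;> rw [h0] at hprop <;> simp only [h0] at hr htrig <;> aesop

theorem eq_zero_iff_cos_pruferAngle (h : IsPruferFamily v z v' z' a b) (c : Γ) {s : ℝ}
    (hs : s ∈ Icc a b) :
    z c s = 0 ↔ cos (pruferAngle (v c) (z c) (v' c) (z' c) a s) = 0 := by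
  have hprop := h.mul_cos_pruferAngle c hs
  have hr := h.normSq_pos c s hs
  have htrig := sin_sq_add_cos_sq (pruferAngle (v c) (z c) (v' c) (z' c) a s)
  constructor <;> intro h0 <;> rw [h0] at hprop <;> simp only [h0] at hr htrig <;> aesop

theorem angularSpeed_pos (h : IsPruferFamily v z v' z' a b) (c : Γ) {s : ℝ} (hs : s ∈ Ioo a b)
    (hsin : sin (pruferAngle (v c) (z c) (v' c) (z' c) a s) = 0) :
    0 < angularSpeed (v c) (z c) (v' c) (z' c) s := by
  have hv := (h.eq_zero_iff_sin_pruferAngle c (Ioo_subset_Icc_self hs)).2 hsin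
  refine div_pos ?_ (h.normSq_pos c s (Ioo_subset_Icc_self hs))
  simpa [hv] using h.crossing c s hs hv

theorem setOf_eq_zero_eq (h : IsPruferFamily v z v' z' a b) (c : Γ) :
    {s ∈ Ioo a b | v c s = 0} =
      {s ∈ Ioo a b | sin (pruferAngle (v c) (z c) (v' c) (z' c) a s) = 0} :=
  Set.ext fun _ => and_congr_right fun hs =>
    h.eq_zero_iff_sin_pruferAngle c (Ioo_subset_Icc_self hs)

theorem continuous_pruferAngle_right (h : IsPruferFamily v z v' z' a b) (hab : a ≤ b) :
    Continuous fun c => pruferAngle (v c) (z c) (v' c) (z' c) a b := by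
  have hslice : ∀ {F : Γ → ℝ → ℝ},
      ContinuousOn (fun y : Γ × ℝ => F y.1 y.2) (univ ×ˢ Icc a b) → Continuous fun c => F c a :=
    fun hF => hF.comp_continuous (f := fun c => (c, a)) (by fun_prop)
      fun c => ⟨mem_univ c, left_mem_Icc.2 hab⟩
  have hstart : Continuous fun c => z c a / v c a :=
    (hslice h.continuousOn_z).div (hslice h.continuousOn_v) h.ne_zero
  exact (continuous_const.sub (continuous_arctan.comp hstart)).add
    (continuous_intervalIntegral (F := fun c => angularSpeed (v c) (z c) (v' c) (z' c)) hab
      h.continuousOn_angularSpeed)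

theorem pruferAngle_right_le (h : IsPruferFamily v z v' z' a b) (hab : a ≤ b) (c : Γ)
    (hz : ∀ s ∈ Ioo a b, z c s ≠ 0) : pruferAngle (v c) (z c) (v' c) (z' c) a b ≤ π / 2 := by
  by_contra! hgt
  obtain ⟨s, hs, hsπ⟩ := intermediate_value_Ioo hab (h.continuousOn_pruferAngle hab c)
    (show π / 2 ∈ Ioo _ _ from ⟨(pruferAngle_left_mem _ _ _ _ a).2.trans pi_div_two_pos, hgt⟩)
  exact hz s hs ((h.eq_zero_iff_cos_pruferAngle c (Ioo_subset_Icc_self hs)).2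
    (by rw [hsπ, cos_pi_div_two]))

theorem le_pruferAngle_right (h : IsPruferFamily v z v' z' a b) (hab : a ≤ b) (c : Γ) {N : ℕ}
    (hN : (N : ℕ∞) < {s ∈ Ioo a b | v c s = 0}.encard) :
    N * π ≤ pruferAngle (v c) (z c) (v' c) (z' c) a b := by
  by_contra! hlt
  rw [h.setOf_eq_zero_eq c] at hN
  exact hN.not_ge (encard_zeros_sin_le (h.continuousOn_pruferAngle hab c)
    (fun s hs => h.hasDerivAt_pruferAngle c hs) (fun s hs => h.angularSpeed_pos c hs)
    (pruferAngle_left_mem _ _ _ _ a).1 hlt)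

theorem encard_zeros_eq (h : IsPruferFamily v z v' z' a b) (hab : a ≤ b) (c : Γ) {n : ℕ}
    (hn : pruferAngle (v c) (z c) (v' c) (z' c) a b = n * π + π / 2) :
    {s ∈ Ioo a b | v c s = 0}.encard = (n + 1 : ℕ∞) := by
  have hc := h.continuousOn_pruferAngle hab c
  have ha := pruferAngle_left_mem (v c) (z c) (v' c) (z' c) a
  rw [h.setOf_eq_zero_eq c]
  refine le_antisymm ?_ (le_encard_zeros_sin hc hab ha.2 (by linarith [pi_pos]))
  exact_mod_cast encard_zeros_sin_le (N := n + 1) hc (fun s hs => h.hasDerivAt_pruferAngle c hs)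
    (fun s hs => h.angularSpeed_pos c hs) ha.1 (by push_cast; linarith [pi_pos])

theorem exists_encard_zeros_eq [PreconnectedSpace Γ] (h : IsPruferFamily v z v' z' a b)
    (hab : a ≤ b) {n : ℕ} {c₀ c₁ : Γ} (h₀ : ∀ s ∈ Ioo a b, z c₀ s ≠ 0)
    (h₁ : (n + 1 : ℕ) < {s ∈ Ioo a b | v c₁ s = 0}.encard) :
    ∃ c, z c b = 0 ∧ {s ∈ Ioo a b | v c s = 0}.encard = (n + 1 : ℕ∞) := by
  have hlow : pruferAngle (v c₀) (z c₀) (v' c₀) (z' c₀) a b ≤ n * π + π / 2 :=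
    (h.pruferAngle_right_le hab c₀ h₀).trans (le_add_of_nonneg_left (by positivity))
  have hhigh : n * π + π / 2 ≤ pruferAngle (v c₁) (z c₁) (v' c₁) (z' c₁) a b := by
    have := h.le_pruferAngle_right hab c₁ h₁
    push_cast at this
    linarith [pi_pos]
  obtain ⟨c, hc : pruferAngle _ _ _ _ _ _ = _⟩ :=
    mem_range_of_exists_le_of_exists_ge (h.continuous_pruferAngle_right hab)
    ⟨c₀, hlow⟩ ⟨c₁, hhigh⟩
  refine ⟨c, (h.eq_zero_iff_cos_pruferAngle c (right_mem_Icc.2 hab)).2 ?_,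
    h.encard_zeros_eq hab c hc⟩
  rw [hc, cos_add_pi_div_two, sin_nat_mul_pi, neg_zero]

end IsPruferFamily

end Prufer

/-! ### Damped oscillators -/

section Oscillation

/-- `y` solves the damped oscillator equation `y'' + A y' + Q y = 0` on `s`, with `V = y'` and
damping coefficient `A` between `0` and `1`. -/
structure IsDampedOscillator (y V A Q : ℝ → ℝ) (s : Set ℝ) : Prop where
  hasDerivAt : ∀ t ∈ s, HasDerivAt y (V t) t
  hasDerivAt_velocity : ∀ t ∈ s, HasDerivAt V (-(A t) * V t - Q t * y t) t
  damping_mem : ∀ t ∈ s, A t ∈ Icc 0 1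

namespace IsDampedOscillator

variable {y V A Q : ℝ → ℝ} {a b r : ℝ} {s u : Set ℝ}

theorem mono (h : IsDampedOscillator y V A Q s) (hus : u ⊆ s) : IsDampedOscillator y V A Q u :=
  ⟨fun t ht => h.hasDerivAt t (hus ht), fun t ht => h.hasDerivAt_velocity t (hus ht),
    fun t ht => h.damping_mem t (hus ht)⟩

theorem hasDerivAt_riccati (h : IsDampedOscillator y V A Q s) {t : ℝ} (ht : t ∈ s)
    (hy : y t ≠ 0) :
    HasDerivAt (fun τ => V τ / y τ) (-(V t / y t) ^ 2 - A t * (V t / y t) - Q t) t := by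
  refine ((h.hasDerivAt_velocity t ht).div (h.hasDerivAt t ht) hy).congr_deriv ?_
  field_simp
  ring

-- The range of `arctan` has length `π`, so `arctan (V / y)` cannot decrease steeply throughout.
theorem exists_riccati_lt (h : IsDampedOscillator y V A Q (Icc a b)) (hab : a < b)
    (hy : ∀ t ∈ Icc a b, y t ≠ 0) :
    ∃ t ∈ Ioo a b, (V t / y t) ^ 2 + A t * (V t / y t) + Q t <
      π / (b - a) * (1 + (V t / y t) ^ 2) := by
  have hderiv : ∀ t ∈ Icc a b, HasDerivAt (fun τ => arctan (V τ / y τ)) _ t := fun t ht =>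
    (h.hasDerivAt_riccati ht (hy t ht)).arctan
  obtain ⟨t, ht, hslope⟩ := exists_hasDerivAt_eq_slope _ _ hab
    (fun t ht => (hderiv t ht).continuousAt.continuousWithinAt)
    fun t ht => hderiv t (Ioo_subset_Icc_self ht)
  refine ⟨t, ht, ?_⟩
  have hsteep : -(π / (b - a)) <
      1 / (1 + (V t / y t) ^ 2) * (-(V t / y t) ^ 2 - A t * (V t / y t) - Q t) := by
    rw [hslope, ← neg_div]
    have := neg_pi_div_two_lt_arctan (V b / y b)
    have := arctan_lt_pi_div_two (V a / y a)
    gcongr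
    linarith
  rw [one_div, ← div_eq_inv_mul, lt_div_iff₀ (by positivity)] at hsteep
  linarith

theorem exists_lt_one (h : IsDampedOscillator y V A Q (Icc a (a + 2 * π)))
    (hy : ∀ t ∈ Icc a (a + 2 * π), y t ≠ 0) : ∃ t ∈ Ioo a (a + 2 * π), Q t < 1 := by
  obtain ⟨t, ht, hlt⟩ := h.exists_riccati_lt (by linarith [pi_pos]) hy
  refine ⟨t, ht, ?_⟩
  obtain ⟨hA0, hA1⟩ := h.damping_mem t (Ioo_subset_Icc_self ht)
  rw [show π / (a + 2 * π - a) = 1 / 2 by field_simp; ring] at hlt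
  nlinarith [sq_nonneg (V t / y t + A t)]

theorem exists_riccati_le (h : IsDampedOscillator y V A Q (Icc a (a + π / r)))
    (hy : ∀ t ∈ Icc a (a + π / r), y t ≠ 0) (hr : 0 < r) (hr1 : 4 * r ≤ 1)
    (hQ : ∀ t ∈ Icc a (a + π / r), 4 * r ≤ Q t) : ∃ t ∈ Ioo a (a + π / r), V t / y t ≤ -r := by
  obtain ⟨t, ht, hlt⟩ := h.exists_riccati_lt (by linarith [div_pos pi_pos hr]) hy
  refine ⟨t, ht, ?_⟩
  have hmem := Ioo_subset_Icc_self ht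
  obtain ⟨hA0, hA1⟩ := h.damping_mem t hmem
  rw [show π / (a + π / r - a) = r by rw [add_sub_cancel_left]; field_simp] at hlt
  by_contra! hR
  rcases le_total 0 (V t / y t) with hsign | hsign
  · nlinarith [mul_nonneg hA0 hsign, hQ t hmem]
  · nlinarith [mul_nonneg (sub_nonneg.2 hA1) (neg_nonneg.2 hsign), hQ t hmem]

theorem riccati_le (h : IsDampedOscillator y V A Q (Icc a b)) (hy : ∀ t ∈ Icc a b, y t ≠ 0)
    (hr : 0 < r) (hQ : ∀ t ∈ Icc a b, 4 * r ≤ Q t) (ha : V a / y a ≤ -r) :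
    ∀ t ∈ Icc a b, V t / y t ≤ -r := by
  have hderiv : ∀ t ∈ Icc a b, HasDerivAt (fun τ => V τ / y τ) _ t := fun t ht =>
    h.hasDerivAt_riccati ht (hy t ht)
  refine fun t ht => image_le_of_deriv_right_lt_deriv_boundary' (B := fun _ => -r)
    (B' := fun _ => 0) (fun t ht => (hderiv t ht).continuousAt.continuousWithinAt)
    (fun t ht => (hderiv t (Ico_subset_Icc_self ht)).hasDerivWithinAt) ha
    continuousOn_const (fun _ _ => hasDerivWithinAt_const _ _ _) (fun t ht heq => ?_) ht
  have hA1 := (h.damping_mem t (Ico_subset_Icc_self ht)).2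
  rw [heq]
  nlinarith [hQ t (Ico_subset_Icc_self ht), sq_nonneg r]

theorem sq_le_of_riccati_le (h : IsDampedOscillator y V A Q (Icc a b))
    (hy : ∀ t ∈ Icc a b, y t ≠ 0) (hR : ∀ t ∈ Icc a b, V t / y t ≤ -r) {t : ℝ}
    (ht : t ∈ Icc a b) : y t ^ 2 ≤ y a ^ 2 * exp (-(r * (t - a))) ^ 2 := by
  have hderiv : ∀ τ ∈ Icc a b, HasDerivAt (fun τ => y τ ^ 2 * exp (2 * r * τ))
      (2 * exp (2 * r * τ) * y τ ^ 2 * (V τ / y τ + r)) τ := fun τ hτ => by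
    refine (((h.hasDerivAt τ hτ).pow 2).mul
      (((hasDerivAt_id τ).const_mul (2 * r)).exp)).congr_deriv ?_
    have := hy τ hτ
    simp only [Pi.pow_apply, id]
    field_simp
    push_cast
    ring
  have hanti : AntitoneOn (fun τ => y τ ^ 2 * exp (2 * r * τ)) (Icc a b) := by
    refine antitoneOn_of_deriv_nonpos (convex_Icc _ _)
      (fun τ hτ => (hderiv τ hτ).continuousAt.continuousWithinAt)
      (fun τ hτ => (hderiv τ (interior_subset hτ)).differentiableAt.differentiableWithinAt)
      fun τ hτ => ?_
    rw [(hderiv τ (interior_subset hτ)).deriv]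
    exact mul_nonpos_of_nonneg_of_nonpos (by positivity)
      (by linarith [hR τ (interior_subset hτ)])
  have hle := hanti ⟨le_rfl, ht.1.trans ht.2⟩ ht ht.1
  rw [← le_div_iff₀ (exp_pos _), mul_div_assoc, ← exp_sub] at hle
  rw [← exp_nat_mul]
  exact hle.trans_eq (by congr 2; push_cast; ring)

theorem abs_le_of_riccati_le {η : ℝ} (hη : 0 < η) (hr : 0 < r)
    (h : IsDampedOscillator y V A Q (Icc a b)) (hy : ∀ t ∈ Icc a b, y t ≠ 0)
    (hR : ∀ t ∈ Icc a b, V t / y t ≤ -r) (ha : |y a| ≤ 1) {t : ℝ} (ht : t ∈ Icc a b)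
    (hlong : 1 / (η * r) ≤ t - a) : |y t| ≤ η := by
  refine abs_le_of_sq_le_sq' ?_ hη.le |> abs_le.2
  have hexp : exp (-(r * (t - a))) ≤ η := by
    rw [exp_neg, inv_le_comm₀ (exp_pos _) hη, ← one_div]
    calc 1 / η = r * (1 / (η * r)) := by field_simp
      _ ≤ r * (t - a) := by gcongr
      _ ≤ exp (r * (t - a)) := by linarith [add_one_le_exp (r * (t - a))]
  calc y t ^ 2 ≤ y a ^ 2 * exp (-(r * (t - a))) ^ 2 := h.sq_le_of_riccati_le hy hR ht
    _ ≤ 1 * η ^ 2 := by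
      gcongr
      exact (sq_le_one_iff_abs_le_one _).2 ha
    _ = η ^ 2 := one_mul _

/- While `y` has no zero, `V / y` falls below `-r` and stays there, so `y` decays into `[-η, η]`;
there `Q` is at least `1`, which is too stiff for a half-turn to last longer than `2π`. -/
theorem exists_eq_zero {η : ℝ} (hr : 0 < r) (hr1 : 4 * r ≤ 1) (hη : 0 < η)
    (hb : b = a + π / r + 1 / (η * r) + 2 * π) (h : IsDampedOscillator y V A Q (Icc a b))
    (hQ : ∀ t ∈ Icc a b, 4 * r ≤ Q t) (hQ1 : ∀ t ∈ Icc a b, -η ≤ y t → 1 ≤ Q t)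
    (hy1 : ∀ t ∈ Icc a b, |y t| ≤ 1) : ∃ t ∈ Icc a b, y t = 0 := by
  by_contra! hy
  have hpos : 0 < 1 / (η * r) := by positivity
  have hsub₁ : Icc a (a + π / r) ⊆ Icc a b := Icc_subset_Icc_right (by linarith [pi_pos])
  obtain ⟨c, hc, hcR⟩ := (h.mono hsub₁).exists_riccati_le (fun t ht => hy t (hsub₁ ht)) hr hr1
    fun t ht => hQ t (hsub₁ ht)
  have hsub₂ : Icc c b ⊆ Icc a b := Icc_subset_Icc_left hc.1.le
  have hR := (h.mono hsub₂).riccati_le (fun t ht => hy t (hsub₂ ht)) hr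
    (fun t ht => hQ t (hsub₂ ht)) hcR
  set d := c + 1 / (η * r)
  have hsub₃ : Icc d (d + 2 * π) ⊆ Icc c b :=
    Icc_subset_Icc (by linarith) (by linarith [hc.2])
  obtain ⟨t, ht, htQ⟩ := (h.mono (hsub₃.trans hsub₂)).exists_lt_one
    fun t ht => hy t (hsub₂ (hsub₃ ht))
  have htc : t ∈ Icc c b := hsub₃ (Ioo_subset_Icc_self ht)
  have hsmall := (h.mono hsub₂).abs_le_of_riccati_le hη hr (fun t ht => hy t (hsub₂ ht)) hR
    (hy1 c (hsub₁ (Ioo_subset_Icc_self hc))) htc (by linarith [ht.1])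
  exact htQ.not_ge (hQ1 t (hsub₂ htc) (abs_le.1 hsmall).1)

theorem exists_length_forall_exists_eq_zero {q η : ℝ} (hq : 0 < q) (hη : 0 < η) :
    ∃ L > 0, ∀ (a : ℝ) (y V A Q : ℝ → ℝ), IsDampedOscillator y V A Q (Icc a (a + L)) →
      (∀ t ∈ Icc a (a + L), q ≤ Q t) → (∀ t ∈ Icc a (a + L), -η ≤ y t → 1 ≤ Q t) →
      (∀ t ∈ Icc a (a + L), |y t| ≤ 1) → ∃ t ∈ Icc a (a + L), y t = 0 := by
  set r := min q 1 / 4 with hr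
  have hr0 : 0 < r := by positivity
  refine ⟨π / r + 1 / (η * r) + 2 * π, by positivity, fun a y V A Q h hQ hQ1 hy1 => ?_⟩
  exact h.exists_eq_zero hr0 (by linarith [min_le_right q 1]) hη (by ring)
    (fun t ht => by linarith [min_le_left q 1, hQ t ht]) hQ1 hy1

end IsDampedOscillator

end Oscillation

/-! ### Volterra equations with a parameter -/

section Volterra

/-- `F u s` depends only on the restriction of `u` to `[0, s]`, with Lipschitz constant `K`. -/
def IsCausalLipschitz (K : ℝ) (F : C(I, ℝ) → C(I, ℝ)) : Prop :=
  ∀ u v s D, (∀ r ≤ s, |u r - v r| ≤ D) → |F u s - F v s| ≤ K * D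

/-- The map `u ↦ c + ∫₀ˢ F u`, whose fixed points solve `u' = F u`, `u 0 = c`. -/
noncomputable def volterraMap (F : C(I, ℝ) → C(I, ℝ)) (c : ℝ) (u : C(I, ℝ)) : C(I, ℝ) where
  toFun s := c + ∫ r in (0 : ℝ)..s, IccExtend zero_le_one (F u) r
  continuous_toFun := continuous_const.add <|
    (intervalIntegral.continuous_primitive
      (fun _ _ => (F u).continuous.Icc_extend'.intervalIntegrable _ _) 0).comp
      continuous_subtype_val

/-- The weight `s ↦ exp (L s)`: after division by it with `L` large, Volterra maps contract. -/
noncomputable def expWeight (L : ℝ) : C(I, ℝ) := ⟨fun s => exp (L * s), by fun_prop⟩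

theorem expWeight_mul_expWeight_neg (L : ℝ) : expWeight L * expWeight (-L) = 1 := by
  ext s
  simp [expWeight, ← exp_add]

variable {F : C(I, ℝ) → C(I, ℝ)} {K : ℝ}

theorem IsCausalLipschitz.abs_sub_le_exp (hF : IsCausalLipschitz K F) {L : ℝ} (hL : 0 ≤ L)
    (u v : C(I, ℝ)) (s : I) :
    |F u s - F v s| ≤ K * (exp (L * s) * ‖expWeight (-L) * (u - v)‖) := by
  refine hF u v s _ fun r hr => ?_
  have hsplit : u r - v r = exp (L * r) * (expWeight (-L) * (u - v)) r := by
    simp [expWeight, ← mul_assoc, ← exp_add]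
  rw [hsplit, abs_mul, abs_of_pos (exp_pos _)]
  gcongr
  exact (expWeight (-L) * (u - v)).norm_coe_le_norm r

theorem integral_exp_mul_le {L : ℝ} (hL : 0 < L) (s : ℝ) :
    ∫ r in (0 : ℝ)..s, exp (L * r) ≤ exp (L * s) / L := by
  rw [intervalIntegral.integral_comp_mul_left (fun x => exp x) hL.ne', integral_exp, smul_eq_mul,
    mul_zero, exp_zero, ← div_eq_inv_mul]
  gcongr
  linarith

theorem IsCausalLipschitz.abs_integral_sub_le (hF : IsCausalLipschitz K F) (hK : 0 ≤ K) {L : ℝ}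
    (hL : 0 < L) (u v : C(I, ℝ)) (s : I) :
    |(∫ r in (0 : ℝ)..s, IccExtend zero_le_one (F u) r) -
      ∫ r in (0 : ℝ)..s, IccExtend zero_le_one (F v) r| ≤
      K / L * ‖expWeight (-L) * (u - v)‖ * exp (L * s) := by
  have hint (w : C(I, ℝ)) :
      IntervalIntegrable (IccExtend zero_le_one (F w)) volume (0 : ℝ) s :=
    (F w).continuous.Icc_extend'.intervalIntegrable _ _
  set N := ‖expWeight (-L) * (u - v)‖
  rw [← intervalIntegral.integral_sub (hint u) (hint v), ← norm_eq_abs]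
  calc _ ≤ ∫ r in (0 : ℝ)..s, K * N * exp (L * r) := by
        refine intervalIntegral.norm_integral_le_of_norm_le
          (g := fun r => K * N * exp (L * r)) s.2.1 (.of_forall fun r hr => ?_)
          (Continuous.intervalIntegrable (by fun_prop) _ _)
        have hr1 : r ∈ Icc (0 : ℝ) 1 := ⟨hr.1.le, hr.2.trans s.2.2⟩
        rw [IccExtend_of_mem _ _ hr1, IccExtend_of_mem _ _ hr1]
        exact (hF.abs_sub_le_exp hL.le u v ⟨r, hr1⟩).trans_eq (by ring)
    _ ≤ K * N * (exp (L * s) / L) := by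
        rw [intervalIntegral.integral_const_mul]
        gcongr
        exact integral_exp_mul_le hL s
    _ = _ := by ring

theorem norm_expWeight_mul_volterraMap_sub_le (hF : IsCausalLipschitz K F) (hK : 0 ≤ K)
    (c c' : ℝ) (u v : C(I, ℝ)) :
    ‖expWeight (-(2 * K + 1)) * (volterraMap F c u - volterraMap F c' v)‖ ≤
      |c - c'| + 1 / 2 * ‖expWeight (-(2 * K + 1)) * (u - v)‖ := by
  set L := 2 * K + 1
  have hL0 : 0 < L := by positivity
  refine (ContinuousMap.norm_le _ (by positivity)).2 fun s => ?_
  have hint := hF.abs_integral_sub_le hK hL0 u v s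
  set N := ‖expWeight (-L) * (u - v)‖
  set Ju := ∫ r in (0 : ℝ)..s, IccExtend zero_le_one (F u) r
  set Jv := ∫ r in (0 : ℝ)..s, IccExtend zero_le_one (F v) r
  have hexp : exp (-(L * s)) ≤ 1 := exp_le_one_iff.2 (neg_nonpos.2 (mul_nonneg hL0.le s.2.1))
  calc _ = exp (-(L * s)) * |c + Ju - (c' + Jv)| := by
        rw [norm_eq_abs, ContinuousMap.mul_apply, abs_mul]
        simp [expWeight, volterraMap, Ju, Jv]
    _ ≤ exp (-(L * s)) * (|c - c'| + K / L * N * exp (L * s)) := by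
        gcongr
        rw [add_sub_add_comm]
        exact (abs_add_le _ _).trans (by gcongr)
    _ = exp (-(L * s)) * |c - c'| + K / L * N := by
        rw [exp_neg]
        field_simp
    _ ≤ 1 * |c - c'| + 1 / 2 * N := by
        have hKL : K / L ≤ 1 / 2 := (div_le_div_iff₀ hL0 two_pos).2 (by linarith)
        gcongr
    _ = _ := by rw [one_mul]

theorem dist_fixedPoint_volterraMap_le (hF : IsCausalLipschitz K F) (hK : 0 ≤ K) {c c' : ℝ}
    {u v : C(I, ℝ)} (hu : volterraMap F c u = u) (hv : volterraMap F c' v = v) :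
    ‖u - v‖ ≤ ‖expWeight (2 * K + 1)‖ * (2 * |c - c'|) := by
  have hcontr := norm_expWeight_mul_volterraMap_sub_le hF hK c c' u v
  rw [hu, hv] at hcontr
  calc ‖u - v‖ = ‖expWeight (2 * K + 1) * (expWeight (-(2 * K + 1)) * (u - v))‖ := by
        rw [← mul_assoc, expWeight_mul_expWeight_neg, one_mul]
    _ ≤ ‖expWeight (2 * K + 1)‖ * ‖expWeight (-(2 * K + 1)) * (u - v)‖ := norm_mul_le _ _
    _ ≤ ‖expWeight (2 * K + 1)‖ * (2 * |c - c'|) := by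
        gcongr
        linarith

theorem exists_fixedPoint_volterraMap (hF : IsCausalLipschitz K F) (hK : 0 ≤ K) (c : ℝ) :
    ∃ u, volterraMap F c u = u := by
  set E := expWeight (2 * K + 1)
  set E' := expWeight (-(2 * K + 1))
  have hEE' : E * E' = 1 := expWeight_mul_expWeight_neg _
  have hcontr : ContractingWith (1 / 2) fun z => E' * volterraMap F c (E * z) := by
    refine ⟨by rw [← NNReal.coe_lt_coe]; norm_num, LipschitzWith.of_dist_le_mul fun z z' => ?_⟩
    have h := norm_expWeight_mul_volterraMap_sub_le hF hK c c (E * z) (E * z')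
    rw [← mul_sub E, ← mul_assoc (expWeight _) E, mul_comm _ E, hEE', one_mul, mul_sub] at h
    change ‖E' * _ - E' * _‖ ≤ _ at h
    simpa [dist_eq_norm] using h
  have hfix : E' * volterraMap F c (E * hcontr.fixedPoint) = hcontr.fixedPoint :=
    hcontr.fixedPoint_isFixedPt
  refine ⟨E * hcontr.fixedPoint, ?_⟩
  conv_rhs => rw [← hfix, ← mul_assoc, hEE', one_mul]

theorem exists_lipschitzWith_fixedPoint_volterraMap (hF : IsCausalLipschitz K F) (hK : 0 ≤ K) :
    ∃ (u : ℝ → C(I, ℝ)) (M : NNReal), LipschitzWith M u ∧ ∀ c, volterraMap F c (u c) = u c := by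
  choose u hu using exists_fixedPoint_volterraMap hF hK
  refine ⟨u, 2 * ‖expWeight (2 * K + 1)‖₊, LipschitzWith.of_dist_le_mul fun c c' => ?_, hu⟩
  rw [dist_eq_norm, Real.dist_eq]
  exact (dist_fixedPoint_volterraMap_le hF hK (hu c) (hu c')).trans_eq (by push_cast; ring)

theorem fixedPoint_volterraMap_unique (hF : IsCausalLipschitz K F) (hK : 0 ≤ K) {c : ℝ}
    {u v : C(I, ℝ)} (hu : volterraMap F c u = u) (hv : volterraMap F c v = v) : u = v := by
  have hle := dist_fixedPoint_volterraMap_le hF hK hu hv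
  rw [sub_self, abs_zero, mul_zero, mul_zero] at hle
  exact sub_eq_zero.1 (norm_le_zero_iff.1 hle)

theorem hasDerivAt_of_volterraMap_eq {c : ℝ} {u : C(I, ℝ)} (hu : volterraMap F c u = u) {s : ℝ}
    (hs : s ∈ Ioo (0 : ℝ) 1) :
    HasDerivAt (IccExtend zero_le_one u) (IccExtend zero_le_one (F u) s) s := by
  have hprim := (((F u).continuous.Icc_extend' (h := zero_le_one)).integral_hasStrictDerivAt
    0 s).hasDerivAt.const_add c
  refine hprim.congr_of_eventuallyEq ?_
  filter_upwards [Ioo_mem_nhds hs.1 hs.2] with t ht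
  rw [IccExtend_of_mem _ _ (Ioo_subset_Icc_self ht)]
  exact (DFunLike.congr_fun hu ⟨t, Ioo_subset_Icc_self ht⟩).symm

end Volterra

/-! ### The coordinate `s` -/

section Coordinate

/-- The squared radius `x = ρ²` as a function of the coordinate `s` given by `1 - x = (1 - s) ^ m`.
With `m = 1 / α`, the coefficients of the profile equation become polynomials in `s` at `x = 1`. -/
def sqRadius (m : ℕ) (s : ℝ) : ℝ := 1 - (1 - s) ^ m

/-- The quotient `sqRadius m s / s`, extended continuously to `s = 0`. -/
def sqRadiusQuot (m : ℕ) (s : ℝ) : ℝ := ∑ i ∈ Finset.range m, (1 - s) ^ i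

theorem mul_sqRadiusQuot (m : ℕ) (s : ℝ) : s * sqRadiusQuot m s = sqRadius m s := by
  simpa [sqRadiusQuot, sqRadius] using mul_neg_geom_sum (1 - s) m

@[fun_prop]
theorem continuous_sqRadius (m : ℕ) : Continuous (sqRadius m) := by
  unfold sqRadius
  fun_prop

@[fun_prop]
theorem continuous_sqRadiusQuot (m : ℕ) : Continuous (sqRadiusQuot m) := by
  unfold sqRadiusQuot
  fun_prop

theorem hasDerivAt_sqRadius (m : ℕ) (s : ℝ) :
    HasDerivAt (sqRadius m) (m * (1 - s) ^ (m - 1)) s := by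
  have h := (((hasDerivAt_id s).const_sub 1).pow m).const_sub 1
  exact h.congr_deriv (by simp)

variable {m : ℕ} {s : ℝ}

theorem one_le_sqRadiusQuot (hm : m ≠ 0) (hs : s ≤ 1) : 1 ≤ sqRadiusQuot m s := by
  simpa [sqRadiusQuot] using Finset.single_le_sum (f := fun i => (1 - s) ^ i)
    (fun i _ => pow_nonneg (by linarith) i) (Finset.mem_range.2 (Nat.pos_of_ne_zero hm))

theorem sqRadiusQuot_le (hs : s ∈ Icc (0 : ℝ) 1) : sqRadiusQuot m s ≤ m := by
  simpa [sqRadiusQuot] using Finset.sum_le_card_nsmul (Finset.range m) (fun i => (1 - s) ^ i) 1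
    fun i _ => pow_le_one₀ (by linarith [hs.2]) (by linarith [hs.1])

theorem le_sqRadius (hm : m ≠ 0) (hs : s ∈ Icc (0 : ℝ) 1) : s ≤ sqRadius m s := by
  rw [← mul_sqRadiusQuot]
  exact le_mul_of_one_le_right hs.1 (one_le_sqRadiusQuot hm hs.2)

theorem sqRadius_pos (hm : m ≠ 0) (hs : s ∈ Ioc (0 : ℝ) 1) : 0 < sqRadius m s :=
  hs.1.trans_le (le_sqRadius hm ⟨hs.1.le, hs.2⟩)

theorem hasDerivAt_sqRadiusQuot (m : ℕ) (hs : s ≠ 0) :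
    HasDerivAt (sqRadiusQuot m) ((m * (1 - s) ^ (m - 1) - sqRadiusQuot m s) / s) s := by
  have hquot : sqRadiusQuot m =ᶠ[𝓝 s] fun y => sqRadius m y / y := by
    filter_upwards [isOpen_ne.mem_nhds hs] with y hy
    rw [← mul_sqRadiusQuot, mul_div_cancel_left₀ _ hy]
  refine (((hasDerivAt_sqRadius m s).fun_div (hasDerivAt_id s) hs).congr_of_eventuallyEq
    hquot).congr_deriv ?_
  rw [← mul_sqRadiusQuot, id]
  field_simp

end Coordinate

section Flux

theorem rpow_mul_hardyMean {a x : ℝ} (hx : 0 < x) (f : ℝ → ℝ) :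
    x ^ a * hardyMean a f x = ∫ r in (0 : ℝ)..x, r ^ (a - 1) * f r := by
  have hscale := intervalIntegral.mul_integral_comp_mul_left (a := 0) (b := 1)
    (f := fun r => r ^ (a - 1) * f r) x
  rw [mul_zero, mul_one] at hscale
  have hpow : x ^ a = x * x ^ (a - 1) := by
    rw [mul_comm, ← rpow_add_one hx.ne', sub_add_cancel]
  rw [← hscale, hpow, mul_assoc, hardyMean, ← intervalIntegral.integral_const_mul]
  congr 1
  refine intervalIntegral.integral_congr fun r hr => ?_
  rw [uIcc_of_le zero_le_one] at hr
  simp only [mul_rpow hx.le hr.1, mul_assoc]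

theorem hasDerivAt_hardyMean {a x : ℝ} (ha : 0 < a) (hx : 0 < x) {f : ℝ → ℝ} (hf : Continuous f) :
    HasDerivAt (hardyMean a f) ((f x - a * hardyMean a f x) / x) x := by
  have hprim :
      HasDerivAt (fun y => ∫ r in (0 : ℝ)..y, r ^ (a - 1) * f r) (x ^ (a - 1) * f x) x := by
    have hcont : ContinuousOn (fun r : ℝ => r ^ (a - 1) * f r) (Ioi 0) := fun r hr =>
      ((continuousAt_rpow_const r _ (.inl (ne_of_gt hr))).mul hf.continuousAt).continuousWithinAt
    exact intervalIntegral.integral_hasDerivAt_right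
      ((intervalIntegral.intervalIntegrable_rpow' (by linarith)).mul_continuousOn hf.continuousOn)
      (hcont.stronglyMeasurableAtFilter isOpen_Ioi x hx) (hcont.continuousAt (Ioi_mem_nhds hx))
  have hquot := hprim.fun_div (hasDerivAt_rpow_const (p := a) (.inl hx.ne')) (by positivity)
  refine (hquot.congr_of_eventuallyEq ?_).congr_deriv ?_
  · filter_upwards [Ioi_mem_nhds hx] with y hy
    rw [← rpow_mul_hardyMean hy, mul_div_cancel_left₀ _ (rpow_pos_of_pos hy a).ne']
  · rw [← rpow_mul_hardyMean hx, rpow_sub_one hx.ne']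
    field_simp

/-- The weight `√(sqRadiusQuot m)` on `[0,1]`. -/
noncomputable def sqrtWeight (m : ℕ) : C(I, ℝ) :=
  ⟨fun s => √(sqRadiusQuot m s), by fun_prop⟩

/-- The solution operator `f ↦ X` of the flux equation `x X' + (3/2) x' X = (m/4) f`,
`x = sqRadius m s`, with `X` regular at `s = 0`. -/
noncomputable def flux (m : ℕ) : C(I, ℝ) →L[ℝ] C(I, ℝ) :=
  ((m : ℝ) / 4) • (ContinuousLinearMap.mul ℝ _ (Ring.inverse (sqrtWeight m ^ 3)) ∘L
    hardyCLM (3 / 2) (by norm_num) ∘L ContinuousLinearMap.mul ℝ _ (sqrtWeight m))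

variable {m : ℕ}

theorem one_le_sqrtWeight (hm : m ≠ 0) (s : I) : 1 ≤ sqrtWeight m s :=
  one_le_sqrt.2 (one_le_sqRadiusQuot hm s.2.2)

theorem flux_apply (hm : m ≠ 0) (f : C(I, ℝ)) (s : I) :
    flux m f s = m / 4 * hardyMean (3 / 2) (IccExtend zero_le_one ⇑(sqrtWeight m * f)) s /
      sqrtWeight m s ^ 3 := by
  have hunit : IsUnit (sqrtWeight m ^ 3) :=
    (ContinuousMap.isUnit_iff_forall_ne_zero _ |>.2 fun s =>
      (zero_lt_one.trans_le (one_le_sqrtWeight hm s)).ne').pow 3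
  have hinv : Ring.inverse (sqrtWeight m ^ 3) s = (sqrtWeight m s ^ 3)⁻¹ :=
    eq_inv_of_mul_eq_one_left (DFunLike.congr_fun (Ring.inverse_mul_cancel _ hunit) s)
  change m / 4 * (Ring.inverse (sqrtWeight m ^ 3) s * hardyMean _ _ _) = _
  rw [hinv]
  ring_nf
  rfl

theorem abs_flux_le (hm : m ≠ 0) {f : C(I, ℝ)} {s : I} {D : ℝ} (hf : ∀ r ≤ s, |f r| ≤ D) :
    |flux m f s| ≤ m / 4 * √m * D := by
  have hw := one_le_sqrtWeight hm s
  have hD : 0 ≤ D := (abs_nonneg _).trans (hf s le_rfl)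
  have hmean : |hardyMean (3 / 2) (IccExtend zero_le_one ⇑(sqrtWeight m * f)) s| ≤
      (3 / 2)⁻¹ * (√m * D) := by
    refine norm_hardyMean_le (by norm_num) fun r hr => ?_
    have hsr : (s : ℝ) * r ≤ s := mul_le_of_le_one_right s.2.1 hr.2
    have hmem : (s : ℝ) * r ∈ Icc (0 : ℝ) 1 := ⟨mul_nonneg s.2.1 hr.1, hsr.trans s.2.2⟩
    rw [IccExtend_of_mem _ _ hmem, ContinuousMap.mul_apply, norm_mul]
    gcongr
    · exact (norm_of_nonneg (sqrt_nonneg _)).trans_le (sqrt_le_sqrt (sqRadiusQuot_le hmem))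
    · exact hf ⟨s * r, hmem⟩ hsr
  rw [flux_apply hm, abs_div, abs_mul, abs_of_nonneg (by positivity : (0 : ℝ) ≤ m / 4),
    abs_of_nonneg (by positivity : 0 ≤ sqrtWeight m s ^ 3)]
  have hmD : 0 ≤ √m * D := by positivity
  calc _ ≤ m / 4 * |hardyMean (3 / 2) (IccExtend zero_le_one ⇑(sqrtWeight m * f)) s| :=
        div_le_self (by positivity) (one_le_pow₀ hw)
    _ ≤ m / 4 * (√m * D) := by
        gcongr
        linarith
    _ = _ := by ring

theorem flux_apply_zero (hm : m ≠ 0) (f : C(I, ℝ)) : flux m f 0 = f 0 / 6 := by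
  have hm' : (0 : ℝ) < m := by positivity
  have hw : sqrtWeight m 0 = √m := by simp [sqrtWeight, sqRadiusQuot]
  rw [flux_apply hm, Icc.coe_zero, hardyMean_zero_right (by norm_num),
    IccExtend_of_mem _ _ (left_mem_Icc.2 zero_le_one)]
  change m / 4 * (sqrtWeight m 0 * f 0 / (3 / 2)) / sqrtWeight m 0 ^ 3 = _
  rw [hw, pow_succ √(m : ℝ), sq_sqrt hm'.le]
  ring_nf
  field_simp

theorem hasDerivAt_flux (hm : m ≠ 0) (f : C(I, ℝ)) {s : ℝ} (hs : s ∈ Ioo (0 : ℝ) 1) :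
    HasDerivAt (IccExtend zero_le_one (flux m f))
      ((m / 4 * IccExtend zero_le_one f s -
        3 / 2 * m * (1 - s) ^ (m - 1) * IccExtend zero_le_one (flux m f) s) / sqRadius m s) s := by
  have hP : 0 < sqRadiusQuot m s := zero_lt_one.trans_le (one_le_sqRadiusQuot hm hs.2.le)
  have hw : 0 < √(sqRadiusQuot m s) := sqrt_pos.2 hP
  have hH := hasDerivAt_hardyMean (a := 3 / 2) (by norm_num) hs.1
    ((sqrtWeight m * f).continuous.Icc_extend' (h := zero_le_one))
  have hquot := (hH.const_mul ((m : ℝ) / 4)).fun_div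
    (((hasDerivAt_sqRadiusQuot m hs.1.ne').sqrt hP.ne').fun_pow 3) (by positivity)
  have happly {y : ℝ} (hy : y ∈ Ioo (0 : ℝ) 1) : IccExtend zero_le_one (flux m f) y =
      m / 4 * hardyMean (3 / 2) (IccExtend zero_le_one ⇑(sqrtWeight m * f)) y /
        √(sqRadiusQuot m y) ^ 3 := by
    rw [IccExtend_of_mem _ _ (Ioo_subset_Icc_self hy), flux_apply hm]
    rfl
  refine (hquot.congr_of_eventuallyEq ?_).congr_deriv ?_
  · filter_upwards [Ioo_mem_nhds hs.1 hs.2] with y hy using happly hy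
  · have hprod : IccExtend zero_le_one ⇑(sqrtWeight m * f) s =
        √(sqRadiusQuot m s) * IccExtend zero_le_one f s := by
      rw [IccExtend_of_mem _ _ (Ioo_subset_Icc_self hs), IccExtend_of_mem _ _
        (Ioo_subset_Icc_self hs)]
      rfl
    rw [happly hs, hprod, ← mul_sqRadiusQuot]
    have hsq : √(sqRadiusQuot m s) ^ 2 = sqRadiusQuot m s := sq_sqrt hP.le
    have hs0 := hs.1.ne'
    generalize √(sqRadiusQuot m s) = w at hw hsq
    rw [← hsq]
    field_simp
    ring

end Flux

/-! ### Solutions regular at the centre -/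

section Profile

/-- `U` is the profile and `X = (1 - x) ^ α dU/dx` its flux, both as functions of the coordinate
`s`, for the profile equation with reaction term `h`, started at `U = c` at the centre. The last
field records the bound on the flux that comes from its integral representation. -/
structure IsProfile (m : ℕ) (h : ℝ → ℝ) (c : ℝ) (U X : ℝ → ℝ) : Prop where
  continuous_profile : Continuous U
  continuous_flux : Continuous X
  profile_zero : U 0 = c
  flux_zero : X 0 = h c / 6
  hasDerivAt_profile : ∀ s ∈ Ioo (0 : ℝ) 1, HasDerivAt U (m * (1 - s) ^ (m - 2) * X s) s
  hasDerivAt_flux : ∀ s ∈ Ioo (0 : ℝ) 1, HasDerivAt X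
    ((m / 4 * h (U s) - 3 / 2 * m * (1 - s) ^ (m - 1) * X s) / sqRadius m s) s
  abs_flux_le : ∀ D, (∀ s ∈ Icc (0 : ℝ) 1, |h (U s)| ≤ D) →
    ∀ s ∈ Icc (0 : ℝ) 1, |X s| ≤ m / 4 * √m * D

theorem IsProfile.congr {m : ℕ} {h h' : ℝ → ℝ} {c : ℝ} {U X : ℝ → ℝ} (hp : IsProfile m h c U X)
    (heq : ∀ s ∈ Icc (0 : ℝ) 1, h (U s) = h' (U s)) : IsProfile m h' c U X where
  __ := hp
  flux_zero := by
    rw [hp.flux_zero, ← hp.profile_zero, heq 0 (left_mem_Icc.2 zero_le_one)]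
  hasDerivAt_flux s hs := heq s (Ioo_subset_Icc_self hs) ▸ hp.hasDerivAt_flux s hs
  abs_flux_le D hD := hp.abs_flux_le D fun s hs => heq s hs ▸ hD s hs

/-- The right-hand side of `U' = m (1 - s) ^ (m - 2) X`, as an operator on profiles. -/
noncomputable def profileVelocity (m : ℕ) (h : C(ℝ, ℝ)) (u : C(I, ℝ)) : C(I, ℝ) :=
  ⟨fun s => m * (1 - s : ℝ) ^ (m - 2), by fun_prop⟩ * flux m (h.comp u)

variable {m : ℕ}

theorem isCausalLipschitz_profileVelocity (hm : m ≠ 0) {h : C(ℝ, ℝ)} {l : NNReal}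
    (hl : LipschitzWith l h) :
    IsCausalLipschitz (m * (m / 4 * √m * l)) (profileVelocity m h) := by
  intro u v s D hD
  have hflux : |flux m (h.comp u - h.comp v) s| ≤ m / 4 * √m * (l * D) :=
    abs_flux_le hm fun r hr => (hl.dist_le_mul _ _).trans (by gcongr; exact hD r hr)
  have hs : 0 ≤ 1 - (s : ℝ) := sub_nonneg.2 s.2.2
  have hpow : (1 - (s : ℝ)) ^ (m - 2) ≤ 1 := pow_le_one₀ hs (sub_le_self 1 s.2.1)
  calc |profileVelocity m h u s - profileVelocity m h v s|
      = m * (1 - (s : ℝ)) ^ (m - 2) * |flux m (h.comp u - h.comp v) s| := by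
        rw [← abs_of_nonneg (by positivity : 0 ≤ m * (1 - (s : ℝ)) ^ (m - 2)), ← abs_mul, map_sub]
        exact congrArg _ (mul_sub _ _ _).symm
    _ ≤ m * 1 * (m / 4 * √m * (l * D)) := by gcongr
    _ = _ := by ring

theorem isProfile_of_volterraMap_eq (hm : m ≠ 0) {h : C(ℝ, ℝ)} {c : ℝ} {u : C(I, ℝ)}
    (hu : volterraMap (profileVelocity m h) c u = u) :
    IsProfile m h c (IccExtend zero_le_one u) (IccExtend zero_le_one (flux m (h.comp u))) where
  continuous_profile := u.continuous.Icc_extend'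
  continuous_flux := (flux m (h.comp u)).continuous.Icc_extend'
  profile_zero := by simpa [volterraMap] using (DFunLike.congr_fun hu 0).symm
  flux_zero := by
    have hu0 : u 0 = c := by simpa [volterraMap] using (DFunLike.congr_fun hu 0).symm
    simpa [hu0] using flux_apply_zero hm (h.comp u)
  hasDerivAt_profile s hs := by
    have hd := hasDerivAt_of_volterraMap_eq hu hs
    rw [IccExtend_of_mem _ _ (Ioo_subset_Icc_self hs)] at hd ⊢
    exact hd
  hasDerivAt_flux s hs := hasDerivAt_flux hm (h.comp u) hs
  abs_flux_le D hD s hs := by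
    rw [IccExtend_of_mem _ _ hs]
    refine abs_flux_le hm fun r _ => ?_
    simpa using hD r r.2

theorem exists_continuous_isProfile (hm : m ≠ 0) {h : C(ℝ, ℝ)} {l : NNReal}
    (hl : LipschitzWith l h) :
    ∃ U X : ℝ → C(I, ℝ), Continuous U ∧ Continuous X ∧
      (∀ c, IsProfile m h c (IccExtend zero_le_one (U c)) (IccExtend zero_le_one (X c))) ∧
      ∀ c, h c = 0 → U c = .const I c ∧ X c = 0 := by
  have hcausal := isCausalLipschitz_profileVelocity hm hl
  have hK : (0 : ℝ) ≤ m * (m / 4 * √m * l) := by positivity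
  obtain ⟨U, K, hUK, hU⟩ := exists_lipschitzWith_fixedPoint_volterraMap hcausal hK
  refine ⟨U, fun c => flux m (h.comp (U c)), hUK.continuous,
    (flux m).continuous.comp ((ContinuousMap.continuous_postcomp h).comp hUK.continuous),
    fun c => isProfile_of_volterraMap_eq hm (hU c), fun c hc => ?_⟩
  have hconst : h.comp (.const I c) = 0 := by
    ext
    simp [hc]
  have hUc : U c = .const I c := by
    refine fixedPoint_volterraMap_unique hcausal hK (hU c) ?_
    ext s
    simp [volterraMap, profileVelocity, hconst, IccExtend]
  exact ⟨hUc, by simp only [hUc, hconst, map_zero]⟩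

end Profile

section AprioriBound

theorem integral_neg_right_of_odd {h : ℝ → ℝ} (hodd : ∀ x, h (-x) = -h x) (x : ℝ) :
    ∫ y in (0 : ℝ)..-x, h y = ∫ y in (0 : ℝ)..x, h y := by
  have hneg := intervalIntegral.integral_comp_neg h (a := 0) (b := x)
  simp only [hodd, intervalIntegral.integral_neg, neg_zero] at hneg
  rw [intervalIntegral.integral_symm, ← hneg, neg_neg]

theorem strictAntiOn_integral_of_neg {h : ℝ → ℝ} (hh : Continuous h) {b : ℝ}
    (hneg : ∀ x, b < x → h x < 0) : StrictAntiOn (fun x => ∫ y in (0 : ℝ)..x, h y) (Ici b) := by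
  have hderiv (x : ℝ) := (hh.integral_hasStrictDerivAt 0 x).hasDerivAt
  refine strictAntiOn_of_deriv_neg (convex_Ici b)
    (fun x _ => (hderiv x).continuousAt.continuousWithinAt) fun x hx => ?_
  rw [interior_Ici] at hx
  exact (hderiv x).deriv ▸ hneg x hx

variable {m : ℕ} {h : ℝ → ℝ} {c : ℝ} {U X : ℝ → ℝ}

/-- The energy `2 x (1 - s) ^ (m - 2) X² - H(U)` of a profile, where `H' = h`. -/
noncomputable def profileEnergy (m : ℕ) (h U X : ℝ → ℝ) (s : ℝ) : ℝ :=
  2 * sqRadius m s * (1 - s) ^ (m - 2) * X s ^ 2 - ∫ y in (0 : ℝ)..U s, h y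

theorem IsProfile.hasDerivAt_profileEnergy (hp : IsProfile m h c U X) (hm : 3 ≤ m)
    (hh : Continuous h) {s : ℝ} (hs : s ∈ Ioo (0 : ℝ) 1) :
    HasDerivAt (profileEnergy m h U X)
      (-(4 * m * (1 - s) ^ (2 * m - 3) * X s ^ 2 +
        2 * (m - 2) * sqRadius m s * (1 - s) ^ (m - 3) * X s ^ 2)) s := by
  have hx := sqRadius_pos (m := m) (by lia) ⟨hs.1, hs.2.le⟩
  have hkin := (((hasDerivAt_sqRadius m s).const_mul 2).mul
    (((hasDerivAt_id s).const_sub 1).pow (m - 2))).mul ((hp.hasDerivAt_flux s hs).pow 2)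
  have hpot := (hh.integral_hasStrictDerivAt 0 (U s)).hasDerivAt.comp s
    (hp.hasDerivAt_profile s hs)
  refine (hkin.sub hpot).congr_deriv ?_
  obtain ⟨k, rfl⟩ : ∃ k, m = k + 3 := ⟨m - 3, by lia⟩
  simp only [id, show k + 3 - 1 = k + 2 by lia, show k + 3 - 2 = k + 1 by lia,
    show 2 * (k + 3) - 3 = 2 * k + 3 by lia, Nat.add_sub_cancel, Nat.cast_add, Nat.cast_ofNat,
    Nat.cast_one, Nat.add_one_sub_one, Pi.mul_apply, Pi.pow_apply]
  field_simp
  ring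

theorem IsProfile.antitoneOn_profileEnergy (hp : IsProfile m h c U X) (hm : 3 ≤ m)
    (hh : Continuous h) : AntitoneOn (profileEnergy m h U X) (Icc 0 1) := by
  have hcont : Continuous (profileEnergy m h U X) := by
    have hU := hp.continuous_profile
    have hX := hp.continuous_flux
    have hprim := (intervalIntegral.continuous_primitive (μ := volume)
      (fun _ _ => hh.intervalIntegrable _ _) 0).comp hU
    exact Continuous.sub (by fun_prop) hprim
  have hderiv {s : ℝ} (hs : s ∈ interior (Icc (0 : ℝ) 1)) :=
    hp.hasDerivAt_profileEnergy hm hh (by rwa [interior_Icc] at hs)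
  refine antitoneOn_of_deriv_nonpos (convex_Icc 0 1) hcont.continuousOn
    (fun s hs => (hderiv hs).differentiableAt.differentiableWithinAt) fun s hs => ?_
  rw [(hderiv hs).deriv, neg_nonpos]
  rw [interior_Icc] at hs
  have hx := sqRadius_pos (m := m) (by lia) ⟨hs.1, hs.2.le⟩
  have hs1 : 0 < 1 - s := sub_pos.2 hs.2
  have hm2 : (0 : ℝ) ≤ m - 2 := by
    have : (3 : ℝ) ≤ m := by exact_mod_cast hm
    linarith
  positivity

theorem IsProfile.abs_profile_le (hp : IsProfile m h c U X) (hm : 3 ≤ m) (hh : Continuous h)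
    (hodd : ∀ x, h (-x) = -h x) {b : ℝ} (hneg : ∀ x, b < x → h x < 0) (hbc : b ≤ c) {s : ℝ}
    (hs : s ∈ Icc (0 : ℝ) 1) : |U s| ≤ c := by
  have henergy := hp.antitoneOn_profileEnergy hm hh (left_mem_Icc.2 zero_le_one) hs hs.1
  have hx : 0 ≤ sqRadius m s := hs.1.trans (le_sqRadius (by lia) hs)
  have hs1 : 0 ≤ 1 - s := sub_nonneg.2 hs.2
  have hkin : 0 ≤ 2 * sqRadius m s * (1 - s) ^ (m - 2) * X s ^ 2 := by positivity
  have hpot : ∫ y in (0 : ℝ)..c, h y ≤ ∫ y in (0 : ℝ)..|U s|, h y := by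
    have heven : ∫ y in (0 : ℝ)..|U s|, h y = ∫ y in (0 : ℝ)..U s, h y := by
      rcases abs_choice (U s) with hU | hU <;> rw [hU]
      exact integral_neg_right_of_odd hodd _
    have hx0 : sqRadius m 0 = 0 := by simp [sqRadius]
    simp only [profileEnergy, hx0, hp.profile_zero] at henergy
    linarith
  by_contra! hlt
  exact (strictAntiOn_integral_of_neg hh hneg (mem_Ici.2 hbc) (mem_Ici.2 (hbc.trans hlt.le))
    hlt).not_ge hpot

end AprioriBound

section Family

/-- The exponent `α` for the nonlinearity `u ^ (2 m + 1)`. -/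
noncomputable def scalingExp (m : ℕ) : ℝ := 1 / m

/-- The zeroth order part `α (α + 1) u - u ^ p`, `p = 2 m + 1`, of the profile equation. -/
noncomputable def reaction (m : ℕ) (u : ℝ) : ℝ :=
  scalingExp m * (scalingExp m + 1) * u - u ^ (2 * m + 1)

theorem reaction_neg (m : ℕ) (u : ℝ) : reaction m (-u) = -reaction m u := by
  simp only [reaction, Odd.neg_pow ⟨m, rfl⟩]
  ring

@[fun_prop]
theorem contDiff_reaction (m : ℕ) {n : WithTop ℕ∞} : ContDiff ℝ n (reaction m) := by
  unfold reaction
  fun_prop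

variable {m : ℕ}

theorem alphaP_two_mul_add_one (m : ℕ) : alphaP (2 * m + 1) = scalingExp m := by
  simp only [alphaP, scalingExp]
  push_cast
  rw [add_sub_cancel_right, ← div_div, div_self two_ne_zero]

theorem scalingExp_pos (hm : m ≠ 0) : 0 < scalingExp m := by
  unfold scalingExp
  positivity

theorem bZero_pos (hm : m ≠ 0) : 0 < bZero (2 * m + 1) := by
  have : (0 : ℝ) < m := by positivity
  simp only [bZero]
  push_cast
  rw [add_sub_cancel_right]
  positivity

theorem bZero_pow (hm : m ≠ 0) :
    bZero (2 * m + 1) ^ (2 * m) = scalingExp m * (scalingExp m + 1) := by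
  have : (0 : ℝ) < m := by positivity
  simp only [bZero, scalingExp]
  push_cast
  rw [add_sub_cancel_right, ← rpow_natCast, ← rpow_mul (by positivity)]
  push_cast
  rw [one_div_mul_cancel (by positivity), rpow_one]
  field_simp
  ring

theorem reaction_neg_of_bZero_lt (hm : m ≠ 0) {u : ℝ} (hu : bZero (2 * m + 1) < u) :
    reaction m u < 0 := by
  have hb := bZero_pos hm
  have hpow : bZero (2 * m + 1) ^ (2 * m) < u ^ (2 * m) :=
    pow_lt_pow_left₀ hu hb.le (by lia)
  rw [reaction, ← bZero_pow hm, pow_succ, ← sub_mul]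
  exact mul_neg_of_neg_of_pos (sub_neg.2 hpow) (hb.trans hu)

theorem reaction_bZero (hm : m ≠ 0) : reaction m (bZero (2 * m + 1)) = 0 := by
  rw [reaction, ← bZero_pow hm, pow_succ, sub_self]

theorem abs_reaction_le (hm : m ≠ 0) {c u : ℝ} (hc : bZero (2 * m + 1) ≤ c) (hu : |u| ≤ c) :
    |reaction m u| ≤ 2 * c ^ (2 * m + 1) := by
  have hb := bZero_pos hm
  have hc0 : 0 ≤ c := hb.le.trans hc
  rw [reaction, ← bZero_pow hm]
  calc _ ≤ |bZero (2 * m + 1) ^ (2 * m) * u| + |u ^ (2 * m + 1)| := abs_sub _ _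
    _ = bZero (2 * m + 1) ^ (2 * m) * |u| + |u| ^ (2 * m + 1) := by
        rw [abs_mul, abs_pow, abs_pow, abs_of_pos hb]
    _ ≤ c ^ (2 * m) * c + c ^ (2 * m + 1) := by gcongr
    _ = _ := by ring

/-- The reaction term, frozen outside `[-M, M]` so as to be globally Lipschitz. -/
noncomputable def truncatedReaction (m : ℕ) {M : ℝ} (hM : 0 ≤ M) : C(ℝ, ℝ) :=
  ⟨fun u => reaction m (projIcc (-M) M (neg_le_self hM) u),
    (contDiff_reaction m (n := 0)).continuous.comp
      (continuous_subtype_val.comp continuous_projIcc)⟩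

variable {M : ℝ}

theorem truncatedReaction_of_abs_le (hM : 0 ≤ M) {u : ℝ} (hu : |u| ≤ M) :
    truncatedReaction m hM u = reaction m u := by
  simp [truncatedReaction, projIcc_of_mem _ (abs_le.1 hu)]

theorem exists_lipschitzWith_truncatedReaction (m : ℕ) (hM : 0 ≤ M) :
    ∃ l, LipschitzWith l (truncatedReaction m hM) := by
  obtain ⟨l, hl⟩ := (contDiff_reaction m (n := 1)).contDiffOn.exists_lipschitzOnWith one_ne_zero
    (convex_Icc (-M) M) isCompact_Icc
  exact ⟨_, (lipschitzOnWith_iff_restrict.1 hl).comp (LipschitzWith.projIcc (neg_le_self hM))⟩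

theorem truncatedReaction_neg (hM : 0 ≤ M) (u : ℝ) :
    truncatedReaction m hM (-u) = -truncatedReaction m hM u := by
  have hproj : (projIcc (-M) M (neg_le_self hM) (-u) : ℝ) = -projIcc (-M) M (neg_le_self hM) u := by
    rw [coe_projIcc, coe_projIcc, ← min_neg_neg, neg_neg, ← max_neg_neg, max_min_distrib_left,
      max_eq_right (neg_le_self hM)]
  simp only [truncatedReaction, ContinuousMap.coe_mk, hproj, reaction_neg]

theorem truncatedReaction_neg_of_bZero_lt (hm : m ≠ 0) (hM : 0 ≤ M)
    (hbM : bZero (2 * m + 1) < M) {u : ℝ} (hu : bZero (2 * m + 1) < u) :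
    truncatedReaction m hM u < 0 := by
  refine reaction_neg_of_bZero_lt hm ?_
  rw [coe_projIcc]
  exact lt_max_of_lt_right (lt_min hbM hu)

theorem exists_continuous_isProfile_reaction (hm : 3 ≤ m) (hM : bZero (2 * m + 1) < M) :
    ∃ U X : ℝ → C(I, ℝ), Continuous U ∧ Continuous X ∧
      (∀ c ∈ Icc (bZero (2 * m + 1)) M, IsProfile m (reaction m) c
        (IccExtend zero_le_one (U c)) (IccExtend zero_le_one (X c))) ∧
      U (bZero (2 * m + 1)) = .const I (bZero (2 * m + 1)) ∧ X (bZero (2 * m + 1)) = 0 := by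
  have hm0 : m ≠ 0 := by lia
  have hb := bZero_pos hm0
  have hM0 : 0 ≤ M := hb.le.trans hM.le
  obtain ⟨l, hl⟩ := exists_lipschitzWith_truncatedReaction m hM0
  obtain ⟨U, X, hU, hX, hprof, hconst⟩ := exists_continuous_isProfile hm0 hl
  refine ⟨U, X, hU, hX, fun c hc => (hprof c).congr fun s hs => ?_, hconst _ ?_⟩
  · exact truncatedReaction_of_abs_le hM0 <| ((hprof c).abs_profile_le hm
      (truncatedReaction m hM0).continuous (truncatedReaction_neg hM0)
      (fun _ => truncatedReaction_neg_of_bZero_lt hm0 hM0 hM) hc.1 hs).trans hc.2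
  · rw [truncatedReaction_of_abs_le hM0 ((abs_of_pos hb).trans_le hM.le),
      reaction_bZero hm0]

theorem IsProfile.abs_profile_le_of_reaction {c : ℝ} {U X : ℝ → ℝ}
    (hp : IsProfile m (reaction m) c U X) (hm : 3 ≤ m) (hc : bZero (2 * m + 1) ≤ c) {s : ℝ}
    (hs : s ∈ Icc (0 : ℝ) 1) : |U s| ≤ c :=
  hp.abs_profile_le hm (contDiff_reaction m (n := 0)).continuous (reaction_neg m)
    (fun _ => reaction_neg_of_bZero_lt (by lia)) hc hs

theorem IsProfile.abs_flux_le_of_reaction {c : ℝ} {U X : ℝ → ℝ}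
    (hp : IsProfile m (reaction m) c U X) (hm : 3 ≤ m) (hc : bZero (2 * m + 1) ≤ c) {s : ℝ}
    (hs : s ∈ Icc (0 : ℝ) 1) : |X s| ≤ m / 4 * √m * (2 * c ^ (2 * m + 1)) :=
  hp.abs_flux_le _
    (fun _ hs => abs_reaction_le (by lia) hc (hp.abs_profile_le_of_reaction hm hc hs)) s hs

end Family

/-! ### Emden variables -/

section EmdenVariables

/-- `ρ ^ α`, where `x = ρ²`. -/
noncomputable def emdenWeight (m : ℕ) (s : ℝ) : ℝ := sqRadius m s ^ (scalingExp m / 2)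

/-- `w = ρ ^ α U`, the ratio of `U` to the singular solution up to the factor `b∞`. -/
noncomputable def emdenProfile (m : ℕ) (U : ℝ → ℝ) (s : ℝ) : ℝ := emdenWeight m s * U s

/-- `(1 - s) ρ dw/dρ`. The factor `1 - s` makes it continuous up to `ρ = 1`. -/
noncomputable def emdenFlux (m : ℕ) (U X : ℝ → ℝ) (s : ℝ) : ℝ :=
  emdenWeight m s * (2 * sqRadius m s * X s + scalingExp m * (1 - s) * U s)

/-- The force `α (1 - α) w - w ^ p`, `p = 2 m + 1`, in the equation for `w = ρ ^ α u`. -/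
noncomputable def emdenForce (m : ℕ) (w : ℝ) : ℝ :=
  scalingExp m * (1 - scalingExp m) * w - w ^ (2 * m + 1)

variable {m : ℕ}

theorem natCast_mul_scalingExp (hm : m ≠ 0) : m * scalingExp m = 1 :=
  mul_one_div_cancel (by positivity)

theorem emdenWeight_pow (hm : m ≠ 0) {s : ℝ} (hs : s ∈ Icc (0 : ℝ) 1) :
    emdenWeight m s ^ (2 * m) = sqRadius m s := by
  have hexp : scalingExp m / 2 * (2 * m : ℕ) = 1 := by
    push_cast
    linarith [natCast_mul_scalingExp hm]
  rw [emdenWeight, ← rpow_natCast, ← rpow_mul (hs.1.trans (le_sqRadius hm hs)), hexp, rpow_one]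

theorem emdenWeight_pos (hm : m ≠ 0) {s : ℝ} (hs : s ∈ Ioc (0 : ℝ) 1) : 0 < emdenWeight m s :=
  rpow_pos_of_pos (sqRadius_pos hm hs) _

@[fun_prop]
theorem continuous_emdenWeight (m : ℕ) : Continuous (emdenWeight m) :=
  (continuous_sqRadius m).rpow_const fun _ => Or.inr (by unfold scalingExp; positivity)

theorem hasDerivAt_emdenWeight (hm : m ≠ 0) {s : ℝ} (hs : s ∈ Ioo (0 : ℝ) 1) :
    HasDerivAt (emdenWeight m) (emdenWeight m s * (1 - s) ^ (m - 1) / (2 * sqRadius m s)) s := by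
  have hx := sqRadius_pos hm (Ioo_subset_Ioc_self hs)
  refine ((hasDerivAt_sqRadius m s).rpow_const (p := scalingExp m / 2)
    (Or.inl hx.ne')).congr_deriv ?_
  rw [rpow_sub_one hx.ne', emdenWeight]
  field_simp
  linear_combination (1 - s) ^ (m - 1) * natCast_mul_scalingExp hm

variable {h : ℝ → ℝ} {c : ℝ} {U X : ℝ → ℝ}

theorem IsProfile.continuous_emdenProfile (hp : IsProfile m h c U X) :
    Continuous (emdenProfile m U) :=
  (continuous_emdenWeight m).mul hp.continuous_profile

theorem IsProfile.continuous_emdenFlux (hp : IsProfile m h c U X) :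
    Continuous (emdenFlux m U X) := by
  have hU := hp.continuous_profile
  have hX := hp.continuous_flux
  unfold emdenFlux
  fun_prop

theorem IsProfile.hasDerivAt_emdenProfile (hp : IsProfile m h c U X) (hm : 2 ≤ m) {s : ℝ}
    (hs : s ∈ Ioo (0 : ℝ) 1) :
    HasDerivAt (emdenProfile m U)
      (m / (2 * sqRadius m s) * (1 - s) ^ (m - 2) * emdenFlux m U X s) s := by
  have hm0 : m ≠ 0 := by lia
  have hx := sqRadius_pos hm0 (Ioo_subset_Ioc_self hs)
  refine ((hasDerivAt_emdenWeight hm0 hs).mul (hp.hasDerivAt_profile s hs)).congr_deriv ?_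
  have hα := natCast_mul_scalingExp hm0
  obtain ⟨k, rfl⟩ : ∃ k, m = k + 2 := ⟨m - 2, by lia⟩
  simp only [emdenFlux, Nat.add_sub_cancel, show k + 2 - 1 = k + 1 by lia]
  field_simp
  linear_combination -(1 - s) ^ (k + 1) * U s * emdenWeight (k + 2) s * hα

theorem IsProfile.hasDerivAt_emdenFlux (hp : IsProfile m (reaction m) c U X) (hm : 2 ≤ m) {s : ℝ}
    (hs : s ∈ Ioo (0 : ℝ) 1) :
    HasDerivAt (emdenFlux m U X)
      (m / (2 * sqRadius m s) * (emdenForce m (emdenProfile m U s) -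
        (1 - 2 * scalingExp m) * (1 - s) ^ (m - 1) * emdenFlux m U X s)) s := by
  have hm0 : m ≠ 0 := by lia
  have hx := sqRadius_pos hm0 (Ioo_subset_Ioc_self hs)
  refine ((hasDerivAt_emdenWeight hm0 hs).mul
    ((((hasDerivAt_sqRadius m s).const_mul 2).mul (hp.hasDerivAt_flux s hs)).add
      ((((hasDerivAt_id s).const_sub 1).const_mul (scalingExp m)).mul
        (hp.hasDerivAt_profile s hs)))).congr_deriv ?_
  have hpow := emdenWeight_pow hm0 (Ioo_subset_Icc_self hs)
  have hrad : (1 - s) ^ m = 1 - sqRadius m s := (sub_sub_cancel _ _).symm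
  simp only [emdenFlux, emdenForce, reaction, emdenProfile, mul_pow, pow_succ (emdenWeight m s),
    hpow, scalingExp, Pi.mul_apply, Pi.add_apply, id]
  obtain ⟨k, rfl⟩ : ∃ k, m = k + 2 := ⟨m - 2, by lia⟩
  simp only [Nat.add_sub_cancel, show k + 2 - 1 = k + 1 by lia] at hrad ⊢
  have hk : ((k + 2 : ℕ) : ℝ) ≠ 0 := by positivity
  generalize sqRadius (k + 2) s = x at *
  generalize ((k + 2 : ℕ) : ℝ) = M at *
  generalize 1 - s = τ at *
  field_simp
  linear_combination 4 * (M - 1) * U s * emdenWeight (k + 2) s * hrad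

end EmdenVariables

section InverseCoordinate

/-- The coordinate `s` as a function of the squared radius `x = ρ² ≤ 1`, inverse to `sqRadius m`. -/
noncomputable def ofSqRadius (m : ℕ) (x : ℝ) : ℝ := 1 - (1 - x) ^ scalingExp m

@[fun_prop]
theorem continuous_ofSqRadius (m : ℕ) : Continuous (ofSqRadius m) :=
  continuous_const.sub ((continuous_const.sub continuous_id).rpow_const fun _ =>
    Or.inr (by unfold scalingExp; positivity))

theorem ofSqRadius_zero (m : ℕ) : ofSqRadius m 0 = 0 := by
  simp [ofSqRadius]

variable {m : ℕ} {x : ℝ}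

theorem ofSqRadius_one (hm : m ≠ 0) : ofSqRadius m 1 = 1 := by
  simp [ofSqRadius, (scalingExp_pos hm).ne']

theorem one_sub_ofSqRadius_pow (hm : m ≠ 0) (hx : x ≤ 1) : (1 - ofSqRadius m x) ^ m = 1 - x := by
  rw [ofSqRadius, sub_sub_cancel, scalingExp, one_div, rpow_inv_natCast_pow (sub_nonneg.2 hx) hm]

theorem sqRadius_ofSqRadius (hm : m ≠ 0) (hx : x ≤ 1) : sqRadius m (ofSqRadius m x) = x := by
  rw [sqRadius, one_sub_ofSqRadius_pow hm hx, sub_sub_cancel]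

theorem ofSqRadius_sqRadius (hm : m ≠ 0) {s : ℝ} (hs : s ≤ 1) :
    ofSqRadius m (sqRadius m s) = s := by
  rw [ofSqRadius, sqRadius, sub_sub_cancel, scalingExp, one_div,
    pow_rpow_inv_natCast (sub_nonneg.2 hs) hm, sub_sub_cancel]

theorem ofSqRadius_mem_Ioo (hm : m ≠ 0) (hx : x ∈ Ioo (0 : ℝ) 1) :
    ofSqRadius m x ∈ Ioo (0 : ℝ) 1 :=
  ⟨sub_pos.2 (rpow_lt_one (sub_nonneg.2 hx.2.le) (sub_lt_self 1 hx.1) (scalingExp_pos hm)),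
    sub_lt_self 1 (rpow_pos_of_pos (sub_pos.2 hx.2) _)⟩

theorem strictMonoOn_ofSqRadius (hm : m ≠ 0) : StrictMonoOn (ofSqRadius m) (Iic 1) :=
  fun _ _ _ hy hxy => sub_lt_sub_left
    (rpow_lt_rpow (sub_nonneg.2 hy) (sub_lt_sub_left hxy 1) (scalingExp_pos hm)) 1

theorem hasDerivAt_ofSqRadius (hm : m ≠ 0) (hx : x < 1) :
    HasDerivAt (ofSqRadius m) (1 / (m * (1 - ofSqRadius m x) ^ (m - 1))) x := by
  have hpos : 0 < 1 - x := sub_pos.2 hx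
  have hs : 0 < 1 - ofSqRadius m x := by
    rw [ofSqRadius, sub_sub_cancel]
    exact rpow_pos_of_pos hpos _
  refine ((((hasDerivAt_id x).const_sub 1).rpow_const (p := scalingExp m)
    (Or.inl hpos.ne')).const_sub 1).congr_deriv ?_
  have hpow := one_sub_ofSqRadius_pow hm hx.le
  simp only [id]
  rw [rpow_sub_one hpos.ne', show (1 - x) ^ scalingExp m = 1 - ofSqRadius m x
    from (sub_sub_cancel _ _).symm, ← hpow, scalingExp]
  obtain ⟨k, rfl⟩ := Nat.exists_eq_succ_of_ne_zero hm
  simp only [Nat.succ_eq_add_one, Nat.add_sub_cancel]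
  field_simp
  ring

end InverseCoordinate

section LogRadius

theorem exp_two_mul_mem_Ioo {t : ℝ} (ht : t < 0) : exp (2 * t) ∈ Ioo (0 : ℝ) 1 :=
  ⟨exp_pos _, Real.exp_lt_one_iff.2 (by linarith)⟩

theorem one_sub_exp_two_mul_pos {t : ℝ} (ht : t < 0) : 0 < 1 - exp (2 * t) :=
  sub_pos.2 (exp_two_mul_mem_Ioo ht).2

theorem hasDerivAt_one_sub_exp_two_mul (t : ℝ) :
    HasDerivAt (fun t => 1 - exp (2 * t)) (-(2 * exp (2 * t))) t := by
  simpa [mul_comm] using (((hasDerivAt_id t).const_mul 2).exp).const_sub 1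

/-- The coordinate `s` as a function of `t = log ρ < 0`. -/
noncomputable def ofLogRadius (m : ℕ) (t : ℝ) : ℝ := ofSqRadius m (exp (2 * t))

variable {m : ℕ} {t : ℝ}

theorem one_sub_ofLogRadius_pow (hm : m ≠ 0) (ht : t < 0) :
    (1 - ofLogRadius m t) ^ m = 1 - exp (2 * t) :=
  one_sub_ofSqRadius_pow hm (exp_two_mul_mem_Ioo ht).2.le

theorem ofLogRadius_mem_Ioo (hm : m ≠ 0) (ht : t < 0) : ofLogRadius m t ∈ Ioo (0 : ℝ) 1 :=
  ofSqRadius_mem_Ioo hm (exp_two_mul_mem_Ioo ht)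

theorem sqRadius_ofLogRadius (hm : m ≠ 0) (ht : t < 0) :
    sqRadius m (ofLogRadius m t) = exp (2 * t) :=
  sqRadius_ofSqRadius hm (exp_two_mul_mem_Ioo ht).2.le

theorem emdenWeight_ofLogRadius (hm : m ≠ 0) (ht : t < 0) :
    emdenWeight m (ofLogRadius m t) = exp (scalingExp m * t) := by
  rw [emdenWeight, sqRadius_ofLogRadius hm ht, ← exp_mul]
  ring_nf

theorem strictMonoOn_ofLogRadius (hm : m ≠ 0) : StrictMonoOn (ofLogRadius m) (Iio 0) :=
  (strictMonoOn_ofSqRadius hm).comp (fun _ _ _ _ htt' => exp_lt_exp.2 (by linarith))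
    fun _ ht => (exp_two_mul_mem_Ioo ht).2.le

theorem hasDerivAt_ofLogRadius (hm : m ≠ 0) (ht : t < 0) :
    HasDerivAt (ofLogRadius m) (2 * exp (2 * t) / (m * (1 - ofLogRadius m t) ^ (m - 1))) t := by
  have hexp := ((hasDerivAt_id t).const_mul 2).exp
  refine ((hasDerivAt_ofSqRadius hm (exp_two_mul_mem_Ioo ht).2).comp t hexp).congr_deriv ?_
  simp only [ofLogRadius, id]
  ring

end LogRadius

section EmdenSolution

/-- A solution of the profile equation in the variables `w = ρ ^ α u`, `t = log ρ`, together with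
its velocity `V = dw/dt`, that decays as `ρ → 0`. -/
structure IsEmdenSolution (m : ℕ) (w V : ℝ → ℝ) : Prop where
  hasDerivAt : ∀ t < 0, HasDerivAt w (V t) t
  hasDerivAt_velocity : ∀ t < 0, HasDerivAt V
    ((emdenForce m (w t) - (1 - 2 * scalingExp m - exp (2 * t)) * V t) / (1 - exp (2 * t))) t
  tendsto_atBot : Tendsto w atBot (𝓝 0)
  tendsto_velocity_atBot : Tendsto V atBot (𝓝 0)

variable {m : ℕ} {c : ℝ} {U X : ℝ → ℝ}

theorem tendsto_exp_mul_atBot {a : ℝ} (ha : 0 < a) :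
    Tendsto (fun t => exp (a * t)) atBot (𝓝 0) :=
  tendsto_exp_atBot.comp (tendsto_id.const_mul_atBot ha)

theorem tendsto_ofLogRadius_atBot (m : ℕ) : Tendsto (ofLogRadius m) atBot (𝓝 0) := by
  have hlim := ((continuous_ofSqRadius m).tendsto 0).comp (tendsto_exp_mul_atBot two_pos)
  rwa [ofSqRadius_zero] at hlim

theorem emdenWeight_zero (hm : m ≠ 0) : emdenWeight m 0 = 0 := by
  rw [emdenWeight, sqRadius, sub_zero, one_pow, sub_self,
    zero_rpow (half_pos (scalingExp_pos hm)).ne']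

theorem IsProfile.tendsto_emdenProfile_atBot {h : ℝ → ℝ} (hp : IsProfile m h c U X) (hm : m ≠ 0) :
    Tendsto (fun t => emdenProfile m U (ofLogRadius m t)) atBot (𝓝 0) := by
  have hlim := (hp.continuous_emdenProfile.tendsto 0).comp (tendsto_ofLogRadius_atBot m)
  rwa [emdenProfile, emdenWeight_zero hm, zero_mul] at hlim

theorem IsProfile.tendsto_emdenFlux_atBot {h : ℝ → ℝ} (hp : IsProfile m h c U X) (hm : m ≠ 0) :
    Tendsto (fun t => emdenFlux m U X (ofLogRadius m t) / (1 - ofLogRadius m t)) atBot (𝓝 0) := by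
  have hs := tendsto_ofLogRadius_atBot m
  have hlim := ((hp.continuous_emdenFlux.tendsto 0).comp hs).div (hs.const_sub 1) (by norm_num)
  rwa [emdenFlux, emdenWeight_zero hm, zero_mul, zero_div] at hlim

theorem IsProfile.isEmdenSolution (hp : IsProfile m (reaction m) c U X) (hm : 2 ≤ m) :
    IsEmdenSolution m (fun t => emdenProfile m U (ofLogRadius m t))
      (fun t => emdenFlux m U X (ofLogRadius m t) / (1 - ofLogRadius m t)) := by
  have hm0 : m ≠ 0 := by lia
  refine ⟨fun t ht => ?_, fun t ht => ?_, hp.tendsto_emdenProfile_atBot hm0,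
    hp.tendsto_emdenFlux_atBot hm0⟩
  all_goals
    have hs := ofLogRadius_mem_Ioo hm0 ht
    have hds := hasDerivAt_ofLogRadius hm0 ht
    have hs1 : 0 < 1 - ofLogRadius m t := sub_pos.2 hs.2
    have hpow := one_sub_ofLogRadius_pow hm0 ht
  · refine ((hp.hasDerivAt_emdenProfile hm hs).comp t hds).congr_deriv ?_
    rw [sqRadius_ofLogRadius hm0 ht, show m - 1 = m - 2 + 1 by lia, pow_succ]
    field_simp
  · refine (((hp.hasDerivAt_emdenFlux hm hs).comp t hds).fun_div (hds.const_sub 1)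
      hs1.ne').congr_deriv ?_
    have hpow' : (1 - ofLogRadius m t) ^ (m - 1) * (1 - ofLogRadius m t) = 1 - exp (2 * t) := by
      rw [← pow_succ, Nat.sub_add_cancel (by lia), hpow]
    have hT := pow_pos hs1 (m - 1)
    simp only [sqRadius_ofLogRadius hm0 ht, ← hpow', Function.comp, scalingExp]
    generalize (1 - ofLogRadius m t) ^ (m - 1) = S at *
    generalize 1 - ofLogRadius m t = τ at *
    field_simp
    linear_combination -(emdenFlux m U X (ofLogRadius m t) * (m - 2)) * hpow'

end EmdenSolution

/-! ### Energy and oscillation in Emden variables -/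

section EmdenEnergy

variable {m : ℕ} {w V : ℝ → ℝ}

theorem scalingExp_le_half (hm : 2 ≤ m) : scalingExp m ≤ 1 / 2 :=
  one_div_le_one_div_of_le two_pos (by exact_mod_cast hm)

/-- The energy of `w = ρ ^ α u` with respect to `t = log ρ`. -/
noncomputable def emdenEnergy (m : ℕ) (w V : ℝ → ℝ) (t : ℝ) : ℝ :=
  (1 - exp (2 * t)) * V t ^ 2 / 2 + w t ^ (2 * m + 2) / (2 * m + 2) -
    scalingExp m * (1 - scalingExp m) * w t ^ 2 / 2

theorem IsEmdenSolution.hasDerivAt_emdenEnergy (h : IsEmdenSolution m w V) {t : ℝ} (ht : t < 0) :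
    HasDerivAt (emdenEnergy m w V) (-((1 - 2 * scalingExp m) * V t ^ 2)) t := by
  have hpos := one_sub_exp_two_mul_pos ht
  have hw := h.hasDerivAt t ht
  refine (((((hasDerivAt_one_sub_exp_two_mul t).mul
    ((h.hasDerivAt_velocity t ht).pow 2)).div_const 2).add
      ((hw.pow (2 * m + 2)).div_const (2 * m + 2))).sub
        (((hw.pow 2).const_mul (scalingExp m * (1 - scalingExp m))).div_const 2)).congr_deriv ?_
  simp only [show 2 * m + 2 - 1 = 2 * m + 1 by lia, Nat.add_one_sub_one, emdenForce, Pi.pow_apply]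
  push_cast
  field_simp
  ring

theorem IsEmdenSolution.antitoneOn_emdenEnergy (h : IsEmdenSolution m w V) (hm : 2 ≤ m) :
    AntitoneOn (emdenEnergy m w V) (Iio 0) := by
  refine antitoneOn_of_hasDerivWithinAt_nonpos (convex_Iio 0)
    (fun t ht => (h.hasDerivAt_emdenEnergy ht).continuousAt.continuousWithinAt)
    (fun t ht => (h.hasDerivAt_emdenEnergy (mem_Iio.1 (interior_subset ht))).hasDerivWithinAt)
    fun t _ => ?_
  exact neg_nonpos.2 (mul_nonneg (by linarith [scalingExp_le_half hm]) (sq_nonneg _))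

theorem IsEmdenSolution.tendsto_emdenEnergy_atBot (h : IsEmdenSolution m w V) :
    Tendsto (emdenEnergy m w V) atBot (𝓝 0) := by
  have hkin := (((tendsto_exp_mul_atBot two_pos).const_sub 1).mul
    (h.tendsto_velocity_atBot.pow 2)).div_const 2
  have hpot := ((h.tendsto_atBot.pow (2 * m + 2)).div_const (2 * m + 2 : ℝ)).sub
    (((h.tendsto_atBot.pow 2).const_mul (scalingExp m * (1 - scalingExp m))).div_const 2)
  have hlim := hkin.add hpot
  norm_num at hlim
  exact hlim.congr fun t => (add_sub_assoc _ _ _).symm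

theorem IsEmdenSolution.emdenEnergy_nonpos (h : IsEmdenSolution m w V) (hm : 2 ≤ m) {t : ℝ}
    (ht : t < 0) : emdenEnergy m w V t ≤ 0 := by
  refine ge_of_tendsto h.tendsto_emdenEnergy_atBot ?_
  filter_upwards [eventually_lt_atBot t] with r hr
  exact h.antitoneOn_emdenEnergy hm (mem_Iio.2 (hr.trans ht)) ht hr.le

theorem IsEmdenSolution.abs_le_one (h : IsEmdenSolution m w V) (hm : 2 ≤ m) {t : ℝ} (ht : t < 0) :
    |w t| ≤ 1 := by
  by_contra! hlt
  have henergy := h.emdenEnergy_nonpos hm ht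
  have hkin : 0 ≤ (1 - exp (2 * t)) * V t ^ 2 / 2 := by
    have := one_sub_exp_two_mul_pos ht
    positivity
  have hw : 1 < w t ^ 2 := (one_lt_sq_iff_one_lt_abs _).2 hlt
  have hcoef : scalingExp m * (1 - scalingExp m) / 2 < 1 / (2 * m + 2) := by
    have hdiff : 1 / (2 * m + 2) - 1 / m * (1 - 1 / m) / 2 = 1 / ((m : ℝ) ^ 2 * (2 * m + 2)) := by
      field_simp
      ring
    rw [← sub_pos, scalingExp, hdiff]
    positivity
  have hpow : w t ^ 2 / (2 * m + 2) ≤ w t ^ (2 * m + 2) / (2 * m + 2) := by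
    gcongr 1
    rw [pow_add, pow_mul]
    exact le_mul_of_one_le_left (sq_nonneg _) (one_le_pow₀ hw.le)
  have hstrict := mul_lt_mul_of_pos_right hcoef (zero_lt_one.trans hw)
  rw [emdenEnergy] at henergy
  linarith [show w t ^ 2 / (2 * m + 2 : ℝ) = 1 / (2 * m + 2) * w t ^ 2 by ring]

theorem IsEmdenSolution.emdenEnergy_le_of_add_le (h : IsEmdenSolution m w V) (hm : 2 ≤ m)
    {t₀ t₁ d : ℝ} (h01 : t₀ < t₁) (h1 : t₁ < 0) (hd0 : 0 ≤ d) (hd : w t₀ + d ≤ w t₁) :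
    emdenEnergy m w V t₁ ≤ -((1 - 2 * scalingExp m) * (d ^ 2 / (t₁ - t₀))) := by
  have hT : 0 < t₁ - t₀ := sub_pos.2 h01
  have hα : 0 ≤ 1 - 2 * scalingExp m := by linarith [scalingExp_le_half hm]
  -- By `V² ≥ 2 ε V - ε²`, the energy decreases at least as fast as a linear function of `w` and
  -- `t`; the mean slope is the optimal `ε`.
  set ε := d / (t₁ - t₀) with hε
  have hderiv {t : ℝ} (ht : t < 0) := (h.hasDerivAt_emdenEnergy ht).add
    ((((h.hasDerivAt t ht).const_mul (2 * ε)).sub ((hasDerivAt_id t).const_mul (ε ^ 2))).const_mul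
      (1 - 2 * scalingExp m))
  have hanti : AntitoneOn (emdenEnergy m w V +
      fun t => (1 - 2 * scalingExp m) * (2 * ε * w t - ε ^ 2 * t)) (Iio 0) := by
    refine antitoneOn_of_hasDerivWithinAt_nonpos (convex_Iio 0)
      (fun t ht => (hderiv ht).continuousAt.continuousWithinAt)
      (fun t ht => (hderiv (mem_Iio.1 (interior_subset ht))).hasDerivWithinAt) fun t _ => ?_
    linarith [mul_nonneg hα (sq_nonneg (V t - ε))]
  have hle := hanti (mem_Iio.2 (h01.trans h1)) (mem_Iio.2 h1) h01.le
  have hgain : (1 - 2 * scalingExp m) * (ε * d) ≤ (1 - 2 * scalingExp m) * (ε * (w t₁ - w t₀)) := by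
    gcongr
    linarith
  have hslope : d ^ 2 / (t₁ - t₀) = 2 * (ε * d) - ε ^ 2 * (t₁ - t₀) := by
    rw [hε]
    field_simp
    ring
  simp only [Pi.add_apply] at hle
  rw [hslope]
  linarith [h.emdenEnergy_nonpos hm (h01.trans h1)]

theorem IsEmdenSolution.le_of_emdenEnergy_le (h : IsEmdenSolution m w V) (hm : 2 ≤ m) {t₁ e δ : ℝ}
    (hδ : 0 < δ) (hδe : scalingExp m * (1 - scalingExp m) * δ ^ 2 / 2 ≤ e)
    (henergy : emdenEnergy m w V t₁ ≤ -e) (hw₁ : 0 < w t₁) {t : ℝ} (ht : t ∈ Ico t₁ 0) :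
    δ ≤ w t := by
  have hα : 0 < scalingExp m * (1 - scalingExp m) :=
    mul_pos (scalingExp_pos (by lia)) (by linarith [scalingExp_le_half hm])
  have hsq {r : ℝ} (hr : r ∈ Ico t₁ 0) : δ ^ 2 ≤ w r ^ 2 := by
    have hle := (h.antitoneOn_emdenEnergy hm (mem_Iio.2 (hr.1.trans_lt hr.2)) hr.2 hr.1).trans
      henergy
    have hpos := one_sub_exp_two_mul_pos hr.2
    have hpow : 0 ≤ w r ^ (2 * m + 2) := Even.pow_nonneg ⟨m + 1, by ring⟩ _
    have hrest : 0 ≤ (1 - exp (2 * r)) * V r ^ 2 / 2 + w r ^ (2 * m + 2) / (2 * m + 2) := by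
      positivity
    rw [emdenEnergy] at hle
    exact le_of_mul_le_mul_left (by linarith) hα
  have hpos : 0 < w t := by
    by_contra! hneg
    have hcont : ContinuousOn w (Icc t₁ t) := fun r hr =>
      (h.hasDerivAt r (hr.2.trans_lt ht.2)).continuousAt.continuousWithinAt
    obtain ⟨r, hr, hr0⟩ := intermediate_value_Icc' ht.1 hcont ⟨hneg, hw₁.le⟩
    have := hsq ⟨hr.1, hr.2.trans_lt ht.2⟩
    rw [hr0] at this
    exact (pow_pos hδ 2).not_ge (by simpa using this)
  exact (sq_le_sq₀ hδ.le hpos.le).1 (hsq ht)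

theorem exists_pos_forall_isEmdenSolution_le (hm : 3 ≤ m) {d T : ℝ} (hd : 0 < d) (hT : 0 < T) :
    ∃ δ > 0, ∀ w V : ℝ → ℝ, IsEmdenSolution m w V → ∀ t₁, 0 < w t₁ → w (t₁ - T) + d ≤ w t₁ →
      ∀ t ∈ Ico t₁ 0, δ ≤ w t := by
  have hm2 : 2 ≤ m := by lia
  have hα : scalingExp m ≤ 1 / 3 := one_div_le_one_div_of_le three_pos (by exact_mod_cast hm)
  have hA : 0 < scalingExp m * (1 - scalingExp m) :=
    mul_pos (scalingExp_pos (by lia)) (by linarith)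
  set e := (1 - 2 * scalingExp m) * (d ^ 2 / T) with he
  have he0 : 0 < e := mul_pos (by linarith) (by positivity)
  refine ⟨√(2 * e / (scalingExp m * (1 - scalingExp m))), by positivity,
    fun w V h t₁ hw₁ hdw t ht => h.le_of_emdenEnergy_le hm2 (e := e) (by positivity) ?_ ?_ hw₁ ht⟩
  · rw [sq_sqrt (by positivity), mul_div_cancel₀ _ hA.ne']
    linarith
  · simpa [he] using
      h.emdenEnergy_le_of_add_le hm2 (sub_lt_self t₁ hT) (ht.1.trans_lt ht.2) hd.le hdw

end EmdenEnergy

section Oscillation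

variable {m : ℕ}

theorem bInfty_pos (hm : 2 ≤ m) : 0 < bInfty (2 * m + 1) := by
  have hm' : (2 : ℝ) ≤ m := by exact_mod_cast hm
  simp only [bInfty]
  push_cast
  exact rpow_pos_of_pos (div_pos (by linarith) (pow_pos (by linarith) 2)) _

theorem bInfty_pow (hm : m ≠ 0) :
    bInfty (2 * m + 1) ^ (2 * m) = scalingExp m * (1 - scalingExp m) := by
  have hm' : (1 : ℝ) ≤ m := by exact_mod_cast Nat.one_le_iff_ne_zero.2 hm
  have hbase : 0 ≤ 2 * (2 * (m : ℝ) + 1 - 3) / (2 * m) ^ 2 :=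
    div_nonneg (by linarith) (by positivity)
  simp only [bInfty, scalingExp]
  push_cast
  rw [add_sub_cancel_right, ← rpow_natCast, ← rpow_mul hbase]
  push_cast
  rw [one_div_mul_cancel (by positivity), rpow_one]
  field_simp
  ring

theorem bInfty_le_one (hm : 2 ≤ m) : bInfty (2 * m + 1) ≤ 1 := by
  refine (pow_le_one_iff_of_nonneg (bInfty_pos hm).le (by lia : 2 * m ≠ 0)).1 ?_
  rw [bInfty_pow (by lia)]
  nlinarith [sq_nonneg (scalingExp m - 1)]

/-- The difference quotient `-f(w) / (w - b∞)` of the Emden force `f` at its zero `b∞`. -/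
noncomputable def emdenStiffness (m : ℕ) (w : ℝ) : ℝ :=
  w * ∑ i ∈ Finset.range (2 * m), w ^ i * bInfty (2 * m + 1) ^ (2 * m - 1 - i)

@[fun_prop]
theorem continuous_emdenStiffness (m : ℕ) : Continuous (emdenStiffness m) := by
  unfold emdenStiffness
  fun_prop

theorem emdenForce_eq_neg_mul (hm : m ≠ 0) (w : ℝ) :
    emdenForce m w = -(emdenStiffness m w * (w - bInfty (2 * m + 1))) := by
  rw [emdenStiffness, mul_assoc, (Commute.all w _).geom_sum₂_mul, bInfty_pow hm, emdenForce]
  ring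

theorem emdenStiffness_bInfty (hm : m ≠ 0) :
    emdenStiffness m (bInfty (2 * m + 1)) = 2 * (1 - scalingExp m) := by
  rw [emdenStiffness, geom_sum₂_self, mul_left_comm, ← pow_succ', Nat.sub_add_cancel (by lia),
    bInfty_pow hm]
  push_cast
  linear_combination 2 * (1 - scalingExp m) * natCast_mul_scalingExp hm

theorem emdenStiffness_le_emdenStiffness (hm : 2 ≤ m) {v w : ℝ} (hv : 0 ≤ v) (hvw : v ≤ w) :
    emdenStiffness m v ≤ emdenStiffness m w := by
  have hb := bInfty_pos hm
  have hw : 0 ≤ w := hv.trans hvw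
  unfold emdenStiffness
  gcongr

theorem emdenStiffness_pos (hm : 2 ≤ m) {w : ℝ} (hw : 0 < w) : 0 < emdenStiffness m w := by
  have hb := bInfty_pos hm
  exact mul_pos hw (Finset.sum_pos (fun _ _ => by positivity) ⟨0, Finset.mem_range.2 (by lia)⟩)

theorem exists_pos_forall_one_le_emdenStiffness (hm : 3 ≤ m) :
    ∃ η > 0, ∀ w, -η ≤ w - bInfty (2 * m + 1) → 1 ≤ emdenStiffness m w := by
  have hα : scalingExp m ≤ 1 / 3 := one_div_le_one_div_of_le three_pos (by exact_mod_cast hm)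
  have hb := bInfty_pos (m := m) (by lia)
  have hone : 1 < emdenStiffness m (bInfty (2 * m + 1)) := by
    rw [emdenStiffness_bInfty (by lia)]
    linarith
  have hnear := ((continuous_emdenStiffness m).tendsto _).eventually_const_le hone
  obtain ⟨v, hv, hv0, hvb⟩ :=
    ((hnear.filter_mono nhdsWithin_le_nhds).and (Ioo_mem_nhdsLT hb)).exists
  exact ⟨bInfty (2 * m + 1) - v, sub_pos.2 hvb, fun w hw =>
    hv.trans (emdenStiffness_le_emdenStiffness (by lia) hv0.le (by linarith))⟩

theorem exists_length_forall_isEmdenSolution_eq_bInfty (hm : 3 ≤ m) {δ : ℝ} (hδ : 0 < δ) :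
    ∃ L > 0, ∀ w V : ℝ → ℝ, IsEmdenSolution m w V → ∀ a, a + L ≤ -1 →
      (∀ t ∈ Icc a (a + L), δ ≤ w t) → ∃ t ∈ Icc a (a + L), w t = bInfty (2 * m + 1) := by
  have hm2 : 2 ≤ m := by lia
  have hα : scalingExp m ≤ 1 / 3 := one_div_le_one_div_of_le three_pos (by exact_mod_cast hm)
  have hα0 := scalingExp_pos (m := m) (by lia)
  obtain ⟨η, hη, hstiff⟩ := exists_pos_forall_one_le_emdenStiffness hm
  obtain ⟨L, hL, hosc⟩ := IsDampedOscillator.exists_length_forall_exists_eq_zero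
    (emdenStiffness_pos hm2 hδ) hη
  refine ⟨L, hL, fun w V h a ha hw => ?_⟩
  have hneg {t : ℝ} (ht : t ∈ Icc a (a + L)) : t < 0 := by linarith [ht.2]
  have hexp {t : ℝ} (ht : t ∈ Icc a (a + L)) : exp (2 * t) ≤ 1 / 3 := by
    calc exp (2 * t) ≤ exp (-2) := exp_le_exp.2 (by linarith [ht.2])
      _ ≤ 1 / 3 := by
        rw [exp_neg, ← one_div]
        exact one_div_le_one_div_of_le three_pos (by linarith [add_one_le_exp (2 : ℝ)])
  have hle {t : ℝ} (ht : t ∈ Icc a (a + L)) :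
      emdenStiffness m (w t) ≤ emdenStiffness m (w t) / (1 - exp (2 * t)) :=
    le_div_self (emdenStiffness_pos hm2 (hδ.trans_le (hw t ht))).le
      (one_sub_exp_two_mul_pos (hneg ht)) (sub_le_self 1 (exp_pos _).le)
  have hdamped : IsDampedOscillator (fun t => w t - bInfty (2 * m + 1)) V
      (fun t => (1 - 2 * scalingExp m - exp (2 * t)) / (1 - exp (2 * t)))
      (fun t => emdenStiffness m (w t) / (1 - exp (2 * t))) (Icc a (a + L)) := by
    refine ⟨fun t ht => (h.hasDerivAt t (hneg ht)).sub_const _, fun t ht => ?_, fun t ht => ?_⟩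
    · refine (h.hasDerivAt_velocity t (hneg ht)).congr_deriv ?_
      rw [emdenForce_eq_neg_mul (by lia)]
      ring
    · have hpos := one_sub_exp_two_mul_pos (hneg ht)
      exact ⟨div_nonneg (by linarith [hexp ht]) hpos.le, (div_le_one hpos).2 (by linarith)⟩
  obtain ⟨t, ht, hzero⟩ := hosc a _ _ _ _ hdamped
    (fun t ht => (emdenStiffness_le_emdenStiffness hm2 hδ.le (hw t ht)).trans (hle ht))
    (fun t ht hηt => (hstiff _ hηt).trans (hle ht)) fun t ht => by
      rw [abs_le]
      have := (abs_le.1 (h.abs_le_one hm2 (hneg ht))).2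
      constructor <;> linarith [bInfty_le_one hm2, bInfty_pos hm2, hw t ht]
  exact ⟨t, ht, sub_eq_zero.1 hzero⟩

end Oscillation

/-! ### Many crossings for large centre values -/

section ManyCrossings

theorem le_encard_of_forall_exists_mem_Icc {S : Set ℝ} {a L : ℝ} (n : ℕ)
    (hS : ∀ i < n, ∃ t ∈ Icc (a + i * (L + 1)) (a + i * (L + 1) + L), t ∈ S) :
    (n : ℕ∞) ≤ S.encard := by
  choose t ht htS using fun i : Fin n => hS i i.2
  have hmono : StrictMono t := by
    intro i j hij
    have hij' : ((i : ℕ) : ℝ) + 1 ≤ (j : ℕ) := by exact_mod_cast hij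
    have hL : 0 ≤ L := by linarith [(ht i).1, (ht i).2]
    have := mul_le_mul_of_nonneg_right hij' (by linarith : 0 ≤ L + 1)
    linarith [(ht i).2, (ht j).1]
  calc (n : ℕ∞) = (univ : Set (Fin n)).encard := by simp
    _ = (t '' univ).encard := (hmono.injective.encard_image _).symm
    _ ≤ S.encard := encard_le_encard (image_subset_iff.2 fun i _ => htS i)

variable {m : ℕ} {c : ℝ} {U X : ℝ → ℝ}

theorem IsProfile.sub_mul_le_profile {h : ℝ → ℝ} (hp : IsProfile m h c U X) {K : ℝ}
    (hK : ∀ s ∈ Icc (0 : ℝ) 1, |X s| ≤ K) {s : ℝ} (hs : s ∈ Icc (0 : ℝ) 1) :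
    c - m * K * s ≤ U s := by
  rcases hs.1.eq_or_lt with rfl | hs0
  · simp [hp.profile_zero]
  obtain ⟨r, hr, hslope⟩ := exists_hasDerivAt_eq_slope U _ hs0
    hp.continuous_profile.continuousOn
    fun r hr => hp.hasDerivAt_profile r ⟨hr.1, hr.2.trans_le hs.2⟩
  have hr1 : r < 1 := hr.2.trans_le hs.2
  have hr0 : 0 ≤ 1 - r := sub_nonneg.2 hr1.le
  have habs : |m * (1 - r) ^ (m - 2) * X r| ≤ m * 1 * K := by
    rw [abs_mul, abs_of_nonneg (by positivity)]
    gcongr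
    · exact pow_le_one₀ hr0 (sub_le_self 1 hr.1.le)
    · exact hK r ⟨hr.1.le, hr1.le⟩
  rw [hp.profile_zero, sub_zero, eq_div_iff hs0.ne'] at hslope
  linarith [mul_le_mul_of_nonneg_right (neg_le_of_abs_le habs) hs0.le]

theorem IsProfile.emdenProfile_ofLogRadius_le (hp : IsProfile m (reaction m) c U X) (hm : 3 ≤ m)
    (hc : bZero (2 * m + 1) ≤ c) {t : ℝ} (ht : t < 0) :
    emdenProfile m U (ofLogRadius m t) ≤ exp (scalingExp m * t) * c := by
  have hm0 : m ≠ 0 := by lia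
  rw [emdenProfile, emdenWeight_ofLogRadius hm0 ht]
  gcongr
  exact (le_abs_self _).trans (hp.abs_profile_le_of_reaction hm hc
    (Ioo_subset_Icc_self (ofLogRadius_mem_Ioo hm0 ht)))

theorem IsProfile.le_emdenProfile_ofLogRadius (hp : IsProfile m (reaction m) c U X) (hm : 3 ≤ m)
    (hc : bZero (2 * m + 1) ≤ c) {q t : ℝ} (hq : m * (m / 4 * √m * 2) * q ^ (2 * m) ≤ 1 / 4)
    (ht : t < 0) (hqt : exp (scalingExp m * t) * c = q) :
    3 / 4 * q ≤ emdenProfile m U (ofLogRadius m t) := by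
  have hm0 : m ≠ 0 := by lia
  have hc0 : 0 < c := (bZero_pos hm0).trans_le hc
  have hs := Ioo_subset_Icc_self (ofLogRadius_mem_Ioo hm0 ht)
  have hs_le : ofLogRadius m t * c ^ (2 * m) ≤ q ^ (2 * m) := by
    rw [← hqt, mul_pow, ← exp_nat_mul]
    gcongr
    calc ofLogRadius m t ≤ exp (2 * t) :=
          (le_sqRadius hm0 hs).trans_eq (sqRadius_ofLogRadius hm0 ht)
      _ = _ := by
        push_cast
        rw [show (2 * m : ℝ) * (scalingExp m * t) = 2 * (m * scalingExp m) * t by ring,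
          natCast_mul_scalingExp hm0, mul_one]
  have hU : 3 / 4 * c ≤ U (ofLogRadius m t) := by
    have hloss : m * (m / 4 * √m * (2 * c ^ (2 * m + 1))) * ofLogRadius m t ≤ c * (1 / 4) :=
      calc _ = c * (m * (m / 4 * √m * 2) * (ofLogRadius m t * c ^ (2 * m))) := by ring
        _ ≤ c * (m * (m / 4 * √m * 2) * q ^ (2 * m)) := by gcongr
        _ ≤ c * (1 / 4) := by gcongr
    linarith [hp.sub_mul_le_profile (fun _ => hp.abs_flux_le_of_reaction hm hc) hs]
  calc 3 / 4 * q = exp (scalingExp m * t) * (3 / 4 * c) := by rw [← hqt]; ring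
    _ ≤ _ := by
      rw [emdenProfile, emdenWeight_ofLogRadius hm0 ht]
      gcongr

theorem exists_pos_mul_pow_le (K : ℝ) {ε : ℝ} (hε : 0 < ε) {n : ℕ} (hn : n ≠ 0) :
    ∃ q > 0, K * q ^ n ≤ ε := by
  have hlim : Tendsto (fun q : ℝ => K * q ^ n) (𝓝 0) (𝓝 0) := by
    have hcont : Continuous fun q : ℝ => K * q ^ n := by fun_prop
    simpa [hn] using hcont.tendsto 0
  obtain ⟨q, hq, hq0⟩ := (((hlim.eventually_le_const hε).filter_mono nhdsWithin_le_nhds).and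
    (self_mem_nhdsWithin (s := Ioi 0))).exists
  exact ⟨q, hq0, hq⟩

-- The start of the oscillatory regime is the radius at which `ρ ^ α c` equals the fixed size `q`;
-- it tends to `0` as `c → ∞`.
theorem exists_pos_forall_isProfile_le (hm : 3 ≤ m) :
    ∃ q > 0, ∃ δ > 0, ∀ c U X t₁, IsProfile m (reaction m) c U X → bZero (2 * m + 1) ≤ c →
      exp (scalingExp m * t₁) * c = q → ∀ t ∈ Ico t₁ 0, δ ≤ emdenProfile m U (ofLogRadius m t) := by
  have hm0 : m ≠ 0 := by lia
  obtain ⟨q, hq, hKq⟩ := exists_pos_mul_pow_le (m * (m / 4 * √m * 2)) (ε := 1 / 4) (by norm_num)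
    (by lia : 2 * m ≠ 0)
  have hT : 0 < m * log 2 := by positivity
  obtain ⟨δ, hδ, hlower⟩ := exists_pos_forall_isEmdenSolution_le hm (d := q / 4) (by positivity) hT
  refine ⟨q, hq, δ, hδ, fun c U X t₁ hp hc hqt t ht => ?_⟩
  have ht₁ : t₁ < 0 := ht.1.trans_lt ht.2
  have hlarge := hp.le_emdenProfile_ofLogRadius hm hc hKq ht₁ hqt
  have hsmall : emdenProfile m U (ofLogRadius m (t₁ - m * log 2)) ≤ q / 2 := by
    refine (hp.emdenProfile_ofLogRadius_le hm hc (by linarith)).trans_eq ?_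
    rw [mul_sub, exp_sub, ← mul_assoc, mul_comm _ (m : ℝ), natCast_mul_scalingExp hm0, one_mul,
      exp_log two_pos, ← hqt]
    ring
  exact hlower _ _ (hp.isEmdenSolution (by lia)) t₁ (by linarith) (by linarith) t ht

theorem exists_forall_isProfile_le_encard (hm : 3 ≤ m) (n : ℕ) :
    ∃ C, ∀ c ≥ C, ∀ U X, IsProfile m (reaction m) c U X →
      n ≤ {s ∈ Ioo (0 : ℝ) 1 | emdenProfile m U s = bInfty (2 * m + 1)}.encard := by
  have hm0 : m ≠ 0 := by lia
  have hα := scalingExp_pos hm0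
  obtain ⟨q, hq, δ, hδ, hlower⟩ := exists_pos_forall_isProfile_le hm
  obtain ⟨L, hL, hosc⟩ := exists_length_forall_isEmdenSolution_eq_bInfty hm hδ
  refine ⟨max (bZero (2 * m + 1)) (q * exp (scalingExp m * (1 + n * (L + 1)))),
    fun c hc U X hp => ?_⟩
  have hcb := (le_max_left _ _).trans hc
  have hc0 : 0 < c := (bZero_pos hm0).trans_le hcb
  obtain ⟨t₁, hqt⟩ : ∃ t₁, exp (scalingExp m * t₁) * c = q :=
    ⟨log (q / c) / scalingExp m, by
      rw [mul_div_cancel₀ _ hα.ne', exp_log (by positivity), div_mul_cancel₀ _ hc0.ne']⟩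
  have ht₁ : t₁ + n * (L + 1) ≤ -1 := by
    have hexp : exp (scalingExp m * (t₁ + (1 + n * (L + 1)))) * c ≤ c := by
      rw [mul_add, exp_add, mul_right_comm, hqt]
      exact (le_max_right _ _).trans hc
    have hnonpos := exp_le_one_iff.1 (le_of_mul_le_mul_right (by rwa [one_mul]) hc0)
    linarith [nonpos_of_mul_nonpos_right hnonpos hα]
  have hcross : (n : ℕ∞) ≤
      {t ∈ Iio 0 | emdenProfile m U (ofLogRadius m t) = bInfty (2 * m + 1)}.encard := by
    refine le_encard_of_forall_exists_mem_Icc (a := t₁) (L := L) n fun i hi => ?_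
    have hi' : (i : ℝ) + 1 ≤ n := by exact_mod_cast hi
    have hend := mul_le_mul_of_nonneg_right hi' (by linarith : 0 ≤ L + 1)
    have hi0 : 0 ≤ (i : ℝ) * (L + 1) := by positivity
    obtain ⟨t, ht, htb⟩ := hosc _ _ (hp.isEmdenSolution (by lia)) (t₁ + i * (L + 1))
      (by linarith) fun t ht => hlower c U X t₁ hp hcb hqt t
        ⟨by linarith [ht.1], by linarith [ht.2]⟩
    exact ⟨t, ht, mem_Iio.2 (by linarith [ht.2]), htb⟩
  calc (n : ℕ∞) ≤ _ := hcross
    _ = _ := (((strictMonoOn_ofLogRadius hm0).injOn.mono (sep_subset _ _)).encard_image).symm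
    _ ≤ _ := encard_le_encard <| by
      rintro _ ⟨t, ⟨ht, htb⟩, rfl⟩
      exact ⟨ofLogRadius_mem_Ioo hm0 ht, htb⟩

end ManyCrossings

/-! ### Shooting -/

section LinearSystem

variable {a b : ℝ}

theorem pos_of_neg_mul_le_deriv {D D' : ℝ → ℝ} {K : ℝ} (hD : ContinuousOn D (Icc a b))
    (hD' : ∀ s ∈ Ioo a b, HasDerivAt D (D' s) s) (hK : ∀ s ∈ Ioo a b, -(K * D s) ≤ D' s)
    (ha : 0 < D a) {s : ℝ} (hs : s ∈ Icc a b) : 0 < D s := by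
  have hderiv : ∀ y ∈ Ioo a b, HasDerivAt (fun y => D y * exp (K * y))
      ((D' y + K * D y) * exp (K * y)) y := fun y hy =>
    ((hD' y hy).fun_mul ((hasDerivAt_id y).const_mul K).exp).congr_deriv (by simp only [id]; ring)
  have hmono : MonotoneOn (fun y => D y * exp (K * y)) (Icc a b) := by
    refine monotoneOn_of_hasDerivWithinAt_nonneg (convex_Icc a b) (by fun_prop)
      (f' := fun y => (D' y + K * D y) * exp (K * y)) ?_ ?_ <;> rw [interior_Icc]
    · exact fun y hy => (hderiv y hy).hasDerivWithinAt
    · exact fun y hy => mul_nonneg (by linarith [hK y hy]) (exp_pos _).le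
  have hle := hmono (left_mem_Icc.2 (hs.1.trans hs.2)) hs hs.1
  exact pos_of_mul_pos_left ((mul_pos ha (exp_pos _)).trans_le hle) (exp_pos _).le

theorem sq_add_sq_pos_of_linear_system {v z p q r : ℝ → ℝ} (hv : ContinuousOn v (Icc a b))
    (hz : ContinuousOn z (Icc a b)) (hp : ContinuousOn p (Icc a b)) (hq : ContinuousOn q (Icc a b))
    (hr : ContinuousOn r (Icc a b)) (hv' : ∀ s ∈ Ioo a b, HasDerivAt v (p s * z s) s)
    (hz' : ∀ s ∈ Ioo a b, HasDerivAt z (q s * v s + r s * z s) s)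
    (ha : 0 < v a ^ 2 + z a ^ 2) {s : ℝ} (hs : s ∈ Icc a b) : 0 < v s ^ 2 + z s ^ 2 := by
  obtain ⟨K, hK⟩ := isCompact_Icc.exists_bound_of_continuousOn (hp.add hq)
  obtain ⟨L, hL⟩ := isCompact_Icc.exists_bound_of_continuousOn hr
  refine pos_of_neg_mul_le_deriv (K := K + 2 * L)
    (D := fun s => v s ^ 2 + z s ^ 2)
    (D' := fun s => 2 * (p s + q s) * (v s * z s) + 2 * r s * z s ^ 2)
    ((hv.pow 2).add (hz.pow 2)) (fun y hy => ?_) (fun y hy => ?_) ha hs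
  · exact (((hv' y hy).fun_pow 2).fun_add ((hz' y hy).fun_pow 2)).congr_deriv (by push_cast; ring)
  · have hKy := abs_le.1 (hK y (Ioo_subset_Icc_self hy))
    have hLy := abs_le.1 (hL y (Ioo_subset_Icc_self hy))
    simp only [Pi.add_apply] at hKy
    nlinarith [mul_nonneg (sub_nonneg.2 hKy.2) (sq_nonneg (v y - z y)),
      mul_nonneg (neg_le_iff_add_nonneg.1 hKy.1) (sq_nonneg (v y + z y)),
      mul_nonneg (neg_le_iff_add_nonneg.1 hLy.1) (sq_nonneg (z y)),
      mul_nonneg ((abs_nonneg _).trans (hL y (Ioo_subset_Icc_self hy))) (sq_nonneg (v y))]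

end LinearSystem

section Shooting

variable {m : ℕ} {a c : ℝ} {U X : ℝ → ℝ}

theorem IsProfile.sq_add_sq_emdenFlux_pos (hp : IsProfile m (reaction m) c U X) (hm : 2 ≤ m)
    (ha : a ∈ Ioc (0 : ℝ) 1) (hWa : emdenProfile m U a ≠ bInfty (2 * m + 1)) {s : ℝ}
    (hs : s ∈ Icc a 1) :
    0 < (emdenProfile m U s - bInfty (2 * m + 1)) ^ 2 + emdenFlux m U X s ^ 2 := by
  have hW := hp.continuous_emdenProfile
  have hx : ∀ y ∈ Icc a 1, 2 * sqRadius m y ≠ 0 := fun y hy =>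
    (mul_pos two_pos (sqRadius_pos (by lia) ⟨ha.1.trans_le hy.1, hy.2⟩)).ne'
  refine sq_add_sq_pos_of_linear_system (v := fun y => emdenProfile m U y - bInfty (2 * m + 1))
    (p := fun y => m / (2 * sqRadius m y) * (1 - y) ^ (m - 2))
    (q := fun y => -(m / (2 * sqRadius m y) * emdenStiffness m (emdenProfile m U y)))
    (r := fun y => -(m / (2 * sqRadius m y) * ((1 - 2 * scalingExp m) * (1 - y) ^ (m - 1))))
    (by fun_prop) hp.continuous_emdenFlux.continuousOn (by fun_prop (disch := exact hx))
    (by fun_prop (disch := exact hx)) (by fun_prop (disch := exact hx)) (fun y hy => ?_)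
    (fun y hy => ?_) ?_ hs
  · exact (hp.hasDerivAt_emdenProfile hm ⟨ha.1.trans hy.1, hy.2⟩).sub_const _
  · refine (hp.hasDerivAt_emdenFlux hm ⟨ha.1.trans hy.1, hy.2⟩).congr_deriv ?_
    rw [emdenForce_eq_neg_mul (by lia)]
    ring
  · have := sub_ne_zero.2 hWa
    positivity

theorem exists_forall_emdenWeight_mul_lt (hm : m ≠ 0) {b : ℝ} (hb : 0 < b) (M : ℝ) :
    ∃ a ∈ Ioo (0 : ℝ) 1, ∀ s ∈ Icc 0 a, emdenWeight m s * M < b := by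
  have hev : ∀ᶠ s in 𝓝 0, emdenWeight m s * M < b :=
    ((continuous_emdenWeight m).mul continuous_const).tendsto 0 |>.eventually_lt_const
      (by simpa [emdenWeight_zero hm])
  obtain ⟨ε, hε, hball⟩ := Metric.eventually_nhds_iff.1 hev
  obtain ⟨a, ha0, haε⟩ := exists_between (lt_min hε one_pos)
  refine ⟨a, ⟨ha0, haε.trans_le (min_le_right _ _)⟩, fun s hs => hball ?_⟩
  rw [dist_zero_right, norm_of_nonneg hs.1]
  exact hs.2.trans_lt (haε.trans_le (min_le_left _ _))

theorem IsProfile.emdenProfile_lt (hp : IsProfile m (reaction m) c U X) (hm : 3 ≤ m) {b M : ℝ}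
    (hc : c ∈ Icc (bZero (2 * m + 1)) M) {s : ℝ} (hs : s ∈ Ioc (0 : ℝ) 1)
    (hM : emdenWeight m s * M < b) : emdenProfile m U s < b := by
  have hU := hp.abs_profile_le_of_reaction hm hc.1 (Ioc_subset_Icc_self hs)
  exact (mul_le_mul_of_nonneg_left ((le_abs_self _).trans (hU.trans hc.2))
    (emdenWeight_pos (by lia) hs).le).trans_lt hM

variable {Γ : Type*} [TopologicalSpace Γ] {C : Γ → ℝ} {U X : Γ → ℝ → ℝ}

theorem isPruferFamily_emden (hm : 2 ≤ m) (hp : ∀ γ, IsProfile m (reaction m) (C γ) (U γ) (X γ))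
    (hU : Continuous fun y : Γ × ℝ => U y.1 y.2) (hX : Continuous fun y : Γ × ℝ => X y.1 y.2)
    (ha : a ∈ Ioc (0 : ℝ) 1) (hWa : ∀ γ, emdenProfile m (U γ) a ≠ bInfty (2 * m + 1)) :
    IsPruferFamily (fun γ s => emdenProfile m (U γ) s - bInfty (2 * m + 1))
      (fun γ => emdenFlux m (U γ) (X γ))
      (fun γ s => m / (2 * sqRadius m s) * (1 - s) ^ (m - 2) * emdenFlux m (U γ) (X γ) s)
      (fun γ s => m / (2 * sqRadius m s) * (emdenForce m (emdenProfile m (U γ) s) -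
        (1 - 2 * scalingExp m) * (1 - s) ^ (m - 1) * emdenFlux m (U γ) (X γ) s)) a 1 := by
  have hIoo : ∀ {s}, s ∈ Ioo a 1 → s ∈ Ioo (0 : ℝ) 1 := fun hs => ⟨ha.1.trans hs.1, hs.2⟩
  have hx : ∀ y ∈ (univ : Set Γ) ×ˢ Icc a 1, 2 * sqRadius m y.2 ≠ 0 := fun y hy =>
    (mul_pos two_pos (sqRadius_pos (by lia) ⟨ha.1.trans_le hy.2.1, hy.2.2⟩)).ne'
  have hW : Continuous fun y : Γ × ℝ => emdenProfile m (U y.1) y.2 := by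
    unfold emdenProfile
    fun_prop
  have hZ : Continuous fun y : Γ × ℝ => emdenFlux m (U y.1) (X y.1) y.2 := by
    unfold emdenFlux
    fun_prop
  have hpos : ∀ γ, ∀ s ∈ Icc a 1, 0 < (emdenProfile m (U γ) s - bInfty (2 * m + 1)) ^ 2 +
      emdenFlux m (U γ) (X γ) s ^ 2 := fun γ _ => (hp γ).sq_add_sq_emdenFlux_pos hm ha (hWa γ)
  have hcoef : ContinuousOn (fun y : Γ × ℝ => m / (2 * sqRadius m y.2)) (univ ×ˢ Icc a 1) :=
    continuousOn_const.div (by fun_prop) hx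
  refine ⟨(hW.sub continuous_const).continuousOn, hZ.continuousOn,
    (hcoef.mul (by fun_prop)).mul hZ.continuousOn, hcoef.mul ?_,
    fun γ s hs => ((hp γ).hasDerivAt_emdenProfile hm (hIoo hs)).sub_const _,
    fun γ s hs => (hp γ).hasDerivAt_emdenFlux hm (hIoo hs), hpos,
    fun γ => sub_ne_zero.2 (hWa γ), fun γ s hs hv => ?_⟩
  · unfold emdenForce
    exact Continuous.continuousOn (by fun_prop)
  · have hZs : 0 < emdenFlux m (U γ) (X γ) s ^ 2 := by
      simpa [hv] using hpos γ s (Ioo_subset_Icc_self hs)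
    have hxs := sqRadius_pos (m := m) (by lia) (Ioo_subset_Ioc_self (hIoo hs))
    have hs1 : 0 < 1 - s := sub_pos.2 hs.2
    rw [mul_assoc, ← sq]
    positivity

theorem emdenFlux_one (hm : m ≠ 0) (U X : ℝ → ℝ) : emdenFlux m U X 1 = 2 * X 1 := by
  simp [emdenFlux, emdenWeight, sqRadius, hm]

theorem exists_encard_emdenProfile_eq [PreconnectedSpace Γ] (hm : 3 ≤ m) {M : ℝ}
    (hp : ∀ γ, IsProfile m (reaction m) (C γ) (U γ) (X γ))
    (hC : ∀ γ, C γ ∈ Icc (bZero (2 * m + 1)) M)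
    (hU : Continuous fun y : Γ × ℝ => U y.1 y.2) (hX : Continuous fun y : Γ × ℝ => X y.1 y.2)
    {n : ℕ} {γ₀ γ₁ : Γ} (h₀ : ∀ s ∈ Ioo (0 : ℝ) 1, emdenFlux m (U γ₀) (X γ₀) s ≠ 0)
    (h₁ : (n + 1 : ℕ) <
      {s ∈ Ioo (0 : ℝ) 1 | emdenProfile m (U γ₁) s = bInfty (2 * m + 1)}.encard) :
    ∃ γ, X γ 1 = 0 ∧
      {s ∈ Ioo (0 : ℝ) 1 | emdenProfile m (U γ) s = bInfty (2 * m + 1)}.encard = (n + 1 : ℕ∞) := by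
  obtain ⟨a, ha, hsmall⟩ :=
    exists_forall_emdenWeight_mul_lt (m := m) (by lia) (bInfty_pos (m := m) (by lia)) M
  have hlt : ∀ γ, ∀ s ∈ Ioc 0 a, emdenProfile m (U γ) s < bInfty (2 * m + 1) := fun γ s hs =>
    (hp γ).emdenProfile_lt hm (hC γ) ⟨hs.1, hs.2.trans ha.2.le⟩ (hsmall s ⟨hs.1.le, hs.2⟩)
  have hzeros : ∀ γ, {s ∈ Ioo (0 : ℝ) 1 | emdenProfile m (U γ) s = bInfty (2 * m + 1)} =
      {s ∈ Ioo a 1 | emdenProfile m (U γ) s - bInfty (2 * m + 1) = 0} := by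
    refine fun γ => ext fun s => ⟨fun hs => ⟨⟨?_, hs.1.2⟩, sub_eq_zero.2 hs.2⟩,
      fun hs => ⟨⟨ha.1.trans hs.1.1, hs.1.2⟩, sub_eq_zero.1 hs.2⟩⟩
    exact lt_of_not_ge fun hsa => (hlt γ s ⟨hs.1.1, hsa⟩).ne hs.2
  have hfam := isPruferFamily_emden (by lia) hp hU hX (Ioo_subset_Ioc_self ha)
    fun γ => (hlt γ a ⟨ha.1, le_rfl⟩).ne
  obtain ⟨γ, hflux, hcard⟩ := hfam.exists_encard_zeros_eq ha.2.le
    (fun s hs => h₀ s ⟨ha.1.trans hs.1, hs.2⟩) (hzeros γ₁ ▸ h₁)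
  rw [emdenFlux_one (by lia)] at hflux
  exact ⟨γ, by linarith, hzeros γ ▸ hcard⟩

theorem exists_isProfile_encard_eq (hm : 3 ≤ m) (n : ℕ) :
    ∃ c U X, IsProfile m (reaction m) c U X ∧ X 1 = 0 ∧
      {s ∈ Ioo (0 : ℝ) 1 | emdenProfile m U s = bInfty (2 * m + 1)}.encard = (n + 1 : ℕ∞) := by
  have hm0 : m ≠ 0 := by lia
  obtain ⟨C, hC⟩ := exists_forall_isProfile_le_encard hm (n + 2)
  obtain ⟨M, hCM, hbM⟩ : ∃ M, C ≤ M ∧ bZero (2 * m + 1) < M :=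
    ⟨max C (bZero (2 * m + 1) + 1), le_max_left _ _, lt_max_of_lt_right (lt_add_one _)⟩
  obtain ⟨U, X, hU, hX, hp, hUb, hXb⟩ := exists_continuous_isProfile_reaction hm hbM
  have hconst : ∀ s ∈ Ioo (0 : ℝ) 1, emdenFlux m (IccExtend zero_le_one (U (bZero (2 * m + 1))))
      (IccExtend zero_le_one (X (bZero (2 * m + 1)))) s ≠ 0 := by
    intro s hs
    simp [hUb, hXb, emdenFlux, IccExtend, (emdenWeight_pos hm0 (Ioo_subset_Ioc_self hs)).ne',
      (scalingExp_pos hm0).ne', (sub_pos.2 hs.2).ne', (bZero_pos hm0).ne']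
  have hM := right_mem_Icc.2 hbM.le
  have hmany : ((n + 1 : ℕ) : ℕ∞) < _ :=
    (Nat.cast_lt.2 (lt_add_one (n + 1))).trans_le (hC M hCM _ _ (hp M hM))
  have : PreconnectedSpace (Icc (bZero (2 * m + 1)) M) :=
    Subtype.preconnectedSpace isPreconnected_Icc
  obtain ⟨c, hX1, hcard⟩ := exists_encard_emdenProfile_eq hm
    (fun c : Icc (bZero (2 * m + 1)) M => hp c c.2) Subtype.property
    (by unfold IccExtend; fun_prop) (by unfold IccExtend; fun_prop)
    (γ₀ := ⟨_, left_mem_Icc.2 hbM.le⟩) (γ₁ := ⟨M, hM⟩) hconst hmany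
  exact ⟨c, _, _, hp c c.2, hX1, hcard⟩

end Shooting

/-! ### Regularity at `ρ = 1` and return to the radial variable -/

section RegularSolution

theorem exists_continuous_eq_slope_of_hasDerivWithinAt_Iic {F : ℝ → ℝ} {b d : ℝ}
    (hF : Continuous F) (hd : HasDerivWithinAt F d (Iic b) b) :
    ∃ Q, Continuous Q ∧ (∀ s < b, Q s = slope F b s) ∧ Q b = d := by
  have hcont : ContinuousOn (Function.update (slope F b) b d) (Iic b) := by
    refine continuousOn_update_iff.2
      ⟨fun s hs => ?_, fun _ => hasDerivWithinAt_iff_tendsto_slope.1 hd⟩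
    exact (((continuous_id.sub continuous_const).continuousAt.inv₀ (sub_ne_zero.2 hs.2)).smul
      (hF.sub continuous_const).continuousAt).continuousWithinAt
  refine ⟨fun s => Function.update (slope F b) b d (min s b),
    hcont.comp_continuous (by fun_prop) fun s => min_le_right s b, fun s hs => ?_, by simp⟩
  simp only [min_eq_left hs.le, Function.update_of_ne hs.ne]

theorem IsProfile.hasDerivWithinAt_flux_one {m : ℕ} {h : ℝ → ℝ} {c : ℝ} {U X : ℝ → ℝ}
    (hp : IsProfile m h c U X) (hm : 2 ≤ m) (hh : Continuous h) :
    HasDerivWithinAt X (m / 4 * h (U 1)) (Iic 1) 1 := by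
  have hU := hp.continuous_profile
  have hX := hp.continuous_flux
  have hIoo : Ioo (0 : ℝ) 1 ∈ 𝓝[<] 1 := Ioo_mem_nhdsLT one_pos
  have hlim : Tendsto (fun s => (m / 4 * h (U s) - 3 / 2 * m * (1 - s) ^ (m - 1) * X s) /
      sqRadius m s) (𝓝[<] 1) (𝓝 (m / 4 * h (U 1))) := by
    have hnum : Continuous fun s => m / 4 * h (U s) - 3 / 2 * m * (1 - s) ^ (m - 1) * X s := by
      fun_prop
    have hone : sqRadius m 1 = 1 := by simp [sqRadius, show m ≠ 0 by lia]
    have hat : ContinuousAt (fun s => (m / 4 * h (U s) - 3 / 2 * m * (1 - s) ^ (m - 1) * X s) /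
        sqRadius m s) 1 :=
      hnum.continuousAt.div₀ (continuous_sqRadius m).continuousAt (by simp [hone])
    simpa [hone, show m - 1 ≠ 0 by lia] using hat.tendsto.mono_left nhdsWithin_le_nhds
  refine hasDerivWithinAt_Iic_of_tendsto_deriv (s := Ioo 0 1)
    (fun s hs => (hp.hasDerivAt_flux s hs).differentiableAt.differentiableWithinAt)
    hX.continuousWithinAt hIoo (hlim.congr' ?_)
  filter_upwards [hIoo] with s hs using (hp.hasDerivAt_flux s hs).deriv.symm

/-- `V` solves the profile equation with reaction term `h`, written in the variable `x = ρ²`, and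
its derivative `q` extends continuously to the singular points `x = 0` and `x = 1`, where the
equation degenerates to the first-order relations `regular_zero` and `regular_one`. -/
structure IsRegularSolution (α : ℝ) (h V q : ℝ → ℝ) : Prop where
  continuous : Continuous V
  continuous_deriv : Continuous q
  hasDerivAt : ∀ x ∈ Ioo (0 : ℝ) 1, HasDerivAt V (q x) x
  exists_hasDerivAt_deriv : ∀ x ∈ Ioo (0 : ℝ) 1, ∃ d, HasDerivAt q d x ∧
    4 * x * (1 - x) * d + (6 - (6 + 4 * α) * x) * q x = h (V x)
  regular_zero : 6 * q 0 = h (V 0)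
  regular_one : -4 * α * q 1 = h (V 1)

theorem IsProfile.hasDerivAt_comp_ofSqRadius {m : ℕ} {h : ℝ → ℝ} {c : ℝ} {U X : ℝ → ℝ}
    (hp : IsProfile m h c U X) (hm : 2 ≤ m) {x : ℝ} (hx : x ∈ Ioo (0 : ℝ) 1) :
    HasDerivAt (fun x => U (ofSqRadius m x)) (X (ofSqRadius m x) / (1 - ofSqRadius m x)) x := by
  have hm0 : m ≠ 0 := by lia
  have hs := ofSqRadius_mem_Ioo hm0 hx
  refine ((hp.hasDerivAt_profile _ hs).comp x (hasDerivAt_ofSqRadius hm0 hx.2)).congr_deriv ?_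
  have hτ : 1 - ofSqRadius m x ≠ 0 := (sub_pos.2 hs.2).ne'
  obtain ⟨k, rfl⟩ := Nat.exists_eq_add_of_le' hm
  simp only [Nat.add_sub_cancel, show k + 2 - 1 = k + 1 by lia, pow_succ]
  field_simp

theorem IsProfile.exists_hasDerivAt_flux_div {m : ℕ} {h : ℝ → ℝ} {c : ℝ} {U X : ℝ → ℝ}
    (hp : IsProfile m h c U X) (hm : m ≠ 0) {x : ℝ} (hx : x ∈ Ioo (0 : ℝ) 1) :
    ∃ d, HasDerivAt (fun x => X (ofSqRadius m x) / (1 - ofSqRadius m x)) d x ∧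
      4 * x * (1 - x) * d +
        (6 - (6 + 4 * scalingExp m) * x) * (X (ofSqRadius m x) / (1 - ofSqRadius m x)) =
        h (U (ofSqRadius m x)) := by
  have hs := ofSqRadius_mem_Ioo hm hx
  have hτ : 1 - ofSqRadius m x ≠ 0 := (sub_pos.2 hs.2).ne'
  have hσ := hasDerivAt_ofSqRadius hm hx.2
  refine ⟨_, ((hp.hasDerivAt_flux _ hs).comp x hσ).fun_div (hσ.const_sub 1) hτ, ?_⟩
  have hpow := one_sub_ofSqRadius_pow hm hx.2.le
  have hx0 : x ≠ 0 := hx.1.ne'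
  rw [Function.comp_apply, sqRadius_ofSqRadius hm hx.2.le]
  obtain ⟨k, rfl⟩ := Nat.exists_eq_succ_of_ne_zero hm
  simp only [scalingExp, Nat.succ_eq_add_one, Nat.add_sub_cancel] at hτ hpow ⊢
  generalize 1 - ofSqRadius (k + 1) x = τ at *
  have hx_eq : x = 1 - τ ^ k * τ := by rw [← pow_succ, hpow, sub_sub_cancel]
  field_simp
  rw [hx_eq]
  ring

theorem IsProfile.exists_isRegularSolution {m : ℕ} {h : ℝ → ℝ} {c : ℝ} {U X : ℝ → ℝ}
    (hp : IsProfile m h c U X) (hm : 2 ≤ m) (hh : Continuous h) (hX1 : X 1 = 0) :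
    ∃ q, IsRegularSolution (scalingExp m) h (fun x => U (ofSqRadius m x)) q := by
  have hm0 : m ≠ 0 := by lia
  obtain ⟨Q, hQ, hslope, hQ1⟩ := exists_continuous_eq_slope_of_hasDerivWithinAt_Iic
    hp.continuous_flux (hp.hasDerivWithinAt_flux_one hm hh)
  have hq {s : ℝ} (hs : s < 1) : -Q s = X s / (1 - s) := by
    rw [hslope s hs, slope_def_field, hX1, sub_zero, ← neg_sub s 1, div_neg]
  have hq_comp {x : ℝ} (hx : x ∈ Ioo (0 : ℝ) 1) :
      -Q (ofSqRadius m x) = X (ofSqRadius m x) / (1 - ofSqRadius m x) :=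
    hq (ofSqRadius_mem_Ioo hm0 hx).2
  refine ⟨fun x => -Q (ofSqRadius m x), ⟨hp.continuous_profile.comp (continuous_ofSqRadius m),
    by fun_prop, fun x hx => ?_, fun x hx => ?_, ?_, ?_⟩⟩
  · rw [hq_comp hx]
    exact hp.hasDerivAt_comp_ofSqRadius hm hx
  · obtain ⟨d, hd, heq⟩ := hp.exists_hasDerivAt_flux_div hm0 hx
    refine ⟨d, hd.congr_of_eventuallyEq ?_, by rwa [hq_comp hx]⟩
    filter_upwards [Ioo_mem_nhds hx.1 hx.2] with y hy using hq_comp hy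
  · rw [ofSqRadius_zero, hq one_pos, hp.flux_zero, hp.profile_zero]
    ring
  · rw [ofSqRadius_one hm0, hQ1]
    linear_combination h (U 1) * natCast_mul_scalingExp hm0

end RegularSolution

section Analyticity

namespace IsRegularSolution

variable {α : ℝ} {g : ℝ[X]} {V q : ℝ → ℝ}

theorem exists_analyticAt_zero (hV : IsRegularSolution α g.eval V q) :
    ∃ f, AnalyticAt ℝ f 0 ∧ V =ᶠ[𝓝[≥] 0] f := by
  rw [← nhdsWithin_Ico_eq_nhdsGE one_pos]
  refine exists_analyticAt_eq_of_singular_ode (a := 3 / 2) (by norm_num) one_pos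
    (4 * (1 - X)) (C (-4 * α)) g (by simp) hV.continuous hV.continuous_deriv hV.hasDerivAt
    (fun x hx => ?_) ?_
  · obtain ⟨d, hd, heq⟩ := hV.exists_hasDerivAt_deriv x hx
    refine ⟨d, hd, heq ▸ ?_⟩
    simp only [eval_mul, eval_sub, eval_ofNat, eval_one, eval_X, eval_C]
    ring
  · simp only [eval_mul, eval_sub, eval_ofNat, eval_one, eval_X, ← hV.regular_zero]
    ring

theorem exists_analyticAt_one (hα : 0 < α) (hV : IsRegularSolution α g.eval V q) :
    ∃ f, AnalyticAt ℝ f 1 ∧ V =ᶠ[𝓝[≤] 1] f := by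
  have hcontinuous := hV.continuous
  have hcontinuous_deriv := hV.continuous_deriv
  have hmem {y : ℝ} (hy : y ∈ Ioo (0 : ℝ) 1) : 1 - y ∈ Ioo (0 : ℝ) 1 :=
    ⟨sub_pos.2 hy.2, sub_lt_self 1 hy.1⟩
  suffices hreflected : ∃ f, AnalyticAt ℝ f 0 ∧ (fun y => V (1 - y)) =ᶠ[𝓝[≥] 0] f by
    obtain ⟨f, hf, heq⟩ := hreflected
    have hlim : Tendsto (fun x : ℝ => 1 - x) (𝓝[≤] 1) (𝓝[≥] 0) := by
      refine tendsto_nhdsWithin_iff.2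
        ⟨?_, eventually_mem_nhdsWithin.mono fun x hx => sub_nonneg.2 (mem_Iic.1 hx)⟩
      simpa using ((continuous_sub_left (1 : ℝ)).tendsto 1).mono_left nhdsWithin_le_nhds
    exact ⟨fun x => f (1 - x),
      AnalyticAt.fun_comp (by simpa using hf) (analyticAt_const.sub analyticAt_id),
      by simpa [Filter.EventuallyEq] using hlim.eventually heq⟩
  rw [← nhdsWithin_Ico_eq_nhdsGE one_pos]
  refine exists_analyticAt_eq_of_singular_ode (q := fun y => -q (1 - y)) hα one_pos
    (4 * (1 - X)) (C (-6)) g (by simp) (by fun_prop) (by fun_prop) (fun y hy => ?_)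
    (fun y hy => ?_) ?_
  · exact (hV.hasDerivAt _ (hmem hy)).comp_const_sub 1 y
  · obtain ⟨d, hd, heq⟩ := hV.exists_hasDerivAt_deriv _ (hmem hy)
    refine ⟨d, by simpa using (hd.comp_const_sub 1 y).fun_neg, heq ▸ ?_⟩
    simp only [eval_mul, eval_sub, eval_ofNat, eval_one, eval_X, eval_C]
    ring
  · simp only [eval_mul, eval_sub, eval_ofNat, eval_one, eval_X, sub_zero, ← hV.regular_one]
    ring

theorem analyticAt (hV : IsRegularSolution α g.eval V q) {x : ℝ} (hx : x ∈ Ioo (0 : ℝ) 1) :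
    AnalyticAt ℝ V x := by
  obtain ⟨ε, hε, hball⟩ := Metric.isOpen_iff.1 isOpen_Ioo x hx
  rw [Real.ball_eq_Ioo] at hball
  refine analyticAt_of_regular_ode hε (4 * X * (1 - X)) (6 - C (6 + 4 * α) * X) g ?_
    hV.continuous hV.continuous_deriv (fun y hy => hV.hasDerivAt y (hball hy)) fun y hy => ?_
  · simpa using ⟨hx.1.ne', (sub_pos.2 hx.2).ne'⟩
  · obtain ⟨d, hd, heq⟩ := hV.exists_hasDerivAt_deriv y (hball hy)
    exact ⟨d, hd, by simpa using heq⟩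

end IsRegularSolution

theorem exists_analyticOnNhd_eqOn_Icc {a b : ℝ} (hab : a < b) {V f₀ f₁ : ℝ → ℝ}
    (hV : ∀ x ∈ Ioo a b, AnalyticAt ℝ V x) (hf₀ : AnalyticAt ℝ f₀ a) (hVf₀ : V =ᶠ[𝓝[≥] a] f₀)
    (hf₁ : AnalyticAt ℝ f₁ b) (hVf₁ : V =ᶠ[𝓝[≤] b] f₁) :
    ∃ w, AnalyticOnNhd ℝ w (Icc a b) ∧ EqOn w V (Icc a b) := by
  let w x := if x < a then f₀ x else if x ≤ b then V x else f₁ x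
  have hwV : EqOn w V (Icc a b) := fun x hx => by simp [w, not_lt.2 hx.1, hx.2]
  refine ⟨w, fun x hx => ?_, hwV⟩
  rcases hx.1.eq_or_lt with rfl | hax
  · refine hf₀.congr ?_
    filter_upwards [eventually_nhdsWithin_iff.1 hVf₀, gt_mem_nhds hab] with y hy hyb
    rcases lt_or_ge y a with hya | hya
    · simp [w, hya]
    · rw [hwV ⟨hya, hyb.le⟩, hy hya]
  rcases hx.2.eq_or_lt with rfl | hxb
  · refine hf₁.congr ?_
    filter_upwards [eventually_nhdsWithin_iff.1 hVf₁, lt_mem_nhds hab] with y hy hay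
    rcases le_or_gt y x with hyb | hyb
    · rw [hwV ⟨hay.le, hyb⟩, hy hyb]
    · simp [w, hyb.not_ge, hay.not_gt]
  · refine (hV x ⟨hax, hxb⟩).congr ?_
    filter_upwards [Icc_mem_nhds hax hxb] with y hy using (hwV hy).symm

theorem IsRegularSolution.exists_analyticOnNhd {α : ℝ} {g : ℝ[X]} {V q : ℝ → ℝ} (hα : 0 < α)
    (hV : IsRegularSolution α g.eval V q) :
    ∃ w, AnalyticOnNhd ℝ w (Icc 0 1) ∧ EqOn w V (Icc 0 1) := by
  obtain ⟨f₀, hf₀, hVf₀⟩ := hV.exists_analyticAt_zero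
  obtain ⟨f₁, hf₁, hVf₁⟩ := hV.exists_analyticAt_one hα
  exact exists_analyticOnNhd_eqOn_Icc one_pos (fun x hx => hV.analyticAt hx) hf₀ hVf₀ hf₁ hVf₁

end Analyticity

section Radius

theorem sq_mem_Ioo {ρ : ℝ} (hρ : ρ ∈ Ioo (0 : ℝ) 1) : ρ ^ 2 ∈ Ioo (0 : ℝ) 1 :=
  ⟨pow_pos hρ.1 2, pow_lt_one₀ hρ.1.le hρ.2 two_ne_zero⟩

theorem deriv_comp_sq_zero {w : ℝ → ℝ} (hw : DifferentiableAt ℝ w 0) :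
    deriv (fun ρ => w (ρ ^ 2)) 0 = 0 := by
  have hw' : HasDerivAt w (deriv w 0) ((0 : ℝ) ^ 2) := by simpa using hw.hasDerivAt
  simpa [Function.comp_def] using
    (HasDerivAt.comp (h := fun ρ : ℝ => ρ ^ 2) 0 hw' (hasDerivAt_pow 2 0)).deriv

theorem IsRegularSolution.profileEq_comp_sq {p : ℕ} {V q w : ℝ → ℝ}
    (hV : IsRegularSolution (alphaP p) (fun u => alphaP p * (alphaP p + 1) * u - u ^ p) V q)
    (hw : EqOn w V (Ioo 0 1)) {ρ : ℝ} (hρ : ρ ∈ Ioo (0 : ℝ) 1) :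
    ProfileEq p (fun ρ => w (ρ ^ 2)) ρ := by
  have hsq (r : ℝ) : HasDerivAt (fun r : ℝ => r ^ 2) (2 * r) r := by simpa using hasDerivAt_pow 2 r
  have hu {r : ℝ} (hr : r ∈ Ioo (0 : ℝ) 1) :
      HasDerivAt (fun ρ => w (ρ ^ 2)) (q (r ^ 2) * (2 * r)) r :=
    HasDerivAt.comp (h := fun r : ℝ => r ^ 2) r
      ((hV.hasDerivAt _ (sq_mem_Ioo hr)).congr_of_eventuallyEq
        (hw.eventuallyEq_of_mem (isOpen_Ioo.mem_nhds (sq_mem_Ioo hr)))) (hsq r)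
  obtain ⟨d, hd, heq⟩ := hV.exists_hasDerivAt_deriv _ (sq_mem_Ioo hρ)
  have hu' : HasDerivAt (deriv fun ρ => w (ρ ^ 2)) (d * (2 * ρ) * (2 * ρ) + q (ρ ^ 2) * 2) ρ := by
    refine ((HasDerivAt.comp (h := fun r : ℝ => r ^ 2) ρ hd (hsq ρ)).mul
      (by simpa using (hasDerivAt_id ρ).const_mul 2)).congr_of_eventuallyEq ?_
    filter_upwards [Ioo_mem_nhds hρ.1 hρ.2] with r hr using (hu hr).deriv
  rw [ProfileEq, hu'.deriv, (hu hρ).deriv, hw (sq_mem_Ioo hρ)]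
  have hρ0 : ρ ≠ 0 := hρ.1.ne'
  have hcancel : 2 / ρ * (q (ρ ^ 2) * (2 * ρ)) = 4 * q (ρ ^ 2) := by
    field_simp
    ring
  linear_combination heq + hcancel

theorem emdenProfile_ofSqRadius_sq_eq_iff {m : ℕ} (hm : m ≠ 0) {ρ : ℝ} (hρ : ρ ∈ Ioo (0 : ℝ) 1)
    (U : ℝ → ℝ) : emdenProfile m U (ofSqRadius m (ρ ^ 2)) = bInfty (2 * m + 1) ↔
      U (ofSqRadius m (ρ ^ 2)) = uInfty (2 * m + 1) ρ := by
  have hweight : emdenWeight m (ofSqRadius m (ρ ^ 2)) = ρ ^ scalingExp m := by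
    rw [emdenWeight, sqRadius_ofSqRadius hm (sq_mem_Ioo hρ).2.le, ← rpow_natCast,
      ← rpow_mul hρ.1.le]
    congr 1
    push_cast
    ring
  rw [emdenProfile, hweight, uInfty, alphaP_two_mul_add_one, rpow_neg hρ.1.le, ← div_eq_mul_inv,
    eq_div_iff (rpow_pos_of_pos hρ.1 _).ne', mul_comm]

theorem bijOn_ofSqRadius_sq {m : ℕ} (hm : m ≠ 0) :
    BijOn (fun ρ => ofSqRadius m (ρ ^ 2)) (Ioo 0 1) (Ioo 0 1) := by
  refine ⟨fun ρ hρ => ofSqRadius_mem_Ioo hm (sq_mem_Ioo hρ), fun ρ hρ r hr heq => ?_,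
    fun s hs => ?_⟩
  · have hsq := (strictMonoOn_ofSqRadius hm).injOn (sq_mem_Ioo hρ).2.le (sq_mem_Ioo hr).2.le heq
    exact (pow_left_inj₀ hρ.1.le hr.1.le two_ne_zero).1 hsq
  · have hpos := sqRadius_pos hm (Ioo_subset_Ioc_self hs)
    have hlt : sqRadius m s < 1 := sub_lt_self 1 (pow_pos (sub_pos.2 hs.2) m)
    refine ⟨√(sqRadius m s), ⟨sqrt_pos.2 hpos, (sqrt_lt' one_pos).2 (by simpa using hlt)⟩, ?_⟩
    simp only [sq_sqrt hpos.le, ofSqRadius_sqRadius hm hs.2.le]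

theorem encard_eq_uInfty_eq_encard_emdenProfile_eq {m : ℕ} (hm : m ≠ 0) {U u : ℝ → ℝ}
    (hu : ∀ ρ ∈ Ioo (0 : ℝ) 1, u ρ = U (ofSqRadius m (ρ ^ 2))) :
    {ρ ∈ Ioo (0 : ℝ) 1 | u ρ = uInfty (2 * m + 1) ρ}.encard =
      {s ∈ Ioo (0 : ℝ) 1 | emdenProfile m U s = bInfty (2 * m + 1)}.encard := by
  have hbij := bijOn_ofSqRadius_sq hm
  have hpre : {ρ ∈ Ioo (0 : ℝ) 1 | u ρ = uInfty (2 * m + 1) ρ} = {ρ ∈ Ioo (0 : ℝ) 1 |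
      emdenProfile m U (ofSqRadius m (ρ ^ 2)) = bInfty (2 * m + 1)} :=
    ext fun ρ => and_congr_right fun hρ => by
      rw [hu ρ hρ, emdenProfile_ofSqRadius_sq_eq_iff hm hρ]
  rw [hpre, ← (hbij.injOn.mono (sep_subset _ _)).encard_image]
  congr 1
  ext s
  constructor
  · rintro ⟨ρ, ⟨hρ, hval⟩, rfl⟩
    exact ⟨hbij.mapsTo hρ, hval⟩
  · rintro ⟨hs, hval⟩
    obtain ⟨ρ, hρ, rfl⟩ := hbij.surjOn hs
    exact ⟨ρ, ⟨hρ, hval⟩, rfl⟩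

end Radius

section ReturnToRadius

variable {m : ℕ}

theorem reaction_eq_eval (m : ℕ) :
    reaction m = (C (scalingExp m * (scalingExp m + 1)) * X - X ^ (2 * m + 1) : ℝ[X]).eval := by
  ext u
  simp [reaction]

theorem IsProfile.exists_analyticOnNhd_profileEq {c : ℝ} {U X : ℝ → ℝ}
    (hp : IsProfile m (reaction m) c U X) (hm : 2 ≤ m) (hX1 : X 1 = 0) :
    ∃ u, AnalyticOnNhd ℝ u (Icc 0 1) ∧ (∀ ρ ∈ Ioo (0 : ℝ) 1, ProfileEq (2 * m + 1) u ρ) ∧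
      deriv u 0 = 0 ∧ ∀ ρ ∈ Ioo (0 : ℝ) 1, u ρ = U (ofSqRadius m (ρ ^ 2)) := by
  obtain ⟨q, hV⟩ := hp.exists_isRegularSolution hm (contDiff_reaction m (n := 0)).continuous hX1
  obtain ⟨w, hw, hwV⟩ := (reaction_eq_eval m ▸ hV).exists_analyticOnNhd (scalingExp_pos (by lia))
  refine ⟨fun ρ => w (ρ ^ 2), fun ρ hρ => ?_, fun ρ hρ => ?_,
    deriv_comp_sq_zero (hw 0 (left_mem_Icc.2 zero_le_one)).differentiableAt,
    fun ρ hρ => hwV (Ioo_subset_Icc_self (sq_mem_Ioo hρ))⟩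
  · have hmem : ρ ^ 2 ∈ Icc (0 : ℝ) 1 := ⟨sq_nonneg ρ, pow_le_one₀ hρ.1 hρ.2⟩
    exact (hw (ρ ^ 2) hmem).fun_comp (f := fun r : ℝ => r ^ 2) (by fun_prop)
  · refine IsRegularSolution.profileEq_comp_sq (q := q) ?_ (hwV.mono Ioo_subset_Icc_self) hρ
    rw [alphaP_two_mul_add_one]
    exact hV

end ReturnToRadius

end SelfSimilar

/-- For odd `p ≥ 7` and any `n ≥ 0` there is a solution of the
self-similar profile equation, real-analytic on a neighborhood of `[0,1]`, with
`u'(0) = 0`, whose graph meets the singular solution `u∞` exactly `n+1` times in `(0,1)`. -/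
theorem self_similar_solutions_exist (p : ℕ) (hp_odd : Odd p) (hp : 7 ≤ p) (n : ℕ) :
    ∃ u : ℝ → ℝ, AnalyticOnNhd ℝ u (Icc 0 1) ∧
      (∀ ρ ∈ Ioo (0 : ℝ) 1, ProfileEq p u ρ) ∧
      deriv u 0 = 0 ∧
      {ρ ∈ Ioo (0 : ℝ) 1 | u ρ = uInfty p ρ}.encard = (n + 1 : ℕ∞) := by
  obtain ⟨m, rfl⟩ := hp_odd
  have hm : 3 ≤ m := by lia
  obtain ⟨c, U, X, hprofile, hX1, hcard⟩ := SelfSimilar.exists_isProfile_encard_eq hm n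
  obtain ⟨u, hu, hode, hderiv, huU⟩ := hprofile.exists_analyticOnNhd_profileEq (by lia) hX1
  refine ⟨u, hu, hode, hderiv, ?_⟩
  rw [SelfSimilar.encard_eq_uInfty_eq_encard_emdenProfile_eq (by lia) huU, hcard]
end

section
/- Let p ≥ 7 be an odd integer. If u : [0,1] → ℝ is real-analytic on a neighborhood of [0,1], satisfies the self-similar profile equation (1−ρ²)u''(ρ) + (2/ρ − (2+2α)ρ)u'(ρ) − α(α+1)u(ρ) + u(ρ)^p = 0 for all ρ ∈ (0,1), satisfies u'(0) = 0, and u(0) > b₀, then u(1) < b₀. -/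
open Set Real Filter

/-!
Write `f(u) = u^p - α(α+1)u`, so that `f` has the sign of `u - b₀` for `u > 0`.

* If `u ≥ b₀` on `(0,1)`, then the flux `ρ²(1-ρ²)^α u'`, whose derivative is
  `-ρ²(1-ρ²)^(α-1) f(u) ≤ 0`, decreases although it vanishes at both endpoints. Hence `f(u) = 0`
  on `(0,1)`, which contradicts `u(0) > b₀`. So `u` drops below `b₀`.
* `u` stays positive: the energy of the Emden–Fowler variable `w = ρ^α u` is nonincreasing and
  negative near `0` when `α < 1/2`, whereas it would be nonnegative at a zero of `u`.
* Once below `b₀`, `u` cannot return: on an interval `[r,s]` with `u = b₀` at the ends and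
  `0 < u < b₀` inside, `ρ²(1-ρ²)u' - 2(1-α)ρ³(b₀-u)` is strictly decreasing, because `f` lies above
  its tangent line at `b₀`; but it is `≤ 0` at `r` and `≥ 0` at `s`.
-/

section Crossing

variable {X Y : Type*} [ConditionallyCompleteLinearOrder X] [TopologicalSpace X] [OrderTopology X]
  [DenselyOrdered X] [LinearOrder Y] [TopologicalSpace Y] [OrderClosedTopology Y]
  {f : X → Y} {a b m : X} {c : Y}

lemma exists_mem_Ico_eq_forall_lt_of_continuousOn (hab : a ≤ b) (hf : ContinuousOn f (Icc a b))
    (ha : c ≤ f a) (hb : f b < c) : ∃ r ∈ Ico a b, f r = c ∧ ∀ x ∈ Ioc r b, f x < c := by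
  have hcompact : IsCompact (Icc a b ∩ f ⁻¹' {c}) :=
    isCompact_Icc.of_isClosed_subset
      (hf.preimage_isClosed_of_isClosed isClosed_Icc isClosed_singleton) inter_subset_left
  have hne : (Icc a b ∩ f ⁻¹' {c}).Nonempty := intermediate_value_Icc' hab hf ⟨hb.le, ha⟩
  obtain ⟨r, ⟨hr, hrc⟩, hmax⟩ := hcompact.exists_isGreatest hne
  refine ⟨r, ⟨hr.1, hr.2.lt_of_ne ?_⟩, hrc, fun x hx => ?_⟩
  · rintro rfl
    exact hb.ne hrc
  · by_contra! hcx
    obtain ⟨y, hy, hyc⟩ := intermediate_value_Icc' hx.2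
      (hf.mono (Icc_subset_Icc_left (hr.1.trans hx.1.le))) ⟨hb.le, hcx⟩
    exact (hx.1.trans_le hy.1).not_ge (hmax ⟨⟨hr.1.trans (hx.1.le.trans hy.1), hy.2⟩, hyc⟩)

lemma exists_mem_Ioc_eq_forall_lt_of_continuousOn (hab : a ≤ b) (hf : ContinuousOn f (Icc a b))
    (ha : f a < c) (hb : c ≤ f b) : ∃ s ∈ Ioc a b, f s = c ∧ ∀ x ∈ Ico a s, f x < c := by
  obtain ⟨s, hs, hsc, hlt⟩ := exists_mem_Ico_eq_forall_lt_of_continuousOn (X := Xᵒᵈ)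
    (f := f ∘ OrderDual.ofDual) (a := OrderDual.toDual b) (b := OrderDual.toDual a) hab
    (by rw [Icc_toDual]; exact hf) hb ha
  exact ⟨OrderDual.ofDual s, ⟨hs.2, hs.1⟩, hsc, fun x hx => hlt (OrderDual.toDual x) ⟨hx.2, hx.1⟩⟩

lemma exists_Ioo_lt_of_continuousOn (hf : ContinuousOn f (Icc a b)) (hm : m ∈ Icc a b)
    (ha : c ≤ f a) (hb : c ≤ f b) (hmc : f m < c) :
    ∃ r ∈ Ico a m, ∃ s ∈ Ioc m b, f r = c ∧ f s = c ∧ ∀ x ∈ Ioo r s, f x < c := by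
  obtain ⟨r, hr, hrc, hr_lt⟩ := exists_mem_Ico_eq_forall_lt_of_continuousOn hm.1
    (hf.mono (Icc_subset_Icc_right hm.2)) ha hmc
  obtain ⟨s, hs, hsc, hs_lt⟩ := exists_mem_Ioc_eq_forall_lt_of_continuousOn hm.2
    (hf.mono (Icc_subset_Icc_left hm.1)) hmc hb
  exact ⟨r, hr, s, hs, hrc, hsc, fun x hx =>
    (le_total x m).elim (fun h => hr_lt x ⟨hx.1, h⟩) (fun h => hs_lt x ⟨h, hx.2⟩)⟩

end Crossing

section Calculus

variable {f f' : ℝ → ℝ} {a b c x : ℝ}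

lemma sub_mul_nonpos_of_isMaxOn {s : Set ℝ} {d : ℝ} (hs : Convex ℝ s) (ha : a ∈ s) (hb : b ∈ s)
    (hmax : IsMaxOn f s a) (hf : HasDerivWithinAt f d s a) : (b - a) * d ≤ 0 := by
  simpa using hmax.localize.hasFDerivWithinAt_nonpos hf.hasFDerivWithinAt
    (sub_mem_posTangentConeAt_of_segment_subset (hs.segment_subset ha hb))

lemma eq_zero_of_hasDerivAt_nonpos_of_le (hf : ContinuousOn f (Icc a b))
    (hderiv : ∀ x ∈ Ioo a b, HasDerivAt f (f' x) x) (hnonpos : ∀ x ∈ Ioo a b, f' x ≤ 0)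
    (hab : f a ≤ f b) : ∀ x ∈ Ioo a b, f' x = 0 := by
  have hanti : AntitoneOn f (Icc a b) := by
    refine antitoneOn_of_hasDerivWithinAt_nonpos (convex_Icc a b) hf
      (fun x hx => (hderiv x ?_).hasDerivWithinAt) (fun x hx => hnonpos x ?_) <;>
    rwa [interior_Icc] at hx
  have hconst : ∀ x ∈ Ioo a b, f x = f a := fun x hx => by
    have hle : a ≤ b := (hx.1.trans hx.2).le
    have hx' := Ioo_subset_Icc_self hx
    exact le_antisymm (hanti (left_mem_Icc.2 hle) hx' hx.1.le)
      (hab.trans (hanti hx' (right_mem_Icc.2 hle) hx.2.le))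
  intro x hx
  have hev : f =ᶠ[nhds x] fun _ => f a := by
    filter_upwards [Ioo_mem_nhds hx.1 hx.2] with y hy using hconst y hy
  exact (hderiv x hx).unique ((hasDerivAt_const x (f a)).congr_of_eventuallyEq hev)

-- `x ^ c` is an integrating factor: `(x ^ c * f x)' = x ^ (c - 1) * (c * f x + x * f' x)`.
lemma neg_of_mul_add_mul_hasDerivAt_nonpos (hf : ContinuousWithinAt f (Ioi 0) 0) (hf0 : f 0 < 0)
    (hderiv : ∀ x ∈ Ioo 0 b, HasDerivAt f (f' x) x)
    (hnonpos : ∀ x ∈ Ioo 0 b, c * f x + x * f' x ≤ 0) : ∀ x ∈ Ioo 0 b, f x < 0 := by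
  have hderiv_mul : ∀ x ∈ Ioo 0 b,
      HasDerivAt (fun x => x ^ c * f x) (x ^ (c - 1) * (c * f x + x * f' x)) x := by
    intro x hx
    refine ((hasDerivAt_rpow_const (Or.inl hx.1.ne')).mul (hderiv x hx)).congr_deriv ?_
    have hpow : x ^ c = x ^ (c - 1) * x := by rw [← rpow_add_one hx.1.ne', sub_add_cancel]
    rw [hpow]
    ring
  have hanti : AntitoneOn (fun x => x ^ c * f x) (Ioo 0 b) := by
    refine antitoneOn_of_hasDerivWithinAt_nonpos (convex_Ioo 0 b)
      (fun x hx => (hderiv_mul x hx).continuousAt.continuousWithinAt)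
      (fun x hx => (hderiv_mul x (interior_subset hx)).hasDerivWithinAt) (fun x hx => ?_)
    have hx := interior_subset hx
    exact mul_nonpos_of_nonneg_of_nonpos (rpow_nonneg hx.1.le _) (hnonpos x hx)
  intro x hx
  obtain ⟨y, hfy, hy⟩ := ((hf.eventually (gt_mem_nhds hf0)).and (Ioo_mem_nhdsGT hx.1)).exists
  have hle : x ^ c * f x ≤ y ^ c * f y := hanti ⟨hy.1, hy.2.trans hx.2⟩ hx hy.2.le
  exact neg_of_mul_neg_right
    (hle.trans_lt (mul_neg_of_pos_of_neg (rpow_pos_of_pos hy.1 c) hfy)) (rpow_nonneg hx.1.le c)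

lemma hasDerivAt_derivWithin_Icc (hf : DifferentiableOn ℝ f (Icc a b)) (hx : x ∈ Ioo a b) :
    HasDerivAt f (derivWithin f (Icc a b) x) x :=
  (hf x (Ioo_subset_Icc_self hx)).hasDerivWithinAt.hasDerivAt (Icc_mem_nhds hx.1 hx.2)

lemma hasDerivAt_derivWithin_Icc_deriv_deriv (hf : ContDiffOn ℝ 2 f (Icc a b))
    (hx : x ∈ Ioo a b) : HasDerivAt (derivWithin f (Icc a b)) (deriv (deriv f) x) x := by
  have hdiff : DifferentiableAt ℝ (deriv f) x := by
    have hderiv : ContDiffOn ℝ 1 (deriv f) (Ioo a b) :=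
      (hf.mono Ioo_subset_Icc_self).deriv_of_isOpen isOpen_Ioo (by norm_num)
    exact (hderiv.differentiableOn one_ne_zero).differentiableAt (Ioo_mem_nhds hx.1 hx.2)
  refine hdiff.hasDerivAt.congr_of_eventuallyEq ?_
  filter_upwards [Ioo_mem_nhds hx.1 hx.2] with y hy
    using derivWithin_of_mem_nhds (Icc_mem_nhds hy.1 hy.2)

end Calculus

section Constants

variable {p : ℕ} {t : ℝ}

lemma sub_one_mul_alphaP (hp : p ≠ 1) : ((p : ℝ) - 1) * alphaP p = 2 :=
  mul_div_cancel₀ _ (sub_ne_zero.2 (by exact_mod_cast hp))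

lemma alphaP_pos (hp : 1 < p) : 0 < alphaP p :=
  div_pos two_pos (sub_pos.2 (by exact_mod_cast hp))

lemma alphaP_lt_half (hp : 5 < p) : alphaP p < 1 / 2 := by
  have hp' : (5 : ℝ) < p := by exact_mod_cast hp
  rw [alphaP, div_lt_div_iff₀ (by linarith) two_pos]
  linarith

lemma bZero_pos (hp : 1 < p) : 0 < bZero p := by
  have hp' : (0 : ℝ) < p - 1 := sub_pos.2 (by exact_mod_cast hp)
  exact rpow_pos_of_pos (by positivity) _

lemma bZero_pow_sub_one (hp : 1 < p) : bZero p ^ (p - 1) = alphaP p * (alphaP p + 1) := by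
  have hp' : (0 : ℝ) < p - 1 := sub_pos.2 (by exact_mod_cast hp)
  have hcast : ((p - 1 : ℕ) : ℝ) = p - 1 := Nat.cast_pred (by lia)
  rw [bZero, one_div, ← hcast, rpow_inv_natCast_pow (by positivity) (by lia), hcast, alphaP]
  field

/-- The zeroth order part `f(t) = t^p - α(α+1)t` of the profile equation. -/
noncomputable def reaction (p : ℕ) (t : ℝ) : ℝ := t ^ p - alphaP p * (alphaP p + 1) * t

lemma reaction_eq_mul (hp : 1 < p) (t : ℝ) :
    reaction p t = (t ^ (p - 1) - bZero p ^ (p - 1)) * t := by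
  rw [reaction, bZero_pow_sub_one hp, sub_mul, pow_sub_one_mul (by lia)]

lemma reaction_nonneg (hp : 1 < p) (ht : bZero p ≤ t) : 0 ≤ reaction p t := by
  rw [reaction_eq_mul hp]
  exact mul_nonneg (sub_nonneg.2 (pow_le_pow_left₀ (bZero_pos hp).le ht _))
    ((bZero_pos hp).le.trans ht)

lemma reaction_pos (hp : 1 < p) (ht : bZero p < t) : 0 < reaction p t := by
  rw [reaction_eq_mul hp]
  exact mul_pos (sub_pos.2 (pow_lt_pow_left₀ ht (bZero_pos hp).le (by lia)))
    ((bZero_pos hp).trans ht)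

-- The left-hand side is the tangent line of `reaction p` at `bZero p`.
lemma tangent_le_reaction (hp : 1 < p) (ht : -bZero p ≤ t) :
    2 * (1 + alphaP p) * (t - bZero p) ≤ reaction p t := by
  have hbern : bZero p ^ p + p * bZero p ^ (p - 1) * (t - bZero p) ≤ t ^ p := by
    simpa using pow_add_mul_le_add_pow (bZero_pos hp).le
      (show 0 ≤ 2 * bZero p + (t - bZero p) by linarith) p
  rw [← pow_sub_one_mul (by lia : p ≠ 0) (bZero p), bZero_pow_sub_one hp] at hbern
  rw [reaction]
  linear_combination hbern - (alphaP p + 1) * (t - bZero p) * sub_one_mul_alphaP hp.ne'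

end Constants

/-- A `C²` function on `[0,1]` (with one-sided derivatives at the endpoints) that solves the
profile equation on `(0,1)`. -/
structure IsProfile (p : ℕ) (u : ℝ → ℝ) : Prop where
  contDiffOn : ContDiffOn ℝ 2 u (Icc 0 1)
  profileEq : ∀ ρ ∈ Ioo (0 : ℝ) 1, ProfileEq p u ρ

/-- The flux `ρ²(1-ρ²)^α u'` that brings the profile equation into divergence form. -/
noncomputable def weightedFlux (p : ℕ) (u : ℝ → ℝ) (ρ : ℝ) : ℝ :=
  ρ ^ 2 * (1 - ρ ^ 2) ^ alphaP p * derivWithin u (Icc 0 1) ρ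

/-- The energy `(1-ρ²)(ρw')²/2 + w^(p+1)/(p+1) - α(1-α)w²/2` of the Emden–Fowler variable
`w = ρ^α u`, divided by `ρ^(2α)` so that it is regular at `ρ = 0`. -/
noncomputable def emdenEnergy (p : ℕ) (u : ℝ → ℝ) (ρ : ℝ) : ℝ :=
  (1 - ρ ^ 2) * (ρ * derivWithin u (Icc 0 1) ρ + alphaP p * u ρ) ^ 2 / 2
    + ρ ^ 2 * (u ρ ^ (p + 1) / (p + 1)) - alphaP p * (1 - alphaP p) * u ρ ^ 2 / 2

/-- The flux `ρ²(1-ρ²)u' - 2(1-α)ρ³(b₀-u)`. The second term is chosen so that the derivative,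
computed with the profile equation, contains no first order term. -/
noncomputable def barrierFlux (p : ℕ) (u : ℝ → ℝ) (ρ : ℝ) : ℝ :=
  ρ ^ 2 * (1 - ρ ^ 2) * derivWithin u (Icc 0 1) ρ
    - 2 * (1 - alphaP p) * ρ ^ 3 * (bZero p - u ρ)

lemma one_sub_sq_pos_of_mem_Ioo {ρ : ℝ} (hρ : ρ ∈ Ioo (0 : ℝ) 1) : 0 < 1 - ρ ^ 2 :=
  sub_pos.2 (pow_lt_one₀ hρ.1.le hρ.2 two_ne_zero)

namespace IsProfile

variable {p : ℕ} {u : ℝ → ℝ} {ρ : ℝ}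

lemma hasDerivAt (hu : IsProfile p u) (hρ : ρ ∈ Ioo (0 : ℝ) 1) :
    HasDerivAt u (derivWithin u (Icc 0 1) ρ) ρ :=
  hasDerivAt_derivWithin_Icc (hu.contDiffOn.differentiableOn two_ne_zero) hρ

lemma hasDerivAt_derivWithin (hu : IsProfile p u) (hρ : ρ ∈ Ioo (0 : ℝ) 1) :
    HasDerivAt (derivWithin u (Icc 0 1)) (deriv (deriv u) ρ) ρ :=
  hasDerivAt_derivWithin_Icc_deriv_deriv hu.contDiffOn hρ

lemma continuousOn_derivWithin (hu : IsProfile p u) :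
    ContinuousOn (derivWithin u (Icc 0 1)) (Icc 0 1) :=
  hu.contDiffOn.continuousOn_derivWithin (uniqueDiffOn_Icc one_pos) one_le_two

lemma mul_profileEq (hu : IsProfile p u) (hρ : ρ ∈ Ioo (0 : ℝ) 1) :
    ρ * (1 - ρ ^ 2) * deriv (deriv u) ρ
      + (2 - (2 + 2 * alphaP p) * ρ ^ 2) * derivWithin u (Icc 0 1) ρ
      + ρ * reaction p (u ρ) = 0 := by
  have heq := hu.profileEq ρ hρ
  rw [ProfileEq, (hu.hasDerivAt hρ).deriv] at heq
  rw [reaction]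
  linear_combination ρ * heq - derivWithin u (Icc 0 1) ρ * mul_div_cancel₀ 2 hρ.1.ne'

lemma hasDerivAt_weightedFlux (hu : IsProfile p u) (hρ : ρ ∈ Ioo (0 : ℝ) 1) :
    HasDerivAt (weightedFlux p u)
      (-(ρ ^ 2 * (1 - ρ ^ 2) ^ (alphaP p - 1) * reaction p (u ρ))) ρ := by
  have hpos := one_sub_sq_pos_of_mem_Ioo hρ
  refine (((hasDerivAt_pow 2 ρ).mul (((hasDerivAt_pow 2 ρ).const_sub 1).rpow_const
    (Or.inl hpos.ne'))).mul (hu.hasDerivAt_derivWithin hρ)).congr_deriv ?_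
  have hpow : (1 - ρ ^ 2) ^ alphaP p = (1 - ρ ^ 2) ^ (alphaP p - 1) * (1 - ρ ^ 2) := by
    rw [← rpow_add_one hpos.ne', sub_add_cancel]
  simp only [Pi.mul_apply, hpow]
  linear_combination ρ * (1 - ρ ^ 2) ^ (alphaP p - 1) * hu.mul_profileEq hρ

lemma continuousOn_weightedFlux (hp : 1 < p) (hu : IsProfile p u) :
    ContinuousOn (weightedFlux p u) (Icc 0 1) := by
  have hweight : Continuous fun ρ : ℝ => (1 - ρ ^ 2) ^ alphaP p :=
    (by fun_prop : Continuous fun ρ : ℝ => 1 - ρ ^ 2).rpow_const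
      fun _ => Or.inr (alphaP_pos hp).le
  exact ((continuous_pow 2).mul hweight).continuousOn.mul hu.continuousOn_derivWithin

lemma exists_lt_bZero (hp : 1 < p) (hu : IsProfile p u) (h0 : bZero p < u 0) :
    ∃ ρ ∈ Ioo (0 : ℝ) 1, u ρ < bZero p := by
  by_contra! hge
  have hends : weightedFlux p u 0 = weightedFlux p u 1 := by
    simp [weightedFlux, zero_rpow (alphaP_pos hp).ne']
  have hflux := eq_zero_of_hasDerivAt_nonpos_of_le (hu.continuousOn_weightedFlux hp)
    (fun ρ hρ => hu.hasDerivAt_weightedFlux hρ)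
    (fun ρ hρ => neg_nonpos.2 (mul_nonneg
      (mul_nonneg (sq_nonneg ρ) (rpow_nonneg (one_sub_sq_pos_of_mem_Ioo hρ).le _))
      (reaction_nonneg hp (hge ρ hρ)))) hends.le
  have hle : ∀ ρ ∈ Ioo (0 : ℝ) 1, u ρ ≤ bZero p := by
    intro ρ hρ
    by_contra! hlt
    have hweight : 0 < ρ ^ 2 * (1 - ρ ^ 2) ^ (alphaP p - 1) :=
      mul_pos (pow_pos hρ.1 2) (rpow_pos_of_pos (one_sub_sq_pos_of_mem_Ioo hρ) _)
    exact (mul_pos hweight (reaction_pos hp hlt)).ne' (neg_eq_zero.1 (hflux ρ hρ))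
  have hclosure : (0 : ℝ) ∈ closure (Ioo 0 1) := by
    simp [closure_Ioo zero_ne_one]
  have hcont : ContinuousWithinAt u (Ioo 0 1) 0 :=
    (hu.contDiffOn.continuousOn 0 (by simp)).mono Ioo_subset_Icc_self
  exact h0.not_ge (hcont.closure_le hclosure continuousWithinAt_const hle)

lemma hasDerivAt_emdenEnergy (hp : p ≠ 1) (hu : IsProfile p u) (hρ : ρ ∈ Ioo (0 : ℝ) 1) :
    HasDerivAt (emdenEnergy p u)
      (-(2 * alphaP p * emdenEnergy p u ρ + (1 - 2 * alphaP p)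
        * (ρ * derivWithin u (Icc 0 1) ρ + alphaP p * u ρ) ^ 2) / ρ) ρ := by
  have hu' := hu.hasDerivAt hρ
  have hw := ((hasDerivAt_id ρ).mul (hu.hasDerivAt_derivWithin hρ)).add (hu'.const_mul (alphaP p))
  refine ((((((hasDerivAt_pow 2 ρ).const_sub 1).mul (hw.pow 2)).div_const 2).add
    ((hasDerivAt_pow 2 ρ).mul ((hu'.pow (p + 1)).div_const ((p : ℝ) + 1)))).sub
    (((hu'.pow 2).const_mul (alphaP p * (1 - alphaP p))).div_const 2)).congr_deriv ?_
  have hode := hu.mul_profileEq hρ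
  rw [reaction] at hode
  have hpotential : (2 * alphaP p + 2) * (u ρ ^ (p + 1) / (p + 1))
      = alphaP p * (u ρ ^ p * u ρ) := by
    have hp1 : (p : ℝ) + 1 ≠ 0 := by positivity
    rw [pow_succ]
    field_simp
    linear_combination -(u ρ ^ p * u ρ) * sub_one_mul_alphaP hp
  have hpow : ((p + 1 : ℕ) : ℝ) * u ρ ^ p * derivWithin u (Icc 0 1) ρ / (p + 1)
      = u ρ ^ p * derivWithin u (Icc 0 1) ρ := by
    push_cast
    field
  rw [eq_div_iff hρ.1.ne']
  simp only [emdenEnergy, Pi.mul_apply, Pi.add_apply, Pi.pow_apply, id_eq, Nat.add_sub_cancel,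
    hpow]
  linear_combination ρ ^ 2 * hpotential
    + ρ * (ρ * derivWithin u (Icc 0 1) ρ + alphaP p * u ρ) * hode

lemma emdenEnergy_neg (hp : 5 < p) (hu : IsProfile p u) (h0 : u 0 ≠ 0) :
    ∀ ρ ∈ Ioo (0 : ℝ) 1, emdenEnergy p u ρ < 0 := by
  have hα : 0 < 1 - 2 * alphaP p := by linarith [alphaP_lt_half hp]
  refine neg_of_mul_add_mul_hasDerivAt_nonpos (c := 2 * alphaP p) ?_ ?_
    (fun ρ hρ => hu.hasDerivAt_emdenEnergy (by lia) hρ) (fun ρ hρ => ?_)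
  · have hcont : ContinuousOn (emdenEnergy p u) (Icc 0 1) := by
      have := hu.contDiffOn.continuousOn
      have := hu.continuousOn_derivWithin
      unfold emdenEnergy
      fun_prop
    exact (hcont 0 (by simp)).mono_of_mem_nhdsWithin (Icc_mem_nhdsGT one_pos)
  · have hvalue : emdenEnergy p u 0 = -(alphaP p * (1 - 2 * alphaP p) * u 0 ^ 2 / 2) := by
      simp only [emdenEnergy]
      ring
    have := alphaP_pos (by lia : 1 < p)
    rw [hvalue]
    exact neg_neg_of_pos (by positivity)
  · rw [mul_div_cancel₀ _ hρ.1.ne']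
    linarith [mul_nonneg hα.le (sq_nonneg (ρ * derivWithin u (Icc 0 1) ρ + alphaP p * u ρ))]

lemma pos_of_pos_at_zero (hp : 5 < p) (hu : IsProfile p u) (h0 : 0 < u 0) :
    ∀ ρ ∈ Ioo (0 : ℝ) 1, 0 < u ρ := by
  have hne : ∀ ρ ∈ Ioo (0 : ℝ) 1, u ρ ≠ 0 := by
    intro ρ hρ hzero
    have henergy : emdenEnergy p u ρ = (1 - ρ ^ 2) * (ρ * derivWithin u (Icc 0 1) ρ) ^ 2 / 2 := by
      simp [emdenEnergy, hzero]
    have hpos := one_sub_sq_pos_of_mem_Ioo hρ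
    have hnonneg : 0 ≤ emdenEnergy p u ρ := by
      rw [henergy]
      positivity
    exact hnonneg.not_gt (hu.emdenEnergy_neg hp h0.ne' ρ hρ)
  intro ρ hρ
  by_contra! hle
  obtain ⟨y, hy, hzero⟩ := intermediate_value_Ioc' hρ.1.le
    (hu.contDiffOn.continuousOn.mono (Icc_subset_Icc_right hρ.2.le)) ⟨hle, h0⟩
  exact hne y ⟨hy.1, hy.2.trans_lt hρ.2⟩ hzero

lemma hasDerivAt_barrierFlux (hu : IsProfile p u) (hρ : ρ ∈ Ioo (0 : ℝ) 1) :
    HasDerivAt (barrierFlux p u)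
      (-(ρ ^ 2 * (6 * (1 - alphaP p) * (bZero p - u ρ) + reaction p (u ρ)))) ρ := by
  refine ((((hasDerivAt_pow 2 ρ).mul ((hasDerivAt_pow 2 ρ).const_sub 1)).mul
    (hu.hasDerivAt_derivWithin hρ)).sub (((hasDerivAt_pow 3 ρ).const_mul (2 * (1 - alphaP p))).mul
    ((hu.hasDerivAt hρ).const_sub (bZero p)))).congr_deriv ?_
  simp only [Pi.mul_apply]
  linear_combination ρ * hu.mul_profileEq hρ

lemma strictAntiOn_barrierFlux (hp : 5 < p) (hu : IsProfile p u) {r s : ℝ} (hr : 0 ≤ r)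
    (hs : s ≤ 1) (hmem : ∀ ρ ∈ Ioo r s, u ρ ∈ Ioo (-bZero p) (bZero p)) :
    StrictAntiOn (barrierFlux p u) (Icc r s) := by
  have hcont : ContinuousOn (barrierFlux p u) (Icc 0 1) := by
    have := hu.contDiffOn.continuousOn
    have := hu.continuousOn_derivWithin
    unfold barrierFlux
    fun_prop
  refine strictAntiOn_of_hasDerivWithinAt_neg (convex_Icc r s)
    (hcont.mono (Icc_subset_Icc hr hs))
    (fun ρ hρ => (hu.hasDerivAt_barrierFlux ?_).hasDerivWithinAt) (fun ρ hρ => ?_) <;>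
  rw [interior_Icc] at hρ
  · exact Ioo_subset_Ioo hr hs hρ
  · obtain ⟨hlower, hupper⟩ := hmem ρ hρ
    have htangent := tangent_le_reaction (by lia : 1 < p) hlower.le
    have hgap : 0 < (4 - 8 * alphaP p) * (bZero p - u ρ) :=
      mul_pos (by linarith [alphaP_lt_half hp]) (sub_pos.2 hupper)
    exact neg_neg_of_pos (mul_pos (pow_pos (hr.trans_lt hρ.1) 2) (by linarith))

lemma exists_notMem_Ioo_bZero (hp : 5 < p) (hu : IsProfile p u) {r s : ℝ} (hr : 0 ≤ r)
    (hrs : r < s) (hs : s ≤ 1) (hur : u r = bZero p) (hus : u s = bZero p) :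
    ∃ ρ ∈ Ioo r s, u ρ ∉ Ioo (-bZero p) (bZero p) := by
  by_contra! hmem
  have hr_mem : r ∈ Icc r s := left_mem_Icc.2 hrs.le
  have hs_mem : s ∈ Icc r s := right_mem_Icc.2 hrs.le
  have hle : ∀ ρ ∈ Icc r s, u ρ ≤ bZero p := by
    intro ρ hρ
    rcases eq_endpoints_or_mem_Ioo_of_mem_Icc hρ with rfl | rfl | hρ
    exacts [hur.le, hus.le, (hmem ρ hρ).2.le]
  have hderiv : ∀ ρ ∈ Icc r s,
      HasDerivWithinAt u (derivWithin u (Icc 0 1) ρ) (Icc r s) ρ := fun ρ hρ =>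
    (hu.contDiffOn.differentiableOn two_ne_zero ρ (Icc_subset_Icc hr hs hρ)).hasDerivWithinAt.mono
      (Icc_subset_Icc hr hs)
  have hslope_r : (s - r) * derivWithin u (Icc 0 1) r ≤ 0 :=
    sub_mul_nonpos_of_isMaxOn (convex_Icc r s) hr_mem hs_mem
      (fun ρ hρ => (hle ρ hρ).trans hur.ge) (hderiv r hr_mem)
  have hslope_s : (r - s) * derivWithin u (Icc 0 1) s ≤ 0 :=
    sub_mul_nonpos_of_isMaxOn (convex_Icc r s) hs_mem hr_mem
      (fun ρ hρ => (hle ρ hρ).trans hus.ge) (hderiv s hs_mem)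
  have hflux_r : barrierFlux p u r ≤ 0 := by
    have hr2 : 0 ≤ 1 - r ^ 2 := sub_nonneg.2 (pow_le_one₀ hr (hrs.le.trans hs))
    simp only [barrierFlux, hur, sub_self, mul_zero, sub_zero]
    exact mul_nonpos_of_nonneg_of_nonpos (by positivity)
      (nonpos_of_mul_nonpos_right hslope_r (sub_pos.2 hrs))
  have hflux_s : 0 ≤ barrierFlux p u s := by
    have hs2 : 0 ≤ 1 - s ^ 2 := sub_nonneg.2 (pow_le_one₀ (hr.trans hrs.le) hs)
    simp only [barrierFlux, hus, sub_self, mul_zero, sub_zero]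
    exact mul_nonneg (by positivity) (nonneg_of_mul_nonpos_right hslope_s (sub_neg.2 hrs))
  have hlt := hu.strictAntiOn_barrierFlux hp hr hs hmem hr_mem hs_mem hrs
  linarith

end IsProfile

theorem value_at_one_lt_bZero_general {p : ℕ} (hp : 5 < p) {u : ℝ → ℝ}
    (hu : ContDiffOn ℝ 2 u (Icc 0 1)) (heq : ∀ ρ ∈ Ioo (0 : ℝ) 1, ProfileEq p u ρ)
    (h0 : bZero p < u 0) : u 1 < bZero p := by
  have hprofile : IsProfile p u := ⟨hu, heq⟩
  have hb : 0 < bZero p := bZero_pos (by lia)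
  have hpos : ∀ ρ ∈ Ioo (0 : ℝ) 1, 0 < u ρ := hprofile.pos_of_pos_at_zero hp (hb.trans h0)
  obtain ⟨m, hm, hmb⟩ := hprofile.exists_lt_bZero (by lia) h0
  by_contra! h1
  obtain ⟨r, hr, s, hs, hur, hus, hlt⟩ :=
    exists_Ioo_lt_of_continuousOn hu.continuousOn (Ioo_subset_Icc_self hm) h0.le h1 hmb
  obtain ⟨ρ, hρ, hnot⟩ :=
    hprofile.exists_notMem_Ioo_bZero hp hr.1 (hr.2.trans hs.1) hs.2 hur hus
  exact hnot ⟨by linarith [hpos ρ (Ioo_subset_Ioo hr.1 hs.2 hρ)], hlt ρ hρ⟩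

/-- If `u` is analytic on a neighborhood of `[0,1]`, solves the profile
equation on `(0,1)`, has `u'(0) = 0` and `u(0) > b₀`, then `u(1) < b₀`. -/
theorem value_at_one_lt_bZero (p : ℕ) (hp_odd : Odd p) (hp : 7 ≤ p) (u : ℝ → ℝ)
    (hu : AnalyticOnNhd ℝ u (Icc 0 1))
    (heq : ∀ ρ ∈ Ioo (0 : ℝ) 1, ProfileEq p u ρ)
    (hd0 : deriv u 0 = 0)
    (h0 : bZero p < u 0) :
    u 1 < bZero p := by
  exact value_at_one_lt_bZero_general (by lia) (hu.contDiffOn (uniqueDiffOn_Icc one_pos)) heq h0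
end
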